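/- Let d > 0 and let f ∈ C¹(Ω)∩C(Ω̄), f not identically zero, be such that the problem −Δφ = f in Ω, φ ≥ 0 in Ω, φ = 0 on ∂Ω has a classical solution φ ∈ C(Ω̄)∩C²(Ω). Assume also that Ω admits a torsion function ξ. Then the problem −(1 + d·sin²(‖∇u‖_2)) Δu = sin²(u) + f(x) in Ω, u > 0 in Ω, u = 0 on ∂Ω has at least one classical solution. -/

import Mathlib

open MeasureTheory Set Real
open scoped ENNReal NNReal

noncomputable section

/-- The Laplacian of `u : ℝ^N → ℝ`, as the sum of second partial derivatives. -/
def lapl {N : ℕ} (u : EuclideanSpace ℝ (Fin N) → ℝ) (x : EuclideanSpace ℝ (Fin N)) : ℝ :=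
  ∑ i : Fin N, fderiv ℝ (fun y => fderiv ℝ u y (EuclideanSpace.single i 1)) x
    (EuclideanSpace.single i 1)

/-- The `L^p` norm of `u` on `Ω`. -/
def LpNorm {N : ℕ} (Ω : Set (EuclideanSpace ℝ (Fin N))) (p : ℝ≥0∞)
    (u : EuclideanSpace ℝ (Fin N) → ℝ) : ℝ :=
  (eLpNorm u p (volume.restrict Ω)).toReal

/-- The `L²` norm of the gradient of `u` on `Ω`. -/
def gradNorm2 {N : ℕ} (Ω : Set (EuclideanSpace ℝ (Fin N)))
    (u : EuclideanSpace ℝ (Fin N) → ℝ) : ℝ :=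
  (eLpNorm (fun x => gradient u x) 2 (volume.restrict Ω)).toReal

/-- A torsion function of `Ω`: `ξ ∈ C(Ω̄) ∩ C²(Ω)`, `ξ ≥ 0` in `Ω`, `-Δξ = 1` in `Ω`,
`ξ = 0` on `∂Ω`. -/
def IsTorsionFn {N : ℕ} (Ω : Set (EuclideanSpace ℝ (Fin N)))
    (ξ : EuclideanSpace ℝ (Fin N) → ℝ) : Prop :=
  ContinuousOn ξ (closure Ω) ∧ ContDiffOn ℝ 2 ξ Ω ∧ (∀ x ∈ Ω, 0 ≤ ξ x) ∧
    (∀ x ∈ Ω, -lapl ξ x = 1) ∧ (∀ x ∈ frontier Ω, ξ x = 0)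

section Abstract
open Filter Topology

/-- Existence of a minimiser for a weakly lower semicontinuous functional. -/
theorem exists_min_abstract {V X Y : Type*}
    [NormedAddCommGroup V] [InnerProductSpace ℝ V] [CompleteSpace V]
    [NormedAddCommGroup X] [InnerProductSpace ℝ X] [CompleteSpace X]
    [NormedAddCommGroup Y] [InnerProductSpace ℝ Y] [CompleteSpace Y]
    (S : V →L[ℝ] X) (T : V →L[ℝ] Y) (hS : IsCompactOperator S)
    (A : ℝ → ℝ) (hA : MonotoneOn A (Set.Ici 0)) (hAc : Continuous A)
    (B : X → ℝ) (hB : Continuous B) (R : ℝ)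
    (hco : ∀ u : V, R < ‖u‖ → A ‖T 0‖ - B (S 0) ≤ A ‖T u‖ - B (S u)) :
    ∃ u : V, ∀ w : V, A ‖T u‖ - B (S u) ≤ A ‖T w‖ - B (S w) := by
  classical
  -- reduce to a minimiser on the ball
  set J : V → ℝ := fun u => A ‖T u‖ - B (S u) with hJ
  set R' : ℝ := max R 0 with hR'
  suffices h : ∃ u : V, ∀ w : V, ‖w‖ ≤ R' → J u ≤ J w by
    obtain ⟨u, hu⟩ := h
    refine ⟨u, fun w => ?_⟩
    by_cases hw : ‖w‖ ≤ R'
    · exact hu w hw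
    · push Not at hw
      have h0 := hu 0 (by simp [hR'])
      exact h0.trans (hco w (lt_of_le_of_lt (le_max_left _ _) hw))
  -- the weak limit along ultrafilters
  have hcomp : ∀ U : Ultrafilter V, (∀ᶠ u in (U : Filter V), ‖u‖ ≤ R') →
      ∃ u : V, ∀ z : V, Tendsto (fun w : V => inner ℝ w z) U (𝓝 (inner ℝ u z)) := by
    intro U hU
    have hc := WeakDual.isCompact_closedBall (𝕜 := ℝ) (0 : StrongDual ℝ V) R'
    let e : V → WeakDual ℝ V := fun v => StrongDual.toWeakDual (InnerProductSpace.toDual ℝ V v)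
    have hmem : (WeakDual.toStrongDual ⁻¹' Metric.closedBall (0 : StrongDual ℝ V) R') ∈ U.map e := by
      rw [Ultrafilter.mem_map]
      filter_upwards [hU] with v hv
      simp [e, hv]
    obtain ⟨x, -, hx⟩ := hc.ultrafilter_le_nhds' (U.map e) hmem
    refine ⟨(InnerProductSpace.toDual ℝ V).symm (WeakDual.toStrongDual x), fun z => ?_⟩
    have h1 : Tendsto e U (𝓝 x) := hx
    have h2 := ((WeakBilin.eval_continuous (topDualPairing ℝ V) z).tendsto x).comp h1
    have e1 : (inner ℝ ((InnerProductSpace.toDual ℝ V).symm (WeakDual.toStrongDual x)) z : ℝ) = x z := by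
      simp
    rw [e1]
    exact h2
  -- bounded below and minimising
  have hlim : ∀ U : Ultrafilter V, (∀ᶠ u in (U : Filter V), ‖u‖ ≤ R') →
      ∃ u : V, ∀ c : ℝ, (∀ᶠ w in (U : Filter V), J w ≤ c) → J u ≤ c := by
    intro U hU
    obtain ⟨u, hu⟩ := hcomp U hU
    refine ⟨u, fun c hc => ?_⟩
    -- strong convergence of S
    have hSc : Tendsto S U (𝓝 (S u)) := by
      obtain ⟨K, hK, hKs⟩ :=
        IsCompactOperator.image_closedBall_subset_compact (f := (S : V →ₗ[ℝ] X)) hS R'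
      have : K ∈ U.map S := by
        rw [Ultrafilter.mem_map]
        filter_upwards [hU] with v hv
        exact hKs ⟨v, by simpa using hv, rfl⟩
      obtain ⟨y, -, hy⟩ := hK.ultrafilter_le_nhds' (U.map S) this
      have hy' : Tendsto S U (𝓝 y) := hy
      have : y = S u := by
        refine ext_inner_right ℝ fun z => ?_
        have h1 : Tendsto (fun w => inner ℝ (S w) z) U (𝓝 (inner ℝ y z)) :=
          hy'.inner tendsto_const_nhds
        have h2 := hu (ContinuousLinearMap.adjoint S z)
        simp only [ContinuousLinearMap.adjoint_inner_right] at h2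
        exact tendsto_nhds_unique h1 h2
      rwa [this] at hy'
    have hBc : Tendsto (fun w => B (S w)) U (𝓝 (B (S u))) := (hB.tendsto _).comp hSc
    -- limit of the norms of T
    have hbd : Set.Icc (0:ℝ) (‖T‖ * R') ∈ U.map (fun w => ‖T w‖) := by
      rw [Ultrafilter.mem_map]
      filter_upwards [hU] with v hv
      refine ⟨norm_nonneg _, (T.le_opNorm v).trans ?_⟩
      gcongr
    obtain ⟨l, hl0, hl⟩ := isCompact_Icc.ultrafilter_le_nhds' _ hbd
    have hl' : Tendsto (fun w => ‖T w‖) U (𝓝 l) := hl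
    have hTl : ‖T u‖ ≤ l := by
      have h2 := hu (ContinuousLinearMap.adjoint T (T u))
      simp only [ContinuousLinearMap.adjoint_inner_right] at h2
      have h3 : (inner ℝ (T u) (T u) : ℝ) ≤ l * ‖T u‖ :=
        le_of_tendsto_of_tendsto h2 (hl'.mul_const _)
          (Eventually.of_forall fun w => real_inner_le_norm _ _)
      rw [real_inner_self_eq_norm_sq] at h3
      by_cases h0 : ‖T u‖ = 0
      · rw [h0]; exact hl0.1
      · have : 0 < ‖T u‖ := lt_of_le_of_ne (norm_nonneg _) (Ne.symm h0)
        nlinarith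
    have hJl : A l - B (S u) ≤ c :=
      le_of_tendsto (((hAc.tendsto l).comp hl').sub hBc) hc
    have := hA (norm_nonneg (T u)) hl0.1 hTl
    simp only [hJ]; linarith
  by_contra hcon
  push Not at hcon
  -- filter basis
  have hne : (⨅ u : {u : V // ‖u‖ ≤ R'}, 𝓟 {w : V | ‖w‖ ≤ R' ∧ J w ≤ J u}).NeBot := by
    have : Nonempty {u : V // ‖u‖ ≤ R'} := ⟨⟨0, by simp [hR']⟩⟩
    refine iInf_neBot_of_directed' ?_ ?_
    · intro a b
      rcases le_total (J a) (J b) with h | h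
      · refine ⟨a, le_rfl, ?_⟩
        simp only [ge_iff_le, le_principal_iff, mem_principal]
        intro w hw; exact ⟨hw.1, hw.2.trans h⟩
      · refine ⟨b, ?_, le_rfl⟩
        simp only [ge_iff_le, le_principal_iff, mem_principal]
        intro w hw; exact ⟨hw.1, hw.2.trans h⟩
    · intro a
      rw [principal_neBot_iff]
      exact ⟨a, a.2, le_rfl⟩
  set F := (⨅ u : {u : V // ‖u‖ ≤ R'}, 𝓟 {w : V | ‖w‖ ≤ R' ∧ J w ≤ J u}) with hF
  have hU : ∀ a : V, ‖a‖ ≤ R' → ∀ᶠ w in (Ultrafilter.of F : Filter V), ‖w‖ ≤ R' ∧ J w ≤ J a := by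
    intro a ha
    have : {w : V | ‖w‖ ≤ R' ∧ J w ≤ J a} ∈ F :=
      mem_iInf_of_mem (⟨a, ha⟩ : {u : V // ‖u‖ ≤ R'}) (mem_principal_self _)
    exact Ultrafilter.of_le F this
  obtain ⟨u, hu⟩ := hlim (Ultrafilter.of F) ((hU 0 (by simp [hR'])).mono fun _ h => h.1)
  obtain ⟨w, hw, hw'⟩ := hcon u
  exact absurd (hu (J w) ((hU w hw).mono fun _ h => h.2)) (not_le.mpr hw')

end Abstract

section Space
open Filter Topology

abbrev EE (N : ℕ) := EuclideanSpace ℝ (Fin N)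

variable {N : ℕ}

/-- Test functions: `C¹` with compact support in `Ω`. -/
structure IsTst (Ω : Set (EE N)) (ψ : EE N → ℝ) : Prop where
  cd : ContDiff ℝ 1 ψ
  cs : HasCompactSupport ψ
  ts : tsupport ψ ⊆ Ω

theorem gradient_eq_symm (ψ : EE N → ℝ) :
    gradient ψ = fun x => (InnerProductSpace.toDual ℝ (EE N)).symm (fderiv ℝ ψ x) := rfl

theorem norm_gradient_eq (ψ : EE N → ℝ) (x : EE N) : ‖gradient ψ x‖ = ‖fderiv ℝ ψ x‖ := by
  simp [gradient]

theorem IsTst.cont_grad {Ω : Set (EE N)} {ψ : EE N → ℝ} (h : IsTst Ω ψ) :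
    Continuous (gradient ψ) :=
  (InnerProductSpace.toDual ℝ (EE N)).symm.continuous.comp (h.cd.continuous_fderiv one_ne_zero)

theorem IsTst.cs_grad {Ω : Set (EE N)} {ψ : EE N → ℝ} (h : IsTst Ω ψ) :
    HasCompactSupport (gradient ψ) :=
  HasCompactSupport.comp_left (h.cs.fderiv ℝ)
    (g := (InnerProductSpace.toDual ℝ (EE N)).symm) (map_zero _)

theorem IsTst.memLp {Ω : Set (EE N)} {ψ : EE N → ℝ} (h : IsTst Ω ψ) :
    MemLp ψ 2 (volume : Measure (EE N)) :=
  h.cd.continuous.memLp_of_hasCompactSupport h.cs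

theorem IsTst.memLp_grad {Ω : Set (EE N)} {ψ : EE N → ℝ} (h : IsTst Ω ψ) :
    MemLp (gradient ψ) 2 (volume : Measure (EE N)) :=
  h.cont_grad.memLp_of_hasCompactSupport h.cs_grad

theorem sq_lintegral_le {α : Type*} [MeasurableSpace α] (μ : Measure α) {f : α → ℝ≥0∞}
    (hf : AEMeasurable f μ) : (∫⁻ a, f a ∂μ) ^ 2 ≤ μ univ * ∫⁻ a, f a ^ 2 ∂μ := by
  have h := ENNReal.lintegral_mul_le_Lp_mul_Lq μ (p := 2) (q := 2)
    (by constructor <;> norm_num) (aemeasurable_const (b := (1 : ℝ≥0∞))) hf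
  simp only [Pi.mul_apply, one_mul] at h
  have h2 := pow_le_pow_left₀ zero_le h 2
  rw [mul_pow, ← ENNReal.rpow_natCast, ← ENNReal.rpow_natCast, ← ENNReal.rpow_natCast,
    ← ENNReal.rpow_mul, ← ENNReal.rpow_mul] at h2
  simp at h2
  exact h2

theorem trans_pointwise {Ω : Set (EE N)} {ψ : EE N → ℝ} (h : IsTst Ω ψ) (x z : EE N) :
    ‖ψ (x + z) - ψ x‖ₑ ^ 2 ≤
      ∫⁻ t in Ioc (0:ℝ) 1, ‖z‖ₑ ^ 2 * ‖gradient ψ (x + t • z)‖ₑ ^ 2 := by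
  have hd : ∀ t : ℝ, HasDerivAt (fun t : ℝ => ψ (x + t • z)) (fderiv ℝ ψ (x + t • z) z) t := by
    intro t
    have h1 : HasFDerivAt ψ (fderiv ℝ ψ (x + t • z)) (x + t • z) :=
      (h.cd.differentiable one_ne_zero _).hasFDerivAt
    have h2 : HasDerivAt (fun t : ℝ => x + t • z) z t := by
      simpa using ((hasDerivAt_id t).smul_const z).const_add x
    exact h1.comp_hasDerivAt t h2
  have hc : Continuous (fun t : ℝ => fderiv ℝ ψ (x + t • z) z) :=
    ((h.cd.continuous_fderiv one_ne_zero).comp (by fun_prop)).clm_apply continuous_const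
  have hi := intervalIntegral.integral_eq_sub_of_hasDerivAt (a := 0) (b := 1)
    (fun t _ => hd t) (hc.intervalIntegrable _ _)
  simp only [one_smul, zero_smul, add_zero] at hi
  rw [← hi, intervalIntegral.integral_of_le zero_le_one]
  have h3 := pow_le_pow_left₀ zero_le (enorm_integral_le_lintegral_enorm
    (μ := volume.restrict (Ioc (0:ℝ) 1)) (fun t : ℝ => fderiv ℝ ψ (x + t • z) z)) 2
  refine h3.trans ((sq_lintegral_le _ hc.enorm.measurable.aemeasurable).trans ?_)
  simp only [MeasurableSet.univ, Measure.restrict_apply, univ_inter, volume_Ioc, sub_zero,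
    ENNReal.ofReal_one, one_mul]
  gcongr with t
  rw [← mul_pow]
  gcongr
  rw [← ofReal_norm, ← ofReal_norm, ← ofReal_norm,
    ← ENNReal.ofReal_mul (norm_nonneg _), norm_gradient_eq, mul_comm]
  exact ENNReal.ofReal_le_ofReal (ContinuousLinearMap.le_opNorm _ _)

theorem trans_est {Ω : Set (EE N)} {ψ : EE N → ℝ} (h : IsTst Ω ψ) (z : EE N) :
    ∫⁻ x, ‖ψ (x + z) - ψ x‖ₑ ^ 2 ≤ ‖z‖ₑ ^ 2 * ∫⁻ x, ‖gradient ψ x‖ₑ ^ 2 := by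
  calc ∫⁻ x, ‖ψ (x + z) - ψ x‖ₑ ^ 2
      ≤ ∫⁻ x, ∫⁻ t in Ioc (0:ℝ) 1, ‖z‖ₑ ^ 2 * ‖gradient ψ (x + t • z)‖ₑ ^ 2 :=
        lintegral_mono fun x => trans_pointwise h x z
    _ = ∫⁻ t in Ioc (0:ℝ) 1, ∫⁻ x, ‖z‖ₑ ^ 2 * ‖gradient ψ (x + t • z)‖ₑ ^ 2 := by
        apply lintegral_lintegral_swap
        apply Measurable.aemeasurable
        have : Continuous (fun p : EE N × ℝ => gradient ψ (p.1 + p.2 • z)) :=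
          h.cont_grad.comp (by fun_prop)
        exact (this.enorm.measurable.pow_const 2).const_mul _
    _ = ∫⁻ t in Ioc (0:ℝ) 1, ‖z‖ₑ ^ 2 * ∫⁻ x, ‖gradient ψ x‖ₑ ^ 2 := by
        congr 1
        ext t
        rw [lintegral_const_mul']
        · congr 1
          exact lintegral_add_right_eq_self (fun x => ‖gradient ψ x‖ₑ ^ 2) (t • z)
        · simp
    _ = _ := by simp

abbrev XX (N : ℕ) := WithLp 2 (Lp ℝ 2 (volume : Measure (EE N)) × Lp (EE N) 2 (volume : Measure (EE N)))

def tstEl {Ω : Set (EE N)} {ψ : EE N → ℝ} (h : IsTst Ω ψ) : XX N :=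
  WithLp.toLp 2 (h.memLp.toLp ψ, h.memLp_grad.toLp (gradient ψ))

theorem IsTst.zero (Ω : Set (EE N)) : IsTst Ω (fun _ => (0:ℝ)) :=
  ⟨contDiff_const, HasCompactSupport.zero, by
    have : tsupport (fun _ : EE N => (0:ℝ)) = ∅ := tsupport_eq_empty_iff.mpr rfl
    rw [this]; exact empty_subset _⟩

theorem IsTst.add {Ω : Set (EE N)} {ψ χ : EE N → ℝ} (h : IsTst Ω ψ) (k : IsTst Ω χ) :
    IsTst Ω (ψ + χ) :=
  ⟨h.cd.add k.cd, h.cs.add k.cs, (tsupport_add ψ χ).trans (union_subset h.ts k.ts)⟩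

theorem IsTst.smul {Ω : Set (EE N)} {ψ : EE N → ℝ} (h : IsTst Ω ψ) (c : ℝ) :
    IsTst Ω (c • ψ) :=
  ⟨contDiff_const.smul h.cd, h.cs.smul_left (f := fun _ => c),
    (tsupport_smul_subset_right (fun _ => c) ψ).trans h.ts⟩

theorem gradient_add_tst {Ω : Set (EE N)} {ψ χ : EE N → ℝ} (h : IsTst Ω ψ) (k : IsTst Ω χ) :
    gradient (ψ + χ) = gradient ψ + gradient χ := by
  ext1 x
  simp only [gradient, Pi.add_apply]
  rw [fderiv_add (h.cd.differentiable one_ne_zero _) (k.cd.differentiable one_ne_zero _), map_add]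

theorem gradient_smul_tst {Ω : Set (EE N)} {ψ : EE N → ℝ} (h : IsTst Ω ψ) (c : ℝ) :
    gradient (c • ψ) = c • gradient ψ := by
  ext1 x
  simp only [gradient, Pi.smul_apply]
  rw [fderiv_const_smul (h.cd.differentiable one_ne_zero _), map_smul]

def V0 (Ω : Set (EE N)) : Submodule ℝ (XX N) where
  carrier := {x | ∃ (ψ : EE N → ℝ) (h : IsTst Ω ψ), x = tstEl h}
  add_mem' := by
    rintro _ _ ⟨ψ, h, rfl⟩ ⟨χ, k, rfl⟩
    refine ⟨ψ + χ, h.add k, ?_⟩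
    simp only [tstEl, gradient_add_tst h k]
    rw [← WithLp.toLp_add]
    rfl
  zero_mem' := by
    refine ⟨fun _ => 0, IsTst.zero Ω, ?_⟩
    have : gradient (fun _ : EE N => (0:ℝ)) = 0 := by
      ext1 x; simp [gradient]
    simp only [tstEl, this]
    rfl
  smul_mem' := by
    rintro c _ ⟨ψ, h, rfl⟩
    refine ⟨c • ψ, h.smul c, ?_⟩
    simp only [tstEl, gradient_smul_tst h c]
    rw [← WithLp.toLp_smul]
    rfl

def VV (Ω : Set (EE N)) : Submodule ℝ (XX N) := (V0 Ω).topologicalClosure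

instance (Ω : Set (EE N)) : CompleteSpace (VV Ω) :=
  (Submodule.isClosed_topologicalClosure _).completeSpace_coe

theorem tstEl_mem {Ω : Set (EE N)} {ψ : EE N → ℝ} (h : IsTst Ω ψ) : tstEl h ∈ VV Ω :=
  Submodule.le_topologicalClosure _ ⟨ψ, h, rfl⟩

theorem VV_induct {Ω : Set (EE N)} {P : XX N → Prop} (hP : IsClosed {x | P x})
    (ht : ∀ (ψ : EE N → ℝ) (h : IsTst Ω ψ), P (tstEl h)) : ∀ x ∈ VV Ω, P x := by
  intro x hx
  have : closure (V0 Ω : Set (XX N)) ⊆ {x | P x} :=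
    hP.closure_subset_iff.mpr (by rintro _ ⟨ψ, h, rfl⟩; exact ht ψ h)
  exact this hx

def fstL (N : ℕ) : XX N →L[ℝ] Lp ℝ 2 (volume : Measure (EE N)) :=
  WithLp.fstL 2 ℝ _ _
def sndL (N : ℕ) : XX N →L[ℝ] Lp (EE N) 2 (volume : Measure (EE N)) :=
  WithLp.sndL 2 ℝ _ _

theorem fstL_tstEl {Ω : Set (EE N)} {ψ : EE N → ℝ} (h : IsTst Ω ψ) :
    fstL N (tstEl h) = h.memLp.toLp ψ := rfl
theorem sndL_tstEl {Ω : Set (EE N)} {ψ : EE N → ℝ} (h : IsTst Ω ψ) :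
    sndL N (tstEl h) = h.memLp_grad.toLp (gradient ψ) := rfl

theorem norm_XX_sq (x : XX N) : ‖x‖ ^ 2 = ‖fstL N x‖ ^ 2 + ‖sndL N x‖ ^ 2 :=
  WithLp.prod_norm_sq_eq_of_L2 x

theorem ofReal_norm_sq_toLp {F : Type*} [NormedAddCommGroup F] {f : EE N → F}
    (hf : MemLp f 2 (volume : Measure (EE N))) :
    ENNReal.ofReal (‖hf.toLp f‖ ^ 2) = ∫⁻ x, ‖f x‖ₑ ^ 2 := by
  rw [Lp.norm_toLp, ENNReal.ofReal_pow ENNReal.toReal_nonneg, ENNReal.ofReal_toReal hf.2.ne,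
    eLpNorm_eq_lintegral_rpow_enorm_toReal (by norm_num) (by norm_num),
    ← ENNReal.rpow_natCast, ← ENNReal.rpow_mul]
  simp

end Space

section Rellich
open Filter Topology
variable {N : ℕ}

theorem le_of_ofReal_sq_le {a b c : ℝ} (hb : 0 ≤ b) (hc : 0 ≤ c)
    (h : ENNReal.ofReal (a ^ 2) ≤ ENNReal.ofReal (c ^ 2) * ENNReal.ofReal (b ^ 2)) :
    a ≤ c * b := by
  rw [← ENNReal.ofReal_mul (sq_nonneg _), ENNReal.ofReal_le_ofReal_iff (by positivity),
    ← mul_pow] at h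
  exact abs_le_of_sq_le_sq' h (by positivity) |>.2

theorem poincare (hN : 1 ≤ N) {Ω : Set (EE N)} (hb : Bornology.IsBounded Ω) :
    ∃ C : ℝ, 0 < C ∧ ∀ x ∈ VV Ω, ‖fstL N x‖ ≤ C * ‖sndL N x‖ := by
  obtain ⟨R, hR⟩ := hb.subset_closedBall (0 : EE N)
  set C : ℝ := 2 * max R 0 + 1 with hC
  have hCpos : 0 < C := by positivity
  let z : EE N := EuclideanSpace.single ⟨0, hN⟩ C
  have hz : ‖z‖ = C := by simp [z, abs_of_pos hCpos]
  have hsep : ∀ x ∈ Ω, x + z ∉ Ω := by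
    intro x hx hxz
    have h1 := hR hx
    have h2 := hR hxz
    simp only [Metric.mem_closedBall, dist_zero_right] at h1 h2
    have : ‖z‖ ≤ ‖x + z‖ + ‖x‖ := by
      calc ‖z‖ = ‖(x + z) - x‖ := by congr 1; abel
        _ ≤ _ := norm_sub_le _ _
    have := le_max_left R 0
    linarith
  refine ⟨C, hCpos, VV_induct ?_ ?_⟩
  · exact isClosed_le (by fun_prop) (by fun_prop)
  · intro ψ h
    rw [fstL_tstEl, sndL_tstEl]
    apply le_of_ofReal_sq_le (norm_nonneg _) hCpos.le
    rw [ofReal_norm_sq_toLp, ofReal_norm_sq_toLp]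
    have h3 := trans_est h z
    have : ENNReal.ofReal (C ^ 2) = ‖z‖ₑ ^ 2 := by
      rw [← ofReal_norm, hz, ENNReal.ofReal_pow hCpos.le]
    rw [this]
    refine le_trans (lintegral_mono fun x => ?_) h3
    have h0 : ∀ y, y ∉ Ω → ψ y = 0 := fun y hy => image_eq_zero_of_notMem_tsupport fun hh => hy (h.ts hh)
    by_cases hx : x ∈ Ω
    · simp [h0 _ (hsep x hx)]
    · simp [h0 x hx]

theorem isClosed_supp {F : Type*} [NormedAddCommGroup F] [InnerProductSpace ℝ F]
    {s : Set (EE N)} (hs : MeasurableSet s) :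
    IsClosed {f : Lp F 2 (volume : Measure (EE N)) | ∀ᵐ x, x ∈ s → f x = 0} := by
  let ind : Lp F 2 (volume : Measure (EE N)) → Lp F 2 (volume : Measure (EE N)) :=
    fun g => ((Lp.memLp g).indicator hs).toLp _
  have hind : ∀ g, ind g =ᵐ[volume] s.indicator g := fun g => MemLp.coeFn_toLp _
  have : {f : Lp F 2 (volume : Measure (EE N)) | ∀ᵐ x, x ∈ s → f x = 0} =
      ⋂ g, {f | inner ℝ (ind g) f = 0} := by
    ext f
    simp only [mem_ofPred_eq, mem_iInter]
    constructor
    · intro hf g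
      rw [L2.inner_def]
      apply integral_eq_zero_of_ae
      filter_upwards [hf, hind g] with x hx hg
      rw [hg]
      by_cases hxs : x ∈ s
      · simp [hx hxs]
      · simp [hxs]
    · intro hf
      have h1 := hf f
      have h2 : inner ℝ (ind f) (ind f) = (0:ℝ) := by
        rw [← h1, L2.inner_def, L2.inner_def]
        apply integral_congr_ae
        filter_upwards [hind f] with x hx
        rw [hx]
        by_cases hxs : x ∈ s
        · simp [hxs]
        · simp [hxs]
      have h3 : ind f = 0 := inner_self_eq_zero.mp h2
      have h4 := hind f
      rw [h3] at h4
      filter_upwards [h4, Lp.coeFn_zero F 2 (volume : Measure (EE N))] with x hx hx0 hxs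
      rw [hx0] at hx
      simpa [hxs] using hx.symm
  rw [this]
  exact isClosed_iInter fun g => isClosed_eq (by fun_prop) continuous_const

theorem supp_fst {Ω : Set (EE N)} (hΩ : IsOpen Ω) (x : XX N) (hx : x ∈ VV Ω) :
    ∀ᵐ y, y ∉ Ω → fstL N x y = 0 := by
  revert x
  refine VV_induct ?_ ?_
  · exact (isClosed_supp (F := ℝ) hΩ.measurableSet.compl).preimage (fstL N).continuous
  · intro ψ h
    filter_upwards [MemLp.coeFn_toLp h.memLp] with y hy hyΩ
    rw [fstL_tstEl, hy]
    exact image_eq_zero_of_notMem_tsupport fun hh => hyΩ (h.ts hh)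

theorem supp_snd {Ω : Set (EE N)} (hΩ : IsOpen Ω) (x : XX N) (hx : x ∈ VV Ω) :
    ∀ᵐ y, y ∉ Ω → sndL N x y = 0 := by
  revert x
  refine VV_induct ?_ ?_
  · exact (isClosed_supp (F := EE N) hΩ.measurableSet.compl).preimage (sndL N).continuous
  · intro ψ h
    filter_upwards [MemLp.coeFn_toLp h.memLp_grad] with y hy hyΩ
    rw [sndL_tstEl, hy]
    have : y ∉ tsupport (fderiv ℝ ψ) := fun hh => hyΩ (h.ts (tsupport_fderiv_subset ℝ hh))
    simp [gradient, image_eq_zero_of_notMem_tsupport this]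

theorem avg_pointwise {Ω : Set (EE N)} {ψ : EE N → ℝ} (h : IsTst Ω ψ) {ε : ℝ} (hε : 0 < ε)
    (x p : EE N) (hp : dist p x < ε) :
    ‖ψ x - (volume.real (Metric.ball (0 : EE N) ε))⁻¹ * ∫ y in Metric.ball p ε, ψ y‖ₑ ^ 2 ≤
      (volume (Metric.ball (0 : EE N) ε))⁻¹ *
        ∫⁻ z in Metric.ball (0 : EE N) (2 * ε), ‖ψ (x + z) - ψ x‖ₑ ^ 2 := by
  set b := volume (Metric.ball (0 : EE N) ε) with hbdef
  have hb0 : b ≠ 0 := (Metric.measure_ball_pos _ _ hε).ne'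
  have hbt : b ≠ ⊤ := Metric.isBounded_ball.measure_lt_top.ne
  have hbp : volume (Metric.ball p ε) = b := Measure.addHaar_ball_center _ _ _
  have hbr : volume.real (Metric.ball p ε) = b.toReal := by rw [Measure.real, hbp]
  have hb1 : b.toReal ≠ 0 := ENNReal.toReal_ne_zero.mpr ⟨hb0, hbt⟩
  have hint : Integrable ψ := h.cd.continuous.integrable_of_hasCompactSupport h.cs
  have e1 : ψ x - (volume.real (Metric.ball (0 : EE N) ε))⁻¹ * ∫ y in Metric.ball p ε, ψ y
      = (b.toReal)⁻¹ * ∫ y in Metric.ball p ε, (ψ x - ψ y) := by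
    have hfin : IsFiniteMeasure (volume.restrict (Metric.ball p ε)) :=
      ⟨by rw [Measure.restrict_apply_univ, hbp]; exact hbt.lt_top⟩
    rw [integral_sub (integrable_const _) hint.integrableOn]
    simp only [integral_const, measureReal_restrict_apply_univ, hbr, smul_eq_mul]
    rw [mul_sub, ← mul_assoc, inv_mul_cancel₀ hb1, one_mul]
    rfl
  rw [e1, enorm_mul, mul_pow]
  have e2 : ‖(b.toReal)⁻¹‖ₑ = b⁻¹ := by
    rw [enorm_inv hb1, Real.enorm_of_nonneg ENNReal.toReal_nonneg, ENNReal.ofReal_toReal hbt]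
  rw [e2]
  have hcont : Continuous fun y => ψ x - ψ y := continuous_const.sub h.cd.continuous
  have e3 : ‖∫ y in Metric.ball p ε, (ψ x - ψ y)‖ₑ ^ 2 ≤
      b * ∫⁻ y in Metric.ball p ε, ‖ψ x - ψ y‖ₑ ^ 2 := by
    refine (pow_le_pow_left₀ zero_le (enorm_integral_le_lintegral_enorm _) 2).trans ?_
    refine (sq_lintegral_le _ hcont.enorm.measurable.aemeasurable).trans ?_
    rw [Measure.restrict_apply_univ, hbp]
  have e4 : ∫⁻ y in Metric.ball p ε, ‖ψ x - ψ y‖ₑ ^ 2 ≤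
      ∫⁻ z in Metric.ball (0 : EE N) (2 * ε), ‖ψ (x + z) - ψ x‖ₑ ^ 2 := by
    rw [← lintegral_indicator measurableSet_ball, ← lintegral_indicator measurableSet_ball]
    rw [← lintegral_add_left_eq_self _ x]
    refine lintegral_mono fun z => ?_
    simp only [indicator]
    split_ifs with h1 h2
    · rw [enorm_sub_rev]
    · exfalso
      apply h2
      simp only [Metric.mem_ball, dist_zero_right] at h1 ⊢
      calc ‖z‖ = dist (x + z) x := by simp [dist_eq_norm]
        _ ≤ dist (x + z) p + dist p x := dist_triangle _ _ _
        _ < 2 * ε := by linarith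
    · exact zero_le
    · exact le_rfl
  calc b⁻¹ ^ 2 * ‖∫ y in Metric.ball p ε, (ψ x - ψ y)‖ₑ ^ 2
      ≤ b⁻¹ ^ 2 * (b * ∫⁻ z in Metric.ball (0 : EE N) (2 * ε), ‖ψ (x + z) - ψ x‖ₑ ^ 2) := by
        gcongr; exact e3.trans (by gcongr)
    _ = b⁻¹ * ((b⁻¹ * b) * ∫⁻ z in Metric.ball (0 : EE N) (2 * ε), ‖ψ (x + z) - ψ x‖ₑ ^ 2) := by
        ring
    _ = _ := by rw [ENNReal.inv_mul_cancel hb0 hbt, one_mul]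

theorem avg_est {Ω : Set (EE N)} {ψ : EE N → ℝ} (h : IsTst Ω ψ) {ε : ℝ} (hε : 0 < ε) :
    ∫⁻ x, (volume (Metric.ball (0 : EE N) ε))⁻¹ *
        ∫⁻ z in Metric.ball (0 : EE N) (2 * ε), ‖ψ (x + z) - ψ x‖ₑ ^ 2 ≤
      ENNReal.ofReal (2 ^ N * (2 * ε) ^ 2) * ∫⁻ x, ‖gradient ψ x‖ₑ ^ 2 := by
  set b := volume (Metric.ball (0 : EE N) ε) with hbdef
  have hb0 : b ≠ 0 := (Metric.measure_ball_pos _ _ hε).ne'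
  have hbt : b ≠ ⊤ := Metric.isBounded_ball.measure_lt_top.ne
  rw [lintegral_const_mul' _ _ (ENNReal.inv_ne_top.mpr hb0)]
  have hc : Continuous fun q : EE N × EE N => ψ (q.1 + q.2) - ψ q.1 := by
    have := h.cd.continuous
    fun_prop
  rw [lintegral_lintegral_swap (hc.enorm.measurable.pow_const 2).aemeasurable]
  have h2 : volume (Metric.ball (0 : EE N) (2 * ε)) = ENNReal.ofReal (2 ^ N) * b := by
    rw [hbdef, Measure.addHaar_ball_mul_of_pos _ _ two_pos]
    simp
  calc b⁻¹ * ∫⁻ z in Metric.ball (0 : EE N) (2 * ε), ∫⁻ x, ‖ψ (x + z) - ψ x‖ₑ ^ 2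
      ≤ b⁻¹ * ∫⁻ z in Metric.ball (0 : EE N) (2 * ε),
          (ENNReal.ofReal ((2 * ε) ^ 2) * ∫⁻ x, ‖gradient ψ x‖ₑ ^ 2) := by
        gcongr b⁻¹ * ?_
        refine setLIntegral_mono' measurableSet_ball fun z hz => ?_
        refine (trans_est h z).trans ?_
        gcongr
        rw [← ofReal_norm, ← ENNReal.ofReal_pow (norm_nonneg _)]
        apply ENNReal.ofReal_le_ofReal
        have : ‖z‖ < 2 * ε := by simpa using hz
        gcongr
    _ = (b⁻¹ * b) * (ENNReal.ofReal (2 ^ N) * ENNReal.ofReal ((2 * ε) ^ 2) * ∫⁻ x, ‖gradient ψ x‖ₑ ^ 2) := by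
        rw [setLIntegral_const, h2]; ring
    _ = _ := by
        rw [ENNReal.inv_mul_cancel hb0 hbt, one_mul, ENNReal.ofReal_mul (by positivity)]

end Rellich

section Rellich2
open Filter Topology
variable {N : ℕ}

theorem isCompactOperator_rankOne {X : Type*} [NormedAddCommGroup X] [InnerProductSpace ℝ X]
    (l : X →L[ℝ] ℝ) (y : X) : IsCompactOperator (l.smulRight y) := by
  have h1 : IsCompactOperator (ContinuousLinearMap.toSpanSingleton ℝ y) :=
    isCompactOperator_of_locallyCompactSpace_rng (ContinuousLinearMap.toSpanSingleton ℝ y)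
  exact h1.comp_clm l

theorem isCompactOperator_sum {ι X Y : Type*} [NormedAddCommGroup X] [NormedSpace ℝ X]
    [NormedAddCommGroup Y] [NormedSpace ℝ Y]
    (s : Finset ι) (f : ι → X →L[ℝ] Y) (h : ∀ i ∈ s, IsCompactOperator (f i)) :
    IsCompactOperator (⇑(∑ i ∈ s, f i)) := by
  classical
  induction s using Finset.induction_on with
  | empty => simpa using isCompactOperator_zero
  | insert a s ha ih =>
    rw [Finset.sum_insert ha]
    exact (h a (by simp)).add (ih fun i hi => h i (by simp [hi]))

/-- finite rank approximation -/
theorem finite_rank_approx {Ω : Set (EE N)} (hΩ : IsOpen Ω) (hb : Bornology.IsBounded Ω)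
    {ε : ℝ} (hε : 0 < ε) :
    ∃ P : Lp ℝ 2 (volume : Measure (EE N)) →L[ℝ] Lp ℝ 2 (volume : Measure (EE N)),
      IsCompactOperator P ∧ ∀ x ∈ VV Ω,
        ‖fstL N x - P (fstL N x)‖ ≤ (Real.sqrt (2 ^ N) * (2 * ε)) * ‖sndL N x‖ := by
  classical
  set e := TopologicalSpace.denseSeq (EE N)
  -- a finite net
  obtain ⟨n, hn⟩ : ∃ n, ∀ x ∈ Ω, ∃ k ≤ n, dist (e k) x < ε := by
    have hc : IsCompact (closure Ω) := hb.isCompact_closure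
    obtain ⟨t, ht⟩ := hc.elim_finite_subcover (fun k : ℕ => Metric.ball (e k) ε)
      (fun k => Metric.isOpen_ball) (by
        intro x _
        obtain ⟨y, hy, ⟨k, rfl⟩⟩ := Metric.dense_iff.mp (TopologicalSpace.denseRange_denseSeq (EE N)) x ε hε
        simp only [mem_iUnion]
        exact ⟨k, by rw [Metric.mem_ball, dist_comm]; exact hy⟩)
    refine ⟨t.sup id, fun x hx => ?_⟩
    have := ht (subset_closure hx)
    simp only [mem_iUnion] at this
    obtain ⟨k, hk, hxk⟩ := this
    exact ⟨k, Finset.le_sup (f := id) hk, by rwa [Metric.mem_ball, dist_comm] at hxk⟩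
  set nP := SimpleFunc.nearestPt e n
  have hnP : ∀ x ∈ Ω, dist (nP x) x < ε := by
    intro x hx
    obtain ⟨k, hk, hkx⟩ := hn x hx
    have h1 := SimpleFunc.edist_nearestPt_le e x hk
    rw [edist_dist, edist_dist, ENNReal.ofReal_le_ofReal_iff dist_nonneg] at h1
    exact lt_of_le_of_lt h1 hkx
  have hΩt : volume Ω ≠ ⊤ := hb.measure_lt_top.ne
  have hA : ∀ p, MeasurableSet (Ω ∩ nP ⁻¹' {p}) := fun p =>
    hΩ.measurableSet.inter (nP.measurableSet_preimage _)
  have hAt : ∀ p, volume (Ω ∩ nP ⁻¹' {p}) ≠ ⊤ := fun p =>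
    ((measure_mono inter_subset_left).trans_lt hΩt.lt_top).ne
  have hBt : ∀ p : EE N, volume (Metric.ball p ε) ≠ ⊤ := fun p => Metric.isBounded_ball.measure_lt_top.ne
  set b := volume.real (Metric.ball (0 : EE N) ε)
  let l : EE N → (Lp ℝ 2 (volume : Measure (EE N)) →L[ℝ] ℝ) := fun p =>
    b⁻¹ • innerSL ℝ (indicatorConstLp 2 (measurableSet_ball (x := p) (ε := ε)) (hBt p) (1:ℝ))
  have hl : ∀ p f, l p f = b⁻¹ * ∫ y in Metric.ball p ε, f y := by
    intro p f
    simp only [l, smul_apply, innerSL_apply_apply, smul_eq_mul]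
    rw [L2.inner_indicatorConstLp_one]
  let P : Lp ℝ 2 (volume : Measure (EE N)) →L[ℝ] Lp ℝ 2 (volume : Measure (EE N)) :=
    ∑ p ∈ nP.range, (l p).smulRight (indicatorConstLp 2 (hA p) (hAt p) (1:ℝ))
  have hP : ∀ f, ∀ᵐ x, P f x = Ω.indicator (fun x => l (nP x) f) x := by
    intro f
    have h1 : P f = ∑ p ∈ nP.range, (l p f) • (indicatorConstLp 2 (hA p) (hAt p) (1:ℝ)) := by
      simp [P]
    rw [h1]
    have h2 : ∀ p ∈ nP.range, ∀ᵐ x, ((l p f) • (indicatorConstLp 2 (hA p) (hAt p) (1:ℝ)) : Lp ℝ 2 (volume : Measure (EE N))) x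
        = (Ω ∩ nP ⁻¹' {p}).indicator (fun _ => l p f) x := by
      intro p _
      filter_upwards [Lp.coeFn_smul (l p f) (indicatorConstLp 2 (hA p) (hAt p) (1:ℝ)),
        indicatorConstLp_coeFn (p := 2) (hs := hA p) (hμs := hAt p) (c := (1:ℝ))] with x hx hx2
      rw [hx, Pi.smul_apply, hx2]
      simp [indicator]
    have h3 : ∀ᵐ x, ∀ p ∈ nP.range, ((l p f) • (indicatorConstLp 2 (hA p) (hAt p) (1:ℝ)) : Lp ℝ 2 (volume : Measure (EE N))) x
        = (Ω ∩ nP ⁻¹' {p}).indicator (fun _ => l p f) x :=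
      (Finset.eventually_all nP.range).mpr h2
    filter_upwards [h3, Lp.coeFn_finsetSum nP.range
      (fun p => (l p f) • (indicatorConstLp 2 (hA p) (hAt p) (1:ℝ)))] with x hx hx2
    rw [hx2, Finset.sum_apply, Finset.sum_congr rfl hx]
    by_cases hxΩ : x ∈ Ω
    · simp only [indicator, mem_inter_iff, hxΩ, true_and, mem_preimage, mem_singleton_iff, if_true]
      rw [Finset.sum_ite_eq]
      simp
    · simp [indicator, hxΩ]
  refine ⟨P, isCompactOperator_sum _ _ fun p _ => isCompactOperator_rankOne _ _, VV_induct ?_ ?_⟩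
  · exact isClosed_le (by fun_prop) (by fun_prop)
  · intro ψ h
    rw [fstL_tstEl, sndL_tstEl]
    apply le_of_ofReal_sq_le (norm_nonneg _) (by positivity)
    rw [ofReal_norm_sq_toLp]
    set F := h.memLp.toLp ψ with hF
    have hFae : ∀ᵐ x, F x = ψ x := MemLp.coeFn_toLp h.memLp
    have hm : MemLp (fun x => ψ x - P F x) 2 (volume : Measure (EE N)) := h.memLp.sub (Lp.memLp (P F))
    have e1 : F - P F = hm.toLp _ := by
      apply Lp.ext
      filter_upwards [Lp.coeFn_sub F (P F), MemLp.coeFn_toLp hm, hFae] with x h1 h2 h3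
      rw [h1, h2, Pi.sub_apply, h3]
    rw [e1, ofReal_norm_sq_toLp]
    have e2 : (Real.sqrt (2 ^ N) * (2 * ε)) ^ 2 = 2 ^ N * (2 * ε) ^ 2 := by
      rw [mul_pow, Real.sq_sqrt (by positivity)]
    rw [e2]
    refine le_trans (lintegral_mono_ae ?_) (avg_est h hε)
    filter_upwards [hP F] with x hx
    rw [hx]
    by_cases hxΩ : x ∈ Ω
    · rw [indicator_of_mem hxΩ, hl]
      have : ∫ y in Metric.ball (nP x) ε, F y = ∫ y in Metric.ball (nP x) ε, ψ y :=
        integral_congr_ae (ae_restrict_of_ae hFae)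
      rw [this]
      exact avg_pointwise h hε x (nP x) (hnP x hxΩ)
    · have : ψ x = 0 := image_eq_zero_of_notMem_tsupport fun hh => hxΩ (h.ts hh)
      rw [indicator_of_notMem hxΩ, this]
      simp

theorem norm_sndL_le (x : XX N) : ‖sndL N x‖ ≤ ‖x‖ := by
  have := norm_XX_sq x
  nlinarith [norm_nonneg x, norm_nonneg (sndL N x), sq_nonneg ‖fstL N x‖]

theorem rellich {Ω : Set (EE N)} (hΩ : IsOpen Ω) (hb : Bornology.IsBounded Ω) :
    IsCompactOperator ((fstL N).comp (VV Ω).subtypeL) := by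
  have hex : ∀ n : ℕ, ∃ P : Lp ℝ 2 (volume : Measure (EE N)) →L[ℝ] Lp ℝ 2 (volume : Measure (EE N)),
      IsCompactOperator P ∧ ∀ x ∈ VV Ω,
        ‖fstL N x - P (fstL N x)‖ ≤ (Real.sqrt (2 ^ N) * (2 * (1 / ((n:ℝ) + 1)))) * ‖sndL N x‖ :=
    fun n => finite_rank_approx hΩ hb (by positivity)
  choose P hPc hPe using hex
  set S := (fstL N).comp (VV Ω).subtypeL with hS
  refine isCompactOperator_of_tendsto (l := atTop) (F := fun n => (P n).comp S) ?_
    (Eventually.of_forall fun n => (hPc n).comp_clm S)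
  refine (tendsto_iff_norm_sub_tendsto_zero (E := VV Ω →L[ℝ] Lp ℝ 2 (volume : Measure (EE N)))).mpr ?_
  have hlim : Tendsto (fun n : ℕ => Real.sqrt (2 ^ N) * (2 * (1 / ((n:ℝ) + 1)))) atTop (𝓝 0) := by
    have := ((tendsto_one_div_add_atTop_nhds_zero_nat (𝕜 := ℝ)).const_mul 2).const_mul (Real.sqrt (2 ^ N))
    simpa using this
  refine squeeze_zero (fun n => by positivity) (fun n => ?_) hlim
  refine ContinuousLinearMap.opNorm_le_bound _ (by positivity) fun x => ?_
  have h1 := hPe n x x.2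
  rw [norm_sub_rev] at h1
  refine h1.trans ?_
  gcongr
  exact norm_sndL_le _

end Rellich2

section Variational
open Filter Topology
variable {N : ℕ}

def Sf (s : ℝ) : ℝ := s / 2 - Real.sin (2 * s) / 4

theorem Sf_hasDerivAt (s : ℝ) : HasDerivAt Sf (Real.sin s ^ 2) s := by
  have h1 : HasDerivAt (fun s : ℝ => Real.sin (2 * s)) (Real.cos (2 * s) * 2) s := by
    have h := (Real.hasDerivAt_sin (2 * s)).comp s ((hasDerivAt_id s).const_mul 2)
    rw [mul_one] at h
    exact h
  have h2 := ((hasDerivAt_id s).div_const 2).sub (h1.div_const 4)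
  have e : Real.sin s ^ 2 = 1 / 2 - Real.cos (2 * s) * 2 / 4 := by
    rw [Real.cos_two_mul, Real.cos_sq']
    ring
  rw [e]
  exact h2

theorem Sf_zero : Sf 0 = 0 := by simp [Sf]

theorem Sf_le_abs (s : ℝ) : Sf s ≤ |s| := by
  have h := Real.abs_sin_le_one (2 * s)
  have h1 : |Real.sin (2 * s)| ≤ |2 * s| := Real.abs_sin_le_abs
  rw [abs_mul, abs_of_pos (by norm_num : (0:ℝ) < 2)] at h1
  have h2 := neg_abs_le (Real.sin (2 * s))
  have h3 := le_abs_self s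
  unfold Sf
  linarith

theorem sin_sq_sub_le (a c : ℝ) : |Real.sin c ^ 2 - Real.sin a ^ 2| ≤ |c - a| := by
  have : Real.sin c ^ 2 - Real.sin a ^ 2 = Real.sin (c - a) * Real.sin (c + a) := by
    rw [Real.sin_sub, Real.sin_add]
    nlinarith [Real.sin_sq_add_cos_sq c, Real.sin_sq_add_cos_sq a]
  rw [this, abs_mul]
  calc |Real.sin (c - a)| * |Real.sin (c + a)| ≤ |c - a| * 1 := 
        mul_le_mul Real.abs_sin_le_abs (Real.abs_sin_le_one _) (abs_nonneg _) (abs_nonneg _)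
    _ = _ := mul_one _

theorem Sf_taylor (a b : ℝ) : |Sf (a + b) - Sf a - Real.sin a ^ 2 * b| ≤ b ^ 2 := by
  have hd : ∀ x ∈ uIcc a (a + b), HasDerivWithinAt (fun x => Sf x - Real.sin a ^ 2 * x)
      (Real.sin x ^ 2 - Real.sin a ^ 2) (uIcc a (a + b)) x := by
    intro x _
    have := (Sf_hasDerivAt x).sub ((hasDerivAt_id x).const_mul (Real.sin a ^ 2))
    simp only [mul_one] at this
    exact this.hasDerivWithinAt
  have hb : ∀ x ∈ uIcc a (a + b), ‖Real.sin x ^ 2 - Real.sin a ^ 2‖ ≤ |b| := by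
    intro x hx
    rw [Real.norm_eq_abs]
    refine (sin_sq_sub_le a x).trans ?_
    have := abs_sub_left_of_mem_uIcc hx
    simpa using this
  have := (convex_uIcc a (a + b)).norm_image_sub_le_of_norm_hasDerivWithin_le hd hb
    left_mem_uIcc right_mem_uIcc
  have e : Sf (a + b) - Real.sin a ^ 2 * (a + b) - (Sf a - Real.sin a ^ 2 * a) =
    Sf (a + b) - Sf a - Real.sin a ^ 2 * b := by ring
  rw [e, Real.norm_eq_abs] at this
  refine this.trans ?_
  simp [← sq]

theorem sin_sq_le_abs (s : ℝ) : |Real.sin s ^ 2| ≤ |s| := by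
  have := sin_sq_sub_le 0 s
  simpa using this

abbrev L2R (N : ℕ) := Lp ℝ 2 (volume : Measure (EE N))

theorem memLp_sinSq (w : L2R N) : MemLp (fun x => Real.sin (w x) ^ 2) 2 (volume : Measure (EE N)) := by
  refine (Lp.memLp w).of_le ?_ (Eventually.of_forall fun x => ?_)
  · exact ((Real.continuous_sin.pow 2).comp_aestronglyMeasurable (Lp.aestronglyMeasurable w))
  · exact sin_sq_le_abs _

def sinSq (w : L2R N) : L2R N := (memLp_sinSq w).toLp _

theorem coe_sinSq (w : L2R N) : ∀ᵐ x, sinSq w x = Real.sin (w x) ^ 2 := MemLp.coeFn_toLp _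

def B0 (w : L2R N) : ℝ := ∫ x, Sf (w x)

theorem Sf_cont : Continuous Sf := by unfold Sf; fun_prop

theorem integrable_Sf (w : L2R N) : Integrable (fun x => Sf (w x)) := by
  have h := (Lp.memLp w).integrable_sq
  refine h.mono (Sf_cont.comp_aestronglyMeasurable (Lp.aestronglyMeasurable w))
    (Eventually.of_forall fun x => ?_)
  have := Sf_taylor 0 (w x)
  simp only [zero_add, Sf_zero, Real.sin_zero] at this
  simpa using this

theorem L2_norm_sq (b : L2R N) : ‖b‖ ^ 2 = ∫ x, b x ^ 2 := by
  rw [← real_inner_self_eq_norm_sq, L2.inner_def]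
  simp [sq]

theorem L2_inner (a b : L2R N) : inner ℝ a b = ∫ x, a x * b x := by
  rw [L2.inner_def]
  simp [mul_comm]

theorem B0_taylor (a b : L2R N) : |B0 (a + b) - B0 a - inner ℝ (sinSq a) b| ≤ ‖b‖ ^ 2 := by
  have hi : Integrable (fun x => sinSq a x * b x) := by
    have := L2.integrable_inner (𝕜 := ℝ) b (sinSq a)
    simpa using this
  have e : B0 (a + b) - B0 a - inner ℝ (sinSq a) b =
      ∫ x, (Sf ((a + b : L2R N) x) - Sf (a x) - sinSq a x * b x) := by
    have h1 : Integrable (fun x => Sf ((a + b : L2R N) x) - Sf (a x)) :=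
      (integrable_Sf _).sub (integrable_Sf _)
    rw [integral_sub h1 hi,
      integral_sub (integrable_Sf _) (integrable_Sf _), L2_inner]
    rfl
  rw [e, L2_norm_sq, ← Real.norm_eq_abs]
  refine norm_integral_le_of_norm_le (Lp.memLp b).integrable_sq ?_
  filter_upwards [Lp.coeFn_add a b, coe_sinSq a] with x h1 h2
  rw [h1, h2, Pi.add_apply]
  exact Sf_taylor _ _

theorem B0_continuous : Continuous (B0 (N := N)) := by
  rw [continuous_iff_continuousAt]
  intro a
  rw [ContinuousAt, tendsto_iff_norm_sub_tendsto_zero]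
  have hlim : Tendsto (fun b : L2R N => ‖sinSq a‖ * ‖b - a‖ + ‖b - a‖ ^ 2) (𝓝 a) (𝓝 0) := by
    have : Continuous (fun b : L2R N => ‖sinSq a‖ * ‖b - a‖ + ‖b - a‖ ^ 2) := by fun_prop
    simpa using this.tendsto a
  refine squeeze_zero (fun _ => norm_nonneg _) (fun b => ?_) hlim
  have h1 := B0_taylor a (b - a)
  rw [add_sub_cancel] at h1
  have h2 := abs_real_inner_le_norm (sinSq a) (b - a)
  rw [Real.norm_eq_abs]
  have h3 : B0 b - B0 a = (B0 b - B0 a - inner ℝ (sinSq a) (b - a)) + inner ℝ (sinSq a) (b - a) := by ring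
  rw [h3]
  exact (abs_add_le _ _).trans (by linarith)

theorem hasDerivAt_of_quad {g : ℝ → ℝ} {c K : ℝ} (h : ∀ t, |g t - g 0 - t * c| ≤ K * t ^ 2) :
    HasDerivAt g c 0 := by
  rw [hasDerivAt_iff_isLittleO_nhds_zero]
  have h1 : (fun t => g (0 + t) - g 0 - t • c) =O[𝓝 0] (fun t : ℝ => t ^ 2) := by
    refine Asymptotics.IsBigO.of_bound K (Eventually.of_forall fun t => ?_)
    simp only [zero_add, smul_eq_mul, norm_pow, Real.norm_eq_abs, sq_abs]
    exact h t
  exact h1.trans_isLittleO (by simpa using Asymptotics.isLittleO_pow_id (𝕜 := ℝ) (n := 2) (by norm_num))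

theorem B0_hasDerivAt (a b : L2R N) :
    HasDerivAt (fun t : ℝ => B0 (a + t • b)) (inner ℝ (sinSq a) b) 0 := by
  refine hasDerivAt_of_quad (K := ‖b‖ ^ 2) fun t => ?_
  have h := B0_taylor a (t • b)
  rw [inner_smul_right, norm_smul, mul_pow, Real.norm_eq_abs, sq_abs] at h
  simpa [mul_comm] using h

/-- `Af d r = ∫₀^r (1 + d sin² s) s ds`. -/
def Af (d r : ℝ) : ℝ := r ^ 2 / 2 +
  d * (r ^ 2 / 4 - r * Real.sin (2 * r) / 4 - (Real.cos (2 * r) - 1) / 8)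

theorem Af_hasDerivAt (d r : ℝ) : HasDerivAt (Af d) ((1 + d * Real.sin r ^ 2) * r) r := by
  have hid := hasDerivAt_id r
  have h2r : HasDerivAt (fun s : ℝ => 2 * s) 2 r := by simpa using hid.const_mul 2
  have hs := (Real.hasDerivAt_sin (2 * r)).comp r h2r
  have hc := (Real.hasDerivAt_cos (2 * r)).comp r h2r
  have hp := hid.pow 2
  have := (hp.div_const 2).add ((((hp.div_const 4).sub ((hid.mul hs).div_const 4)).sub
    ((hc.sub_const 1).div_const 8)).const_mul d)
  have e : (1 + d * Real.sin r ^ 2) * r = (↑2 * id r ^ (2 - 1) * 1) / 2 + d * ((↑2 * id r ^ (2 - 1) * 1) / 4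
      - (1 * Real.sin (2 * r) + r * (Real.cos (2 * r) * 2)) / 4 - (-Real.sin (2 * r) * 2) / 8) := by
    have hsq : Real.sin r ^ 2 = (1 - Real.cos (2 * r)) / 2 := by
      rw [Real.cos_two_mul, Real.cos_sq']; ring
    rw [hsq]
    simp only [id]
    ring
  rw [e]
  exact this

theorem Af_zero (d : ℝ) : Af d 0 = 0 := by simp [Af]

theorem Af_abs (d r : ℝ) : Af d |r| = Af d r := by
  rcases abs_choice r with h | h <;> rw [h]
  simp [Af]

theorem Af_cont (d : ℝ) : Continuous (Af d) := by unfold Af; fun_prop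

theorem Af_mono {d : ℝ} (hd : 0 < d) : MonotoneOn (Af d) (Ici 0) := by
  refine monotoneOn_of_deriv_nonneg (convex_Ici 0) (Af_cont d).continuousOn
    (fun x _ => (Af_hasDerivAt d x).differentiableAt.differentiableWithinAt) ?_
  intro x hx
  rw [interior_Ici, mem_Ioi] at hx
  rw [(Af_hasDerivAt d x).deriv]
  positivity

theorem Af_ge {d : ℝ} (hd : 0 < d) {r : ℝ} (hr : 0 ≤ r) : r ^ 2 / 2 ≤ Af d r := by
  have hm : MonotoneOn (fun r => Af d r - r ^ 2 / 2) (Ici 0) := by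
    refine monotoneOn_of_deriv_nonneg (convex_Ici 0) ((Af_cont d).sub (by fun_prop)).continuousOn
      (fun x _ => ((Af_hasDerivAt d x).differentiableAt.sub (by fun_prop)).differentiableWithinAt) ?_
    intro x hx
    rw [interior_Ici, mem_Ioi] at hx
    have h1 : HasDerivAt (fun r : ℝ => r ^ 2 / 2) x x := by
      have := (hasDerivAt_pow 2 x).div_const 2
      simpa using this
    have h2 := ((Af_hasDerivAt d x).sub h1).deriv
    change 0 ≤ deriv (Af d - fun r => r ^ 2 / 2) x
    rw [h2]
    have : (1 + d * Real.sin x ^ 2) * x - x = d * Real.sin x ^ 2 * x := by ring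
    rw [this]
    positivity
  have := hm (mem_Ici.mpr le_rfl) hr hr
  simp only [Af_zero] at this
  linarith

theorem Af_norm_hasDerivAt {Y : Type*} [NormedAddCommGroup Y] [InnerProductSpace ℝ Y] (d : ℝ)
    (x y : Y) : HasDerivAt (fun t : ℝ => Af d ‖x + t • y‖)
      ((1 + d * Real.sin ‖x‖ ^ 2) * inner ℝ x y) 0 := by
  by_cases hx : x = 0
  · subst hx
    have e : (fun t : ℝ => Af d ‖(0:Y) + t • y‖) = fun t : ℝ => Af d (t * ‖y‖) := by
      ext t
      rw [zero_add, norm_smul, Real.norm_eq_abs, ← Af_abs d (t * ‖y‖), abs_mul, abs_norm]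
    rw [e]
    have h1 : HasDerivAt (fun t : ℝ => t * ‖y‖) ‖y‖ 0 := by
      simpa using (hasDerivAt_id (0:ℝ)).mul_const ‖y‖
    have := (Af_hasDerivAt d (0 * ‖y‖)).comp (0:ℝ) h1
    have e2 : (1 + d * Real.sin ‖(0:Y)‖ ^ 2) * inner ℝ (0:Y) y =
      (1 + d * Real.sin (0 * ‖y‖) ^ 2) * (0 * ‖y‖) * ‖y‖ := by simp
    rw [e2]
    exact this
  · have h2 : HasDerivAt (fun t : ℝ => x + t • y) y 0 := by
      simpa using ((hasDerivAt_id (0:ℝ)).smul_const y).const_add x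
    have h3 : HasDerivAt (fun t : ℝ => ‖x + t • y‖) (inner ℝ x y / ‖x‖) 0 := by
      have h4 := (h2.norm_sq).sqrt (by simpa using hx)
      simp only [Real.sqrt_sq (norm_nonneg _), zero_smul, add_zero] at h4
      convert h4 using 1
      field_simp
    have h5 := (Af_hasDerivAt d ‖x + (0:ℝ) • y‖).comp (0:ℝ) h3
    have hn : ‖x‖ ≠ 0 := norm_ne_zero_iff.mpr hx
    simp only [zero_smul, add_zero] at h5
    have e2 : (1 + d * Real.sin ‖x‖ ^ 2) * inner ℝ x y =
      (1 + d * Real.sin ‖x‖ ^ 2) * ‖x‖ * (inner ℝ x y / ‖x‖) := by field_simp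
    rw [e2]
    exact h5

theorem B0_le {Ω : Set (EE N)} (hΩ : MeasurableSet Ω) (hΩt : volume Ω ≠ ⊤) (w : L2R N)
    (hw : ∀ᵐ x, x ∉ Ω → w x = 0) : B0 w ≤ ‖indicatorConstLp 2 hΩ hΩt (1:ℝ)‖ * ‖w‖ := by
  have hm : MemLp (fun x => |w x|) 2 (volume : Measure (EE N)) := (Lp.memLp w).abs
  have hn : ‖hm.toLp _‖ = ‖w‖ := by
    rw [Lp.norm_toLp, Lp.norm_def]
    congr 1
    exact eLpNorm_norm (fun x => w x)
  rw [← hn]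
  refine le_trans ?_ (real_inner_le_norm _ _)
  rw [L2.inner_indicatorConstLp_one]
  have e : ∫ x in Ω, (hm.toLp _) x = ∫ x in Ω, |w x| :=
    integral_congr_ae (ae_restrict_of_ae (MemLp.coeFn_toLp hm))
  rw [e, B0]
  have hi : Integrable (fun x => |w x|) (volume.restrict Ω) := by
    have : IsFiniteMeasure (volume.restrict Ω) := ⟨by rw [Measure.restrict_apply_univ]; exact hΩt.lt_top⟩
    exact (hm.restrict Ω).integrable (by norm_num)
  have e2 : ∫ x, Sf (w x) = ∫ x in Ω, Sf (w x) := by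
    rw [← integral_indicator hΩ]
    apply integral_congr_ae
    filter_upwards [hw] with x hx
    by_cases h : x ∈ Ω
    · simp [h]
    · simp [h, hx h, Sf_zero]
  rw [e2]
  exact integral_mono ((integrable_Sf w).restrict) hi fun x => Sf_le_abs _

theorem B0_zero : B0 (0 : L2R N) = 0 := by
  rw [B0]
  apply integral_eq_zero_of_ae
  filter_upwards [Lp.coeFn_zero ℝ 2 (volume : Measure (EE N))] with x hx
  rw [hx]; simp [Sf_zero]

theorem coercive_aux {C K a b n A B : ℝ} (hC : 0 < C) (hK : 0 ≤ K) (ha : 0 ≤ a) (hb : 0 ≤ b)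
    (h1 : a ≤ C * b) (h2 : n ^ 2 = a ^ 2 + b ^ 2) (h3 : B ≤ K * a)
    (h5 : b ^ 2 / 2 ≤ A) (hu : (C + 1) * (2 * K * C) < n) : 0 < A - B := by
  have h6 : n ≤ (C + 1) * b := by
    refine abs_le_of_sq_le_sq' ?_ (by positivity) |>.2
    rw [h2]
    nlinarith [mul_nonneg hC.le (sq_nonneg b)]
  have h7 : 2 * K * C < b := by
    have := hu.trans_le h6
    exact lt_of_mul_lt_mul_left this (by positivity)
  have h8 : B ≤ K * (C * b) := h3.trans (by gcongr)
  nlinarith [mul_nonneg hK hC.le]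

theorem exists_weak (hN : 1 ≤ N) {Ω : Set (EE N)} (hΩ : IsOpen Ω) (hb : Bornology.IsBounded Ω)
    {d : ℝ} (hd : 0 < d) (fh : L2R N) :
    ∃ u ∈ VV Ω, ∀ w ∈ VV Ω,
      (1 + d * Real.sin ‖sndL N u‖ ^ 2) * inner ℝ (sndL N u) (sndL N w) =
        inner ℝ (sinSq (fstL N u) + fh) (fstL N w) := by
  obtain ⟨C, hC, hP⟩ := poincare hN hb
  have hΩt : volume Ω ≠ ⊤ := hb.measure_lt_top.ne
  obtain ⟨K0, hK0, hB0⟩ : ∃ K0 : ℝ, 0 ≤ K0 ∧ ∀ x ∈ VV Ω, B0 (fstL N x) ≤ K0 * ‖fstL N x‖ :=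
    ⟨_, norm_nonneg _, fun x hx => B0_le hΩ.measurableSet hΩt (fstL N x) (supp_fst hΩ x hx)⟩
  have hco : ∀ u : VV Ω, (C + 1) * (2 * (K0 + ‖fh‖) * C) < ‖u‖ →
      0 < Af d ‖sndL N u‖ - (B0 (fstL N u) + inner ℝ fh (fstL N u)) := by
    intro u hu
    refine coercive_aux hC (by positivity) (norm_nonneg (fstL N u)) (norm_nonneg (sndL N u))
      (hP u u.2) (norm_XX_sq (u : XX N)) ?_ (Af_ge hd (norm_nonneg _)) hu
    have h4 := real_inner_le_norm fh (fstL N u)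
    have h3 := hB0 u u.2
    linarith
  have hmin : ∃ u : VV Ω, ∀ v : VV Ω, Af d ‖sndL N u‖ - (B0 (fstL N u) + inner ℝ fh (fstL N u)) ≤
      Af d ‖sndL N v‖ - (B0 (fstL N v) + inner ℝ fh (fstL N v)) := by
    refine exists_min_abstract ((fstL N).comp (VV Ω).subtypeL) ((sndL N).comp (VV Ω).subtypeL)
      (rellich hΩ hb) (Af d) (Af_mono hd) (Af_cont d)
      (fun w => B0 w + inner ℝ fh w) (B0_continuous.add (by fun_prop)) 
      ((C + 1) * (2 * (K0 + ‖fh‖) * C)) ?_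
    intro u hu
    have h0 : Af d ‖((sndL N).comp (VV Ω).subtypeL) 0‖ - (B0 (((fstL N).comp (VV Ω).subtypeL) 0)
      + inner ℝ fh (((fstL N).comp (VV Ω).subtypeL) 0)) = 0 := by
      rw [map_zero, map_zero, B0_zero]
      simp [Af_zero]
    exact (lt_of_eq_of_lt h0 (hco u hu)).le
  obtain ⟨u, hu⟩ := hmin
  refine ⟨u, u.2, fun w hw => ?_⟩
  have hmin : IsLocalMin (fun t : ℝ => Af d ‖sndL N u + t • sndL N w‖ -
      (B0 (fstL N u + t • fstL N w) + (inner ℝ fh (fstL N u) + t * inner ℝ fh (fstL N w)))) 0 := by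
    refine Eventually.of_forall fun t => ?_
    have := hu (u + t • ⟨w, hw⟩)
    simp only [Submodule.coe_add, Submodule.coe_smul, map_add, map_smul, inner_add_right,
      inner_smul_right] at this
    simpa using this
  have hder := (Af_norm_hasDerivAt d (sndL N u) (sndL N w)).sub
    ((B0_hasDerivAt (fstL N u) (fstL N w)).add
      (((hasDerivAt_id (0:ℝ)).mul_const (inner ℝ fh (fstL N w))).const_add (inner ℝ fh (fstL N u))))
  have h0 := hmin.hasDerivAt_eq_zero hder
  rw [inner_add_left]
  linarith

end Variational

section Classical
open Filter Topology
variable {N : ℕ}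

theorem contDiffOn_fderiv_app {Ω : Set (EE N)} (hΩ : IsOpen Ω) {w : EE N → ℝ} {n : ℕ}
    (hw : ContDiffOn ℝ (n + 1) w Ω) (v : EE N) : ContDiffOn ℝ n (fun y => fderiv ℝ w y v) Ω :=
  (hw.fderiv_of_isOpen hΩ le_rfl).clm_apply contDiffOn_const

theorem inner_gradient_eq_sum (a b : EE N → ℝ) (x : EE N) :
    inner ℝ (gradient a x) (gradient b x) =
      ∑ i, fderiv ℝ a x (EuclideanSpace.single i 1) * fderiv ℝ b x (EuclideanSpace.single i 1) := by
  have key : ∀ (c : EE N → ℝ) (i : Fin N), gradient c x i = fderiv ℝ c x (EuclideanSpace.single i 1) := by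
    intro c i
    have h1 : inner ℝ (gradient c x) (EuclideanSpace.single i (1:ℝ)) =
      fderiv ℝ c x (EuclideanSpace.single i 1) := by
      simp [gradient]
    rw [← h1, EuclideanSpace.inner_single_right]
    simp
  rw [PiLp.inner_apply]
  refine Finset.sum_congr rfl fun i _ => ?_
  rw [key, key]
  simp [mul_comm]

theorem tsupport_mul_sub {Ω : Set (EE N)} {a b : EE N → ℝ} (h : tsupport a ⊆ Ω) :
    tsupport (fun x => a x * b x) ⊆ Ω := (tsupport_mul_subset_left).trans h

theorem tst_fderiv_ts {Ω : Set (EE N)} {ψ : EE N → ℝ} (_h : IsTst Ω ψ) (v : EE N) :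
    tsupport (fun x => fderiv ℝ ψ x v) ⊆ tsupport ψ := by
  refine closure_minimal ?_ (isClosed_tsupport _)
  intro x hx
  by_contra hc
  apply hx
  have : fderiv ℝ ψ x = 0 := by
    by_contra h2
    exact hc (support_fderiv_subset ℝ (Function.mem_support.mpr h2))
  simp [this]

theorem integrable_cs_mul {Ω : Set (EE N)} (hΩ : IsOpen Ω) {a b : EE N → ℝ}
    (ha : Continuous a) (hcs : HasCompactSupport a) (hts : tsupport a ⊆ Ω) (hb : ContinuousOn b Ω) :
    Integrable (fun x => a x * b x) := by
  refine Continuous.integrable_of_hasCompactSupport ?_ (hcs.mul_right)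
  exact (ha.continuousOn.mul hb).continuous_of_tsupport_subset hΩ (tsupport_mul_sub hts)

theorem ibp_one {Ω : Set (EE N)} (hΩ : IsOpen Ω) {w ψ : EE N → ℝ} (hw : ContDiffOn ℝ 1 w Ω)
    (h : IsTst Ω ψ) (v : EE N) :
    ∫ x, fderiv ℝ ψ x v * w x = - ∫ x, ψ x * fderiv ℝ w x v := by
  have hwc : ContinuousOn (fun y => fderiv ℝ w y v) Ω :=
    (contDiffOn_fderiv_app (n := 0) hΩ (by simpa using hw) v).continuousOn
  have h1 : Continuous (fun x => fderiv ℝ ψ x v) :=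
    (h.cd.continuous_fderiv one_ne_zero).clm_apply continuous_const
  have h2 : HasCompactSupport (fun x => fderiv ℝ ψ x v) :=
    HasCompactSupport.of_support_subset_isCompact h.cs ((subset_tsupport _).trans (tst_fderiv_ts h v))
  have h3 : tsupport (fun x => fderiv ℝ ψ x v) ⊆ Ω := (tst_fderiv_ts h v).trans h.ts
  have := integral_mul_fderiv_eq_neg_fderiv_mul_of_integrable (f := ψ) (g := w) (v := v)
    (μ := (volume : Measure (EE N)))
    (integrable_cs_mul hΩ h1 h2 h3 hw.continuousOn)
    (integrable_cs_mul hΩ h.cd.continuous h.cs h.ts hwc)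
    (integrable_cs_mul hΩ h.cd.continuous h.cs h.ts hw.continuousOn)
    (fun x _ => h.cd.differentiable one_ne_zero x)
    (fun x hx => (hw.differentiableOn one_ne_zero).differentiableAt (hΩ.mem_nhds (h.ts hx)))
  rw [this, neg_neg]

theorem ibp_tst {Ω : Set (EE N)} (hΩ : IsOpen Ω) {w ψ : EE N → ℝ} (hw : ContDiffOn ℝ 2 w Ω)
    (h : IsTst Ω ψ) :
    ∫ x, inner ℝ (gradient w x) (gradient ψ x) = ∫ x, (- lapl w x) * ψ x := by
  have hw1 : ∀ v, ContDiffOn ℝ 1 (fun y => fderiv ℝ w y v) Ω := fun v =>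
    contDiffOn_fderiv_app (n := 1) hΩ (by simpa [one_add_one_eq_two] using hw) v
  have hw2 : ∀ v u, ContinuousOn (fun x => fderiv ℝ (fun y => fderiv ℝ w y v) x u) Ω := fun v u =>
    (contDiffOn_fderiv_app (n := 0) hΩ (by simpa using hw1 v) u).continuousOn
  have e1 : ∀ x, inner ℝ (gradient w x) (gradient ψ x) =
      ∑ i, fderiv ℝ ψ x (EuclideanSpace.single i 1) * fderiv ℝ w x (EuclideanSpace.single i 1) := by
    intro x
    rw [real_inner_comm, inner_gradient_eq_sum]
  have e2 : ∀ x, (- lapl w x) * ψ x = ∑ i, -(ψ x * fderiv ℝ (fun y => fderiv ℝ w y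
      (EuclideanSpace.single i 1)) x (EuclideanSpace.single i 1)) := by
    intro x
    rw [Finset.sum_neg_distrib, ← Finset.mul_sum, lapl]
    ring
  simp_rw [e1, e2]
  rw [integral_finsetSum, integral_finsetSum]
  · refine Finset.sum_congr rfl fun i _ => ?_
    rw [integral_neg]
    exact ibp_one hΩ (hw1 _) h _
  · intro i _
    exact (integrable_cs_mul hΩ h.cd.continuous h.cs h.ts (hw2 _ _)).neg
  · intro i _
    refine integrable_cs_mul hΩ ((h.cd.continuous_fderiv one_ne_zero).clm_apply continuous_const)
      (HasCompactSupport.of_support_subset_isCompact h.cs ((subset_tsupport _).trans (tst_fderiv_ts h _)))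
      ((tst_fderiv_ts h _).trans h.ts) (hw1 _).continuousOn

def thE (ε t : ℝ) : ℝ := Real.smoothTransition (t / ε - 1)
def be (ε s : ℝ) : ℝ := ∫ t in (0:ℝ)..s, thE ε t

theorem thE_cont (ε : ℝ) : Continuous (thE ε) := by
  unfold thE
  exact Real.smoothTransition.continuous.comp (by fun_prop)
theorem thE_nonneg (ε t : ℝ) : 0 ≤ thE ε t := Real.smoothTransition.nonneg _
theorem thE_le_one (ε t : ℝ) : thE ε t ≤ 1 := Real.smoothTransition.le_one _
theorem thE_zero {ε t : ℝ} (hε : 0 < ε) (ht : t ≤ ε) : thE ε t = 0 := by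
  apply Real.smoothTransition.zero_of_nonpos
  have : t / ε ≤ 1 := (div_le_one hε).mpr ht
  linarith
theorem thE_one {ε t : ℝ} (hε : 0 < ε) (ht : 2 * ε ≤ t) : thE ε t = 1 := by
  apply Real.smoothTransition.one_of_one_le
  have : 2 ≤ t / ε := (le_div_iff₀ hε).mpr ht
  linarith
theorem be_hasDerivAt (ε s : ℝ) : HasDerivAt (be ε) (thE ε s) s :=
  ((thE_cont ε).integral_hasStrictDerivAt 0 s).hasDerivAt
theorem be_contDiff (ε : ℝ) : ContDiff ℝ 1 (be ε) := by
  rw [contDiff_one_iff_deriv]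
  refine ⟨fun s => (be_hasDerivAt ε s).differentiableAt, ?_⟩
  have : deriv (be ε) = thE ε := funext fun s => (be_hasDerivAt ε s).deriv
  rw [this]
  exact thE_cont ε
theorem be_nonneg {ε s : ℝ} (hs : 0 ≤ s) : 0 ≤ be ε s :=
  intervalIntegral.integral_nonneg hs fun t _ => thE_nonneg ε t
theorem be_le {ε s : ℝ} (hs : 0 ≤ s) : be ε s ≤ s := by
  have := intervalIntegral.integral_mono_on (μ := volume) hs ((thE_cont ε).intervalIntegrable 0 s)
    (continuous_const.intervalIntegrable (μ := volume) 0 s) (g := fun _ => (1:ℝ)) (fun t _ => thE_le_one ε t)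
  simpa [be] using this
theorem be_zero {ε s : ℝ} (hε : 0 < ε) (hs : s ≤ ε) : be ε s = 0 := by
  rw [be, intervalIntegral.integral_congr (g := fun _ => (0:ℝ))]
  · simp
  · intro t ht
    apply thE_zero hε
    exact ht.2.trans (max_le hε.le hs)
theorem be_ge {ε s : ℝ} (hε : 0 < ε) (hs : 0 ≤ s) : s - 2 * ε ≤ be ε s := by
  by_cases h : s ≤ 2 * ε
  · linarith [be_nonneg (ε := ε) hs]
  push Not at h
  have h1 : be ε s = be ε (2 * ε) + ∫ t in (2 * ε)..s, thE ε t :=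
    (intervalIntegral.integral_add_adjacent_intervals ((thE_cont ε).intervalIntegrable _ _)
      ((thE_cont ε).intervalIntegrable _ _)).symm
  rw [h1, intervalIntegral.integral_congr (g := fun _ => (1:ℝ))]
  · have := be_nonneg (ε := ε) (s := 2 * ε) (by positivity)
    simp
    linarith
  · intro t ht
    apply thE_one hε
    rw [uIcc_of_le h.le] at ht
    exact ht.1

theorem be_tst {Ω : Set (EE N)} (hΩ : IsOpen Ω) (hb : Bornology.IsBounded Ω) {w : EE N → ℝ}
    (hwc : ContinuousOn w (closure Ω)) (hw2 : ContDiffOn ℝ 2 w Ω)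
    (hwb : ∀ x ∈ frontier Ω, w x = 0) {ε : ℝ} (hε : 0 < ε) :
    IsTst Ω (Ω.indicator fun x => be ε (w x)) := by
  set K : Set (EE N) := closure Ω ∩ w ⁻¹' Ici ε with hK
  have hKc : IsCompact K := (hb.isCompact_closure).of_isClosed_subset
    (hwc.preimage_isClosed_of_isClosed isClosed_closure isClosed_Ici) inter_subset_left
  have hKΩ : K ⊆ Ω := by
    rintro x ⟨hx, hx2⟩
    by_contra hc
    have : x ∈ frontier Ω := by rw [hΩ.frontier_eq]; exact ⟨hx, hc⟩
    rw [mem_preimage, hwb x this] at hx2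
    exact absurd hx2 (not_le.mpr hε)
  have hz : ∀ x ∉ K, Ω.indicator (fun x => be ε (w x)) x = 0 := by
    intro x hx
    by_cases hxΩ : x ∈ Ω
    · rw [indicator_of_mem hxΩ]
      apply be_zero hε
      by_contra hc
      exact hx ⟨subset_closure hxΩ, (not_le.mp hc).le⟩
    · rw [indicator_of_notMem hxΩ]
  have hts : tsupport (Ω.indicator fun x => be ε (w x)) ⊆ K := by
    refine closure_minimal ?_ hKc.isClosed
    intro x hx
    by_contra hc
    exact hx (hz x hc)
  refine ⟨?_, HasCompactSupport.intro hKc fun x hx => hz x hx, hts.trans hKΩ⟩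
  rw [contDiff_iff_contDiffAt]
  intro x
  by_cases hx : x ∈ Ω
  · have h1 : ContDiffAt ℝ 1 (fun x => be ε (w x)) x :=
      (be_contDiff ε).contDiffAt.comp x ((hw2.contDiffAt (hΩ.mem_nhds hx)).of_le (by norm_num))
    refine h1.congr_of_eventuallyEq ?_
    filter_upwards [hΩ.mem_nhds hx] with y hy
    rw [indicator_of_mem hy]
  · have : (Ω.indicator fun x => be ε (w x)) =ᶠ[𝓝 x] fun _ => 0 := by
      filter_upwards [hKc.isClosed.isOpen_compl.mem_nhds (fun h => hx (hKΩ h) : x ∈ Kᶜ)] with y hy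
      exact hz y hy
    exact contDiffAt_const.congr_of_eventuallyEq this

theorem be_grad {Ω : Set (EE N)} (hΩ : IsOpen Ω) (hb : Bornology.IsBounded Ω) {w : EE N → ℝ}
    (hwc : ContinuousOn w (closure Ω)) (hw2 : ContDiffOn ℝ 2 w Ω)
    (hwb : ∀ x ∈ frontier Ω, w x = 0) {ε : ℝ} (hε : 0 < ε) (x : EE N) :
    gradient (Ω.indicator fun x => be ε (w x)) x =
      Ω.indicator (fun x => thE ε (w x) • gradient w x) x := by
  by_cases hx : x ∈ Ω
  · rw [indicator_of_mem hx]
    have h1 : (Ω.indicator fun x => be ε (w x)) =ᶠ[𝓝 x] (fun x => be ε (w x)) := by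
      filter_upwards [hΩ.mem_nhds hx] with y hy
      rw [indicator_of_mem hy]
    have h2 : HasFDerivAt w (fderiv ℝ w x) x :=
      ((hw2.contDiffAt (hΩ.mem_nhds hx)).differentiableAt two_ne_zero).hasFDerivAt
    have h3 : HasFDerivAt (fun x => be ε (w x)) (thE ε (w x) • fderiv ℝ w x) x :=
      (be_hasDerivAt ε (w x)).comp_hasFDerivAt x h2
    simp only [gradient]
    rw [h1.fderiv_eq, h3.fderiv, map_smul]
  · rw [indicator_of_notMem hx]
    have h := be_tst hΩ hb hwc hw2 hwb hε
    have : fderiv ℝ (Ω.indicator fun x => be ε (w x)) x = 0 := by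
      by_contra hc
      exact hx (h.ts (support_fderiv_subset ℝ (Function.mem_support.mpr hc)))
    simp [gradient, this]

theorem toLp_tendsto_dom {F : Type*} [NormedAddCommGroup F]
    {g : ℕ → EE N → F} {f : EE N → F} (hg : ∀ n, MemLp (g n) 2 (volume : Measure (EE N)))
    (hf : MemLp f 2 (volume : Measure (EE N))) (hle : ∀ n x, ‖g n x‖ ≤ ‖f x‖)
    (hlim : ∀ x, Tendsto (fun n => g n x) atTop (𝓝 (f x))) :
    Tendsto (fun n => (hg n).toLp) atTop (𝓝 (hf.toLp f)) := by
  have key : Tendsto (fun n => ∫⁻ x, ‖(g n - f) x‖ₑ ^ 2) atTop (𝓝 (∫⁻ _ : EE N, 0)) := by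
    refine tendsto_lintegral_of_dominated_convergence' (fun x => (2 * ‖f x‖ₑ) ^ 2) ?_ ?_ ?_ ?_
    · exact fun n => (((hg n).1.sub hf.1).enorm).pow_const 2
    · refine fun n => Eventually.of_forall fun x => ?_
      have : ‖(g n - f) x‖ₑ ≤ 2 * ‖f x‖ₑ := by
        refine (enorm_sub_le).trans ?_
        rw [two_mul]
        gcongr
        exact enorm_le_iff_norm_le.mpr (hle n x)
      exact pow_le_pow_left' this 2
    · have h2 := ofReal_norm_sq_toLp hf
      simp_rw [mul_pow]
      rw [lintegral_const_mul' _ _ (by norm_num), ← h2]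
      exact ENNReal.mul_ne_top (by norm_num) ENNReal.ofReal_ne_top
    · refine Eventually.of_forall fun x => ?_
      have h1 : Tendsto (fun n => (g n - f) x) atTop (𝓝 0) := by
        have := (hlim x).sub_const (f x)
        simpa using this
      have h2 := ENNReal.Tendsto.pow (n := 2) h1.enorm
      simpa using h2
  rw [lintegral_zero] at key
  rw [tendsto_iff_norm_sub_tendsto_zero]
  have h1 : ∀ n, ENNReal.ofReal (‖(hg n).toLp - hf.toLp f‖ ^ 2) = ∫⁻ x, ‖(g n - f) x‖ₑ ^ 2 := by
    intro n
    rw [← MemLp.toLp_sub, ofReal_norm_sq_toLp]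
  simp_rw [← h1] at key
  have h2 : Tendsto (fun n => ‖(hg n).toLp - hf.toLp f‖ ^ 2) atTop (𝓝 0) := by
    have := (ENNReal.tendsto_toReal ENNReal.zero_ne_top).comp key
    simpa [Function.comp_def, ENNReal.toReal_ofReal] using this
  have h3 := (Real.continuous_sqrt.tendsto 0).comp h2
  simpa [Function.comp_def, Real.sqrt_sq] using h3

theorem bdd_on_closure {Ω : Set (EE N)} (hb : Bornology.IsBounded Ω) {h : EE N → ℝ}
    (hc : ContinuousOn h (closure Ω)) : ∃ K : ℝ, 0 ≤ K ∧ ∀ x ∈ Ω, |h x| ≤ K := by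
  obtain ⟨K, hK⟩ := hb.isCompact_closure.exists_bound_of_continuousOn hc
  refine ⟨max K 0, le_max_right _ _, fun x hx => ?_⟩
  exact (hK x (subset_closure hx)).trans (le_max_left _ _)

theorem memLp_ind {F : Type*} [NormedAddCommGroup F] {Ω : Set (EE N)} (hΩ : IsOpen Ω)
    (hb : Bornology.IsBounded Ω) {h : EE N → F}
    (hc : ContinuousOn h Ω) {K : ℝ} (hK : ∀ x ∈ Ω, ‖h x‖ ≤ K) (p : ℝ≥0∞) [Fact (1 ≤ p)] :
    MemLp (Ω.indicator h) p (volume : Measure (EE N)) := by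
  rw [memLp_indicator_iff_restrict hΩ.measurableSet]
  have : IsFiniteMeasure (volume.restrict Ω) :=
    ⟨by rw [Measure.restrict_apply_univ]; exact hb.measure_lt_top⟩
  refine MemLp.of_bound (hc.aestronglyMeasurable hΩ.measurableSet) K ?_
  exact (ae_restrict_iff' hΩ.measurableSet).mpr (Eventually.of_forall hK)

theorem grad_contOn {Ω : Set (EE N)} (hΩ : IsOpen Ω) {w : EE N → ℝ} (hw : ContDiffOn ℝ 1 w Ω) :
    ContinuousOn (gradient w) Ω :=
  (InnerProductSpace.toDual ℝ (EE N)).symm.continuous.comp_continuousOn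
    (hw.continuousOn_fderiv_of_isOpen hΩ le_rfl)

theorem classical_mem {Ω : Set (EE N)} (hΩ : IsOpen Ω) (hb : Bornology.IsBounded Ω) {w h : EE N → ℝ}
    (hwc : ContinuousOn w (closure Ω)) (hw2 : ContDiffOn ℝ 2 w Ω) (hwn : ∀ x ∈ Ω, 0 ≤ w x)
    (hwb : ∀ x ∈ frontier Ω, w x = 0) (hhc : ContinuousOn h (closure Ω))
    (heq : ∀ x ∈ Ω, -lapl w x = h x) :
    ∃ W ∈ VV Ω, ∃ H : L2R N, (fstL N W =ᵐ[volume] Ω.indicator w) ∧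
      (sndL N W =ᵐ[volume] Ω.indicator (gradient w)) ∧ (H =ᵐ[volume] Ω.indicator h) ∧
      ∀ z ∈ VV Ω, inner ℝ (sndL N W) (sndL N z) = inner ℝ H (fstL N z) := by
  obtain ⟨Kw, hKw0, hKw⟩ := bdd_on_closure hb hwc
  obtain ⟨Kh, hKh0, hKh⟩ := bdd_on_closure hb hhc
  have mw : MemLp (Ω.indicator w) 2 (volume : Measure (EE N)) :=
    memLp_ind hΩ hb (hwc.mono subset_closure) hKw 2
  have mh : MemLp (Ω.indicator h) 2 (volume : Measure (EE N)) :=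
    memLp_ind hΩ hb (hhc.mono subset_closure) hKh 2
  have hw1 : ContDiffOn ℝ 1 w Ω := hw2.of_le (by norm_num)
  have hgm : AEStronglyMeasurable (Ω.indicator (gradient w)) (volume : Measure (EE N)) :=
    (aestronglyMeasurable_indicator_iff hΩ.measurableSet).mpr
      ((grad_contOn hΩ hw1).aestronglyMeasurable hΩ.measurableSet)
  let ε : ℕ → ℝ := fun n => 1 / ((n:ℝ) + 1)
  have hε : ∀ n, 0 < ε n := fun n => by positivity
  have hεlim : Tendsto ε atTop (𝓝 0) := tendsto_one_div_add_atTop_nhds_zero_nat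
  have ht := fun n => be_tst hΩ hb hwc hw2 hwb (hε n)
  have hgr := fun n => be_grad hΩ hb hwc hw2 hwb (hε n)
  -- pointwise limits
  have hlim0 : ∀ x, Tendsto (fun n => Ω.indicator (fun x => be (ε n) (w x)) x) atTop
      (𝓝 (Ω.indicator w x)) := by
    intro x
    by_cases hx : x ∈ Ω
    · simp only [indicator_of_mem hx]
      refine tendsto_of_tendsto_of_tendsto_of_le_of_le (g := fun n => w x - 2 * ε n) ?_
        tendsto_const_nhds (fun n => be_ge (hε n) (hwn x hx)) (fun n => be_le (hwn x hx))
      simpa using (hεlim.const_mul 2).const_sub (w x)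
    · simp [hx]
  have hle0 : ∀ n x, ‖Ω.indicator (fun x => be (ε n) (w x)) x‖ ≤ ‖Ω.indicator w x‖ := by
    intro n x
    by_cases hx : x ∈ Ω
    · simp only [indicator_of_mem hx, Real.norm_eq_abs]
      rw [abs_of_nonneg (be_nonneg (hwn x hx)), abs_of_nonneg (hwn x hx)]
      exact be_le (hwn x hx)
    · simp [hx]
  have hlim1 : ∀ x, Tendsto (fun n => gradient (Ω.indicator (fun x => be (ε n) (w x))) x) atTop
      (𝓝 (Ω.indicator (gradient w) x)) := by
    intro x
    simp_rw [hgr]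
    by_cases hx : x ∈ Ω
    · simp only [indicator_of_mem hx]
      rcases (hwn x hx).eq_or_lt with h0 | h0
      · have hmin : IsLocalMin w x := by
          filter_upwards [hΩ.mem_nhds hx] with y hy
          rw [← h0]
          exact hwn y hy
        have : gradient w x = 0 := by simp [gradient, hmin.fderiv_eq_zero]
        simp [this]
      · have hev : ∀ᶠ n in atTop, thE (ε n) (w x) • gradient w x = gradient w x := by
          have := (hεlim.const_mul 2).eventually_lt_const (u := w x) (by simpa using h0)
          filter_upwards [this] with n hn
          rw [thE_one (hε n) hn.le, one_smul]
        exact tendsto_const_nhds.congr' (hev.mono fun n hn => hn.symm)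
    · simp [hx]
  have hle1 : ∀ n x, ‖gradient (Ω.indicator (fun x => be (ε n) (w x))) x‖ ≤
      ‖Ω.indicator (gradient w) x‖ := by
    intro n x
    rw [hgr]
    by_cases hx : x ∈ Ω
    · simp only [indicator_of_mem hx]
      rw [norm_smul, Real.norm_eq_abs, abs_of_nonneg (thE_nonneg _ _)]
      exact mul_le_of_le_one_left (norm_nonneg _) (thE_le_one _ _)
    · simp [hx]
  -- energy bound
  have hvol : volume Ω ≠ ⊤ := hb.measure_lt_top.ne
  have hen : ∀ n, ∫⁻ x, ‖gradient (Ω.indicator (fun x => be (ε n) (w x))) x‖ₑ ^ 2 ≤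
      ENNReal.ofReal (Kh * Kw * volume.real Ω) := by
    intro n
    have hI := ibp_tst hΩ hw2 (ht n)
    have hint : Integrable (fun x => inner ℝ (gradient w x)
        (gradient (Ω.indicator (fun x => be (ε n) (w x))) x)) := by
      refine Continuous.integrable_of_hasCompactSupport ?_ ?_
      · refine ContinuousOn.continuous_of_tsupport_subset (s := Ω)
          ((grad_contOn hΩ hw1).inner (ht n).cont_grad.continuousOn) hΩ ?_
        refine subset_trans ?_ (ht n).ts
        refine closure_minimal ?_ (isClosed_tsupport _)
        intro x hx
        by_contra hc
        apply hx
        have : fderiv ℝ (Ω.indicator (fun x => be (ε n) (w x))) x = 0 := by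
          by_contra h2
          exact hc (support_fderiv_subset ℝ (Function.mem_support.mpr h2))
        simp [gradient, this]
      · refine HasCompactSupport.mono (ht n).cs_grad ?_
        intro x hx hc
        apply hx
        simp [hc]
    have h1 : ∀ x, ‖gradient (Ω.indicator (fun x => be (ε n) (w x))) x‖ₑ ^ 2 ≤
        ENNReal.ofReal (inner ℝ (gradient w x) (gradient (Ω.indicator (fun x => be (ε n) (w x))) x)) := by
      intro x
      rw [← ofReal_norm, ← ENNReal.ofReal_pow (norm_nonneg _)]
      apply ENNReal.ofReal_le_ofReal
      rw [hgr]
      by_cases hx : x ∈ Ω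
      · simp only [indicator_of_mem hx]
        rw [inner_smul_right, real_inner_self_eq_norm_sq, norm_smul, Real.norm_eq_abs,
          abs_of_nonneg (thE_nonneg _ _), mul_pow]
        have a := thE_nonneg (ε n) (w x)
        have b := thE_le_one (ε n) (w x)
        have : thE (ε n) (w x) ^ 2 ≤ thE (ε n) (w x) := by nlinarith
        gcongr
      · simp [hx]
    refine (lintegral_mono h1).trans ?_
    rw [← ofReal_integral_eq_lintegral_ofReal hint, hI]
    · apply ENNReal.ofReal_le_ofReal
      have e : ∀ x, -lapl w x * Ω.indicator (fun x => be (ε n) (w x)) x =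
          Ω.indicator (fun x => h x * be (ε n) (w x)) x := by
        intro x
        by_cases hx : x ∈ Ω
        · simp [hx, ← heq x hx]
        · simp [hx]
      simp_rw [e]
      rw [integral_indicator hΩ.measurableSet]
      refine (le_abs_self _).trans ?_
      rw [← Real.norm_eq_abs]
      refine norm_setIntegral_le_of_norm_le_const hvol.lt_top (fun x hx => ?_)
      rw [norm_mul]
      refine mul_le_mul (hKh x hx) ?_ (norm_nonneg _) hKh0
      have := hle0 n x
      simp only [indicator_of_mem hx] at this
      exact this.trans (hKw x hx)
    · refine Eventually.of_forall fun x => ?_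
      change 0 ≤ _
      beta_reduce
      rw [hgr]
      by_cases hx : x ∈ Ω
      · simp only [indicator_of_mem hx]
        rw [inner_smul_right, real_inner_self_eq_norm_sq]
        exact mul_nonneg (thE_nonneg _ _) (sq_nonneg _)
      · simp [hx]
  have mg : MemLp (Ω.indicator (gradient w)) 2 (volume : Measure (EE N)) := by
    refine ⟨hgm, ?_⟩
    rw [eLpNorm_lt_top_iff_lintegral_rpow_enorm_lt_top (by norm_num) (by norm_num)]
    simp only [ENNReal.toReal_ofNat, ENNReal.rpow_ofNat]
    have hF : ∫⁻ x, liminf (fun n => ‖gradient (Ω.indicator (fun x => be (ε n) (w x))) x‖ₑ ^ 2) atTop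
      ≤ liminf (fun n => ∫⁻ x, ‖gradient (Ω.indicator (fun x => be (ε n) (w x))) x‖ₑ ^ 2) atTop :=
      lintegral_liminf_le fun n => ((ht n).cont_grad.enorm.measurable.pow_const 2)
    have e : ∀ x, liminf (fun n => ‖gradient (Ω.indicator (fun x => be (ε n) (w x))) x‖ₑ ^ 2) atTop
        = ‖Ω.indicator (gradient w) x‖ₑ ^ 2 := fun x =>
      (ENNReal.Tendsto.pow (n := 2) (hlim1 x).enorm).liminf_eq
    simp_rw [e] at hF
    refine hF.trans_lt (lt_of_le_of_lt ?_ (ENNReal.ofReal_lt_top (r := Kh * Kw * volume.real Ω)))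
    refine liminf_le_of_le (by isBoundedDefault) ?_
    intro b hb'
    obtain ⟨n, hn⟩ := hb'.exists
    exact hn.trans (hen n)
  let W : XX N := WithLp.toLp 2 (mw.toLp _, mg.toLp _)
  have hW : W ∈ VV Ω := by
    have h1 := toLp_tendsto_dom (fun n => (ht n).memLp) mw hle0 hlim0
    have h2 := toLp_tendsto_dom (fun n => (ht n).memLp_grad) mg hle1 hlim1
    have h3 : Tendsto (fun n => tstEl (ht n)) atTop (𝓝 W) :=
      ((WithLp.prod_continuous_toLp 2 _ _).tendsto _).comp (h1.prodMk_nhds h2)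
    exact (Submodule.isClosed_topologicalClosure (V0 Ω)).mem_of_tendsto h3
      (Eventually.of_forall fun n => tstEl_mem (ht n))
  refine ⟨W, hW, mh.toLp _, mw.coeFn_toLp, mg.coeFn_toLp, mh.coeFn_toLp, ?_⟩
  refine VV_induct ?_ ?_
  · exact isClosed_eq (by fun_prop) (by fun_prop)
  · intro ψ hψ
    have hz : ∀ x ∉ Ω, ψ x = 0 := fun x hx => image_eq_zero_of_notMem_tsupport fun h => hx (hψ.ts h)
    have hz2 : ∀ x ∉ Ω, gradient ψ x = 0 := by
      intro x hx
      have : fderiv ℝ ψ x = 0 := by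
        by_contra h2
        exact hx (hψ.ts (support_fderiv_subset ℝ (Function.mem_support.mpr h2)))
      simp [gradient, this]
    have hI := ibp_tst hΩ hw2 hψ
    rw [fstL_tstEl, sndL_tstEl, L2.inner_def, L2_inner]
    have e1 : ∫ x, inner ℝ ((sndL N W) x) ((hψ.memLp_grad.toLp (gradient ψ)) x) =
        ∫ x, inner ℝ (gradient w x) (gradient ψ x) := by
      apply integral_congr_ae
      have a1 : (sndL N W) =ᵐ[volume] _ := mg.coeFn_toLp
      filter_upwards [a1, hψ.memLp_grad.coeFn_toLp] with x h1 h2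
      rw [h1, h2]
      by_cases hx : x ∈ Ω
      · simp [hx]
      · simp [hz2 x hx]
    have e2 : ∫ x, (mh.toLp (Ω.indicator h)) x * (hψ.memLp.toLp ψ) x = ∫ x, (- lapl w x) * ψ x := by
      apply integral_congr_ae
      filter_upwards [mh.coeFn_toLp, hψ.memLp.coeFn_toLp] with x h1 h2
      rw [h1, h2]
      by_cases hx : x ∈ Ω
      · simp [hx, ← heq x hx]
      · simp [hz x hx]
    rw [e1, e2, hI]

end Classical

section Positivity
open Filter Topology
variable {N : ℕ}

def aE (ε s : ℝ) : ℝ := Real.sqrt (s ^ 2 + ε ^ 2) - ε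

theorem aE_hasDerivAt {ε : ℝ} (hε : 0 < ε) (s : ℝ) :
    HasDerivAt (aE ε) (s / Real.sqrt (s ^ 2 + ε ^ 2)) s := by
  have hp : 0 < s ^ 2 + ε ^ 2 := by positivity
  have h := (((hasDerivAt_pow 2 s).add_const (ε ^ 2)).sqrt hp.ne').sub_const ε
  have e : s / Real.sqrt (s ^ 2 + ε ^ 2) =
    (((2:ℕ):ℝ) * s ^ (2 - 1)) / (2 * Real.sqrt (s ^ 2 + ε ^ 2)) := by
    have := Real.sqrt_pos.mpr hp
    field_simp
    simp [mul_comm]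
  rw [e]
  exact h

theorem aE_contDiff {ε : ℝ} (hε : 0 < ε) : ContDiff ℝ 1 (aE ε) := by
  unfold aE
  refine ContDiff.sub (ContDiff.sqrt (by fun_prop) fun s => ?_) contDiff_const
  positivity

theorem aE_zero {ε : ℝ} (hε : 0 < ε) : aE ε 0 = 0 := by
  simp [aE, Real.sqrt_sq hε.le]

theorem aE_nonneg {ε : ℝ} (hε : 0 < ε) (s : ℝ) : 0 ≤ aE ε s := by
  have : ε ≤ Real.sqrt (s ^ 2 + ε ^ 2) := Real.le_sqrt_of_sq_le (by nlinarith)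
  unfold aE; linarith

theorem aE_ge {ε : ℝ} (s : ℝ) : s - ε ≤ aE ε s := by
  have : s ≤ Real.sqrt (s ^ 2 + ε ^ 2) := Real.le_sqrt_of_sq_le (by nlinarith)
  unfold aE; linarith

theorem aE_deriv_le {ε : ℝ} (hε : 0 < ε) (s : ℝ) : |s / Real.sqrt (s ^ 2 + ε ^ 2)| ≤ 1 := by
  have hp : 0 < Real.sqrt (s ^ 2 + ε ^ 2) := Real.sqrt_pos.mpr (by positivity)
  rw [abs_div, abs_of_pos hp, div_le_one hp]
  exact Real.abs_le_sqrt (by nlinarith)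

theorem aE_tst {Ω : Set (EE N)} {ψ : EE N → ℝ} (h : IsTst Ω ψ) {ε : ℝ} (hε : 0 < ε) :
    IsTst Ω (fun x => aE ε (ψ x)) := by
  refine ⟨(aE_contDiff hε).comp h.cd, h.cs.comp_left (aE_zero hε), ?_⟩
  refine subset_trans (closure_mono ?_) h.ts
  intro x hx hc
  apply hx
  simp [hc, aE_zero hε]

theorem aE_grad_le {Ω : Set (EE N)} {ψ : EE N → ℝ} (h : IsTst Ω ψ) {ε : ℝ} (hε : 0 < ε) (x : EE N) :
    ‖gradient (fun x => aE ε (ψ x)) x‖ ≤ ‖gradient ψ x‖ := by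
  rw [norm_gradient_eq, norm_gradient_eq]
  have h1 : HasFDerivAt (fun x => aE ε (ψ x)) ((ψ x / Real.sqrt (ψ x ^ 2 + ε ^ 2)) • fderiv ℝ ψ x) x :=
    (aE_hasDerivAt hε (ψ x)).comp_hasFDerivAt x (h.cd.differentiable one_ne_zero x).hasFDerivAt
  rw [h1.fderiv, norm_smul, Real.norm_eq_abs]
  exact mul_le_of_le_one_left (norm_nonneg _) (aE_deriv_le hε _)

theorem toLp_norm_mono {F : Type*} [NormedAddCommGroup F] {f g : EE N → F}
    (hf : MemLp f 2 (volume : Measure (EE N))) (hg : MemLp g 2 (volume : Measure (EE N)))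
    (h : ∀ x, ‖f x‖ ≤ ‖g x‖) : ‖hf.toLp f‖ ≤ ‖hg.toLp g‖ := by
  rw [Lp.norm_toLp, Lp.norm_toLp]
  exact ENNReal.toReal_mono hg.2.ne (eLpNorm_mono h)

theorem weak_pos (hN : 1 ≤ N) {Ω : Set (EE N)} (hΩ : IsOpen Ω) (hb : Bornology.IsBounded Ω)
    (v : XX N) (hv : v ∈ VV Ω) (h : L2R N) (hh : ∀ᵐ x, x ∈ Ω → 0 ≤ h x)
    (heq : ∀ z ∈ VV Ω, inner ℝ (sndL N v) (sndL N z) = inner ℝ h (fstL N z)) :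
    ∀ᵐ x, 0 ≤ fstL N v x := by
  obtain ⟨C, hC, hP⟩ := poincare hN hb
  have hvol : volume Ω ≠ ⊤ := hb.measure_lt_top.ne
  set one : L2R N := indicatorConstLp 2 hΩ.measurableSet hvol (1:ℝ) with hone
  have hid : ∀ z ∈ VV Ω, ‖sndL N (z - v)‖ ^ 2 =
      ‖sndL N z‖ ^ 2 - 2 * inner ℝ h (fstL N z) + ‖sndL N v‖ ^ 2 := by
    intro z hz
    rw [map_sub, norm_sub_sq_real, real_inner_comm, heq z hz]
  -- key comparison
  have hcmp : ∀ (ψ : EE N → ℝ) (hψ : IsTst Ω ψ) (ε : ℝ) (hε : 0 < ε),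
      ‖sndL N (tstEl (aE_tst hψ hε) - v)‖ ^ 2 ≤ ‖sndL N (tstEl hψ - v)‖ ^ 2 +
        2 * (ε * inner ℝ h one) := by
    intro ψ hψ ε hε
    rw [hid _ (tstEl_mem _), hid _ (tstEl_mem _)]
    have h1 : ‖sndL N (tstEl (aE_tst hψ hε))‖ ≤ ‖sndL N (tstEl hψ)‖ := by
      rw [sndL_tstEl, sndL_tstEl]
      exact toLp_norm_mono _ _ (aE_grad_le hψ hε)
    have h2 : ‖sndL N (tstEl (aE_tst hψ hε))‖ ^ 2 ≤ ‖sndL N (tstEl hψ)‖ ^ 2 :=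
      pow_le_pow_left₀ (norm_nonneg _) h1 2
    have h3 : inner ℝ h (fstL N (tstEl hψ)) - inner ℝ h (fstL N (tstEl (aE_tst hψ hε))) ≤
        ε * inner ℝ h one := by
      rw [← inner_sub_right, ← inner_smul_right, L2_inner, L2_inner]
      have hint : ∀ a : L2R N, Integrable (fun x => h x * a x) := by
        intro a
        have := L2.integrable_inner (𝕜 := ℝ) a h
        simpa using this
      refine integral_mono_ae (hint _) (hint _) ?_
      filter_upwards [hh, Lp.coeFn_sub (fstL N (tstEl hψ)) (fstL N (tstEl (aE_tst hψ hε))),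
        hψ.memLp.coeFn_toLp, (aE_tst hψ hε).memLp.coeFn_toLp, Lp.coeFn_smul ε one,
        indicatorConstLp_coeFn (p := 2) (hs := hΩ.measurableSet) (hμs := hvol) (c := (1:ℝ))]
        with x a1 a2 a3 a4 a5 a6
      rw [fstL_tstEl, fstL_tstEl] at a2
      rw [fstL_tstEl, fstL_tstEl]
      rw [a2, a5, Pi.sub_apply, Pi.smul_apply, a3, a4, hone, a6]
      by_cases hx : x ∈ Ω
      · have := a1 hx
        rw [indicator_of_mem hx]
        refine mul_le_mul_of_nonneg_left ?_ this
        have := aE_ge (ε := ε) (ψ x)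
        simp only [smul_eq_mul, mul_one]
        linarith
      · have : ψ x = 0 := image_eq_zero_of_notMem_tsupport fun h => hx (hψ.ts h)
        simp [hx, this, aE_zero hε]
    linarith
  have hcl : fstL N v ∈ closure {g : L2R N | 0 ≤ g} := by
    rw [Metric.mem_closure_iff]
    intro δ hδ
    set η : ℝ := (δ / (2 * C)) ^ 2 with hη
    have hηp : 0 < η := by positivity
    -- approximating test function
    have hvc : v ∈ closure (V0 Ω : Set (XX N)) := hv
    obtain ⟨_, ⟨ψ, hψ, rfl⟩, hψd⟩ := Metric.mem_closure_iff.mp hvc (Real.sqrt (η / 2)) (by positivity)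
    set M : ℝ := |inner ℝ h one| with hM
    set ε : ℝ := η / (4 * (M + 1)) with hεd
    have hM0 : 0 ≤ M := abs_nonneg _
    have hε : 0 < ε := by positivity
    refine ⟨fstL N (tstEl (aE_tst hψ hε)), ?_, ?_⟩
    · change 0 ≤ fstL N (tstEl (aE_tst hψ hε))
      rw [← Lp.coeFn_nonneg, fstL_tstEl]
      filter_upwards [(aE_tst hψ hε).memLp.coeFn_toLp] with x hx
      rw [hx]
      exact aE_nonneg hε _
    · rw [dist_comm, dist_eq_norm, ← map_sub]
      have h1 := hP _ ((VV Ω).sub_mem (tstEl_mem (aE_tst hψ hε)) hv)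
      have h2 := hcmp ψ hψ ε hε
      have h3 : ‖sndL N (tstEl hψ - v)‖ ^ 2 ≤ η / 2 := by
        have : ‖sndL N (tstEl hψ - v)‖ ≤ Real.sqrt (η / 2) := by
          refine (norm_sndL_le _).trans ?_
          rw [dist_comm, dist_eq_norm] at hψd
          exact hψd.le
        calc _ ≤ (Real.sqrt (η / 2)) ^ 2 := pow_le_pow_left₀ (norm_nonneg _) this 2
          _ = _ := Real.sq_sqrt (by positivity)
      have h4 : ε * inner ℝ h one ≤ η / 4 := by
        calc ε * inner ℝ h one ≤ ε * (M + 1) := by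
              refine mul_le_mul_of_nonneg_left ?_ hε.le
              linarith [le_abs_self (inner ℝ h one)]
          _ = η / 4 := by rw [hεd]; field_simp
      have h5 : ‖sndL N (tstEl (aE_tst hψ hε) - v)‖ ^ 2 ≤ (δ / (2 * C)) ^ 2 := by
        rw [← hη]; linarith
      have h6 := abs_le_of_sq_le_sq' h5 (by positivity) |>.2
      calc _ ≤ _ := h1
        _ ≤ C * (δ / (2 * C)) := by gcongr
        _ = δ / 2 := by field_simp
        _ < δ := by linarith
  have hcl2 : IsClosed {g : L2R N | 0 ≤ g} := isClosed_Ici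
  rw [hcl2.closure_eq] at hcl
  exact (Lp.coeFn_nonneg _).mpr hcl

/-- weak integration by parts -/
theorem weak_ibp {Ω : Set (EE N)} {χ : EE N → ℝ} (hχ : ContDiff ℝ 1 χ) (hcs : HasCompactSupport χ)
    (e : EE N) : ∀ x ∈ VV Ω,
    ∫ y, inner ℝ (sndL N x y) e * χ y = - ∫ y, fstL N x y * fderiv ℝ χ y e := by
  have k1 : IsTst univ χ := ⟨hχ, hcs, subset_univ _⟩
  have m1 : MemLp (fun y => χ y • e) 2 (volume : Measure (EE N)) :=
    Continuous.memLp_of_hasCompactSupport (by have := hχ.continuous; fun_prop)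
      (hcs.smul_right (f' := fun _ => e))
  have m2 : MemLp (fun y => fderiv ℝ χ y e) 2 (volume : Measure (EE N)) :=
    Continuous.memLp_of_hasCompactSupport
      ((hχ.continuous_fderiv one_ne_zero).clm_apply continuous_const)
      (HasCompactSupport.of_support_subset_isCompact hcs
        ((subset_tsupport _).trans (tst_fderiv_ts k1 e)))
  have c1 : ∀ x : XX N, ∫ y, inner ℝ (sndL N x y) e * χ y = inner ℝ (sndL N x) (m1.toLp _) := by
    intro x
    rw [L2.inner_def]
    apply integral_congr_ae
    filter_upwards [m1.coeFn_toLp] with y hy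
    rw [hy, inner_smul_right, mul_comm]
  have c2 : ∀ x : XX N, ∫ y, fstL N x y * fderiv ℝ χ y e = inner ℝ (fstL N x) (m2.toLp _) := by
    intro x
    rw [L2_inner]
    apply integral_congr_ae
    filter_upwards [m2.coeFn_toLp] with y hy
    rw [hy]
  refine VV_induct ?_ ?_
  · simp_rw [c1, c2]
    exact isClosed_eq (by fun_prop) (by fun_prop)
  · intro ψ hψ
    have k2 : IsTst univ ψ := ⟨hψ.cd, hψ.cs, subset_univ _⟩
    have := ibp_one isOpen_univ (hχ.contDiffOn) k2 e
    rw [fstL_tstEl, sndL_tstEl]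
    have e1 : ∫ y, inner ℝ ((hψ.memLp_grad.toLp (gradient ψ)) y) e * χ y = ∫ y, fderiv ℝ ψ y e * χ y := by
      apply integral_congr_ae
      filter_upwards [hψ.memLp_grad.coeFn_toLp] with y hy
      rw [hy]
      simp [gradient]
    have e2 : ∫ y, (hψ.memLp.toLp ψ) y * fderiv ℝ χ y e = ∫ y, ψ y * fderiv ℝ χ y e := by
      apply integral_congr_ae
      filter_upwards [hψ.memLp.coeFn_toLp] with y hy
      rw [hy]
    rw [e1, e2, this]

end Positivity

section Kernel
open Filter Topology
open scoped ContDiff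
variable {N : ℕ}

/-- primitive of the glue function -/
def Gp (t : ℝ) : ℝ := ∫ a in (0:ℝ)..t, expNegInvGlue a

theorem glue_cont : Continuous expNegInvGlue := (expNegInvGlue.contDiff (n := 0)).continuous

theorem Gp_hasDerivAt (t : ℝ) : HasDerivAt Gp (expNegInvGlue t) t :=
  (glue_cont.integral_hasStrictDerivAt 0 t).hasDerivAt

theorem Gp_contDiff : ContDiff ℝ ∞ Gp := by
  rw [contDiff_infty_iff_deriv]
  refine ⟨fun s => (Gp_hasDerivAt s).differentiableAt, ?_⟩
  have : deriv Gp = expNegInvGlue := funext fun s => (Gp_hasDerivAt s).deriv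
  rw [this]
  exact expNegInvGlue.contDiff

theorem Gp_zero {t : ℝ} (ht : t ≤ 0) : Gp t = 0 := by
  rw [Gp, intervalIntegral.integral_congr (g := fun _ => (0:ℝ))]
  · simp
  · intro a ha
    apply expNegInvGlue.zero_of_nonpos
    exact ha.2.trans (max_le le_rfl ht)

theorem Gp_nonneg (t : ℝ) : 0 ≤ Gp t := by
  rcases le_total t 0 with h | h
  · rw [Gp_zero h]
  · exact intervalIntegral.integral_nonneg h fun a _ => expNegInvGlue.nonneg a

def rk (y : EE N) : ℝ := expNegInvGlue (1 - ‖y‖ ^ 2)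
def sk (y : EE N) : ℝ := (1 / 2) * Gp (1 - ‖y‖ ^ 2)

theorem rk_contDiff : ContDiff ℝ ∞ (rk (N := N)) :=
  expNegInvGlue.contDiff.comp (contDiff_const.sub (contDiff_norm_sq ℝ))
theorem sk_contDiff : ContDiff ℝ ∞ (sk (N := N)) :=
  contDiff_const.mul (Gp_contDiff.comp (contDiff_const.sub (contDiff_norm_sq ℝ)))

theorem out_aux {y : EE N} (hy : y ∉ Metric.closedBall (0 : EE N) 1) : 1 - ‖y‖ ^ 2 ≤ 0 := by
  rw [mem_closedBall_zero_iff, not_le] at hy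
  nlinarith

theorem rk_cs : HasCompactSupport (rk (N := N)) :=
  HasCompactSupport.intro (isCompact_closedBall 0 1) fun y hy =>
    expNegInvGlue.zero_of_nonpos (out_aux hy)
theorem sk_zero {y : EE N} (hy : y ∉ Metric.closedBall (0 : EE N) 1) : sk y = 0 := by
  rw [sk, Gp_zero (out_aux hy), mul_zero]
theorem rk_zero {y : EE N} (hy : y ∉ Metric.closedBall (0 : EE N) 1) : rk y = 0 :=
  expNegInvGlue.zero_of_nonpos (out_aux hy)
theorem sk_cs : HasCompactSupport (sk (N := N)) :=
  HasCompactSupport.intro (isCompact_closedBall 0 1) fun y hy => sk_zero hy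
theorem rk_nonneg (y : EE N) : 0 ≤ rk y := expNegInvGlue.nonneg _
theorem sk_nonneg (y : EE N) : 0 ≤ sk y := mul_nonneg (by norm_num) (Gp_nonneg _)
theorem rk_pos {y : EE N} (hy : ‖y‖ < 1) : 0 < rk y :=
  expNegInvGlue.pos_of_pos (by nlinarith [norm_nonneg y])

theorem sk_hasFDerivAt (y : EE N) : HasFDerivAt sk (-(rk y) • innerSL ℝ y) y := by
  have h1 : HasFDerivAt (fun y : EE N => 1 - ‖y‖ ^ 2) (-((2:ℝ) • innerSL ℝ y)) y := by
    have := ((hasStrictFDerivAt_norm_sq y).hasFDerivAt).const_sub 1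
    refine this.congr_fderiv ?_
    ext v
    simp
  have h2 := ((Gp_hasDerivAt (1 - ‖y‖ ^ 2)).comp_hasFDerivAt y h1).const_mul (1 / 2)
  refine h2.congr_fderiv ?_
  ext v
  simp [rk]
  ring

variable {F : Type*} [NormedAddCommGroup F] [NormedSpace ℝ F]

def AA (k : EE N → F) (h : EE N → ℝ) (s : ℝ) (x : EE N) : F :=
  (s⁻¹) ^ N • ∫ z, h z • k (s⁻¹ • (x - z))

theorem bdd_of_cs {k : EE N → F} (hk : Continuous k) (hc : HasCompactSupport k) :
    ∃ M : ℝ, 0 ≤ M ∧ ∀ y, ‖k y‖ ≤ M := by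
  obtain ⟨M, hM⟩ := hc.exists_bound_of_continuous hk
  exact ⟨M, (norm_nonneg _).trans (hM 0), hM⟩

theorem AA_integrable {k : EE N → F} (hk : Continuous k) (hc : HasCompactSupport k) {h : EE N → ℝ}
    (hh : Integrable h) (s : ℝ) (x : EE N) : Integrable (fun z => h z • k (s⁻¹ • (x - z))) := by
  obtain ⟨M, hM0, hM⟩ := bdd_of_cs hk hc
  refine (hh.norm.mul_const M).mono (hh.1.smul (Continuous.aestronglyMeasurable (by fun_prop))) ?_
  refine Eventually.of_forall fun z => ?_
  rw [norm_smul, norm_mul, norm_norm, Real.norm_of_nonneg hM0]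
  exact mul_le_mul_of_nonneg_left (hM _) (norm_nonneg _)

theorem integral_scale {f : EE N → F} {s : ℝ} (hs : 0 < s) (x : EE N) :
    ∫ z, f (s⁻¹ • (x - z)) = s ^ N • ∫ y, f y := by
  rw [integral_sub_left_eq_self (fun z => f (s⁻¹ • z)), Measure.integral_comp_inv_smul]
  rw [finrank_euclideanSpace_fin, abs_of_pos (by positivity)]

theorem AA_bound {k : EE N → F} (hk : Continuous k) (hc : HasCompactSupport k) {h : EE N → ℝ}
    {B : ℝ} (hB : ∀ z, |h z| ≤ B) {s : ℝ} (hs : 0 < s) (x : EE N) :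
    ‖AA k h s x‖ ≤ B * ∫ y, ‖k y‖ := by
  have hi : Integrable (fun z => B * ‖k (s⁻¹ • (x - z))‖) := by
    have h1 : Integrable (fun y => ‖k y‖) := (hk.integrable_of_hasCompactSupport hc).norm
    have h2 := (h1.comp_smul (R := s⁻¹) (by positivity)).comp_sub_left x
    exact h2.const_mul B
  have h1 : ‖∫ z, h z • k (s⁻¹ • (x - z))‖ ≤ ∫ z, B * ‖k (s⁻¹ • (x - z))‖ := by
    refine norm_integral_le_of_norm_le hi (Eventually.of_forall fun z => ?_)
    rw [norm_smul]
    gcongr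
    exact hB z
  rw [integral_const_mul, integral_scale (f := fun y => ‖k y‖) hs x] at h1
  rw [AA, norm_smul, Real.norm_of_nonneg (by positivity)]
  calc _ ≤ (s⁻¹) ^ N * (B * (s ^ N • ∫ y, ‖k y‖)) := by gcongr
    _ = _ := by rw [inv_pow, smul_eq_mul]; field_simp

theorem AA_cont {k : EE N → F} (hk : Continuous k) (hc : HasCompactSupport k) {h : EE N → ℝ}
    (hh : Integrable h) :
    ContinuousOn (fun p : ℝ × EE N => AA k h p.1 p.2) (Ioi 0 ×ˢ univ) := by
  have hinv : ContinuousOn (fun p : ℝ × EE N => p.1⁻¹) (Ioi 0 ×ˢ univ) :=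
    continuousOn_fst.inv₀ fun p hp => (mem_Ioi.mp hp.1).ne'
  refine (hinv.pow N).smul ?_
  obtain ⟨M, hM0, hM⟩ := bdd_of_cs hk hc
  refine continuousOn_of_dominated (bound := fun z => |h z| * M) ?_ ?_ ?_ ?_
  · exact fun p _ => (AA_integrable hk hc hh p.1 p.2).1
  · refine fun p _ => Eventually.of_forall fun z => ?_
    rw [norm_smul]
    exact mul_le_mul_of_nonneg_left (hM _) (norm_nonneg _)
  · exact hh.norm.mul_const M
  · refine Eventually.of_forall fun z => ?_
    refine continuousOn_const.smul (hk.comp_continuousOn ?_)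
    exact hinv.smul (continuousOn_snd.sub continuousOn_const)

theorem cs_fderiv {k : EE N → F} (hc : HasCompactSupport k) : HasCompactSupport (fderiv ℝ k) :=
  hc.fderiv ℝ

theorem AA_fderiv {k : EE N → F} (hk : ContDiff ℝ 1 k) (hc : HasCompactSupport k) {h : EE N → ℝ}
    (hh : Integrable h) (s : ℝ) (x : EE N) :
    HasFDerivAt (fun x => AA k h s x) (s⁻¹ • AA (fderiv ℝ k) h s x) x := by
  have hk' := hk.continuous_fderiv one_ne_zero
  obtain ⟨M, hM0, hM⟩ := bdd_of_cs hk' (cs_fderiv hc)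
  have key : HasFDerivAt (fun x => ∫ z, h z • k (s⁻¹ • (x - z)))
      (∫ z, h z • (s⁻¹ • fderiv ℝ k (s⁻¹ • (x - z)))) x := by
    refine hasFDerivAt_integral_of_dominated_of_fderiv_le (𝕜 := ℝ) (s := univ) (H := EE N) (E := F)
      (F := fun x z => h z • k (s⁻¹ • (x - z)))
      (F' := fun x z => h z • (s⁻¹ • fderiv ℝ k (s⁻¹ • (x - z))))
      (bound := fun z => |h z| * (|s⁻¹| * M)) univ_mem ?_ ?_ ?_ ?_ ?_ ?_
    · exact Eventually.of_forall fun y => (AA_integrable hk.continuous hc hh s y).1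
    · exact AA_integrable hk.continuous hc hh s x
    · exact hh.1.smul (Continuous.aestronglyMeasurable
        ((hk'.comp (by fun_prop : Continuous fun z : EE N => s⁻¹ • (x - z))).const_smul s⁻¹))
    · refine Eventually.of_forall fun z y _ => ?_
      rw [norm_smul, norm_smul]
      refine mul_le_mul_of_nonneg_left ?_ (norm_nonneg _)
      exact mul_le_mul_of_nonneg_left (hM _) (norm_nonneg _)
    · exact hh.norm.mul_const _
    · refine Eventually.of_forall fun z y _ => ?_
      have h1 : HasFDerivAt (fun y : EE N => s⁻¹ • (y - z)) (s⁻¹ • ContinuousLinearMap.id ℝ (EE N)) y :=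
        ((hasFDerivAt_id y).sub_const z).const_smul s⁻¹
      have h2 := ((hk.differentiable one_ne_zero (s⁻¹ • (y - z))).hasFDerivAt.comp y h1).const_smul (h z)
      refine h2.congr_fderiv ?_
      ext v
      simp
  have h2 := key.const_smul ((s⁻¹) ^ N)
  refine h2.congr_fderiv ?_
  have e : ∫ z, h z • (s⁻¹ • fderiv ℝ k (s⁻¹ • (x - z))) =
      s⁻¹ • ∫ z, h z • fderiv ℝ k (s⁻¹ • (x - z)) := by
    rw [← integral_smul]
    exact integral_congr_ae (Eventually.of_forall fun z => smul_comm _ _ _)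
  rw [AA, e, smul_comm]

theorem AA_ds {k : EE N → ℝ} (hk : ContDiff ℝ 1 k) (hc : HasCompactSupport k) {h : EE N → ℝ}
    (hh : Integrable h) {s : ℝ} (hs : 0 < s) (x : EE N) :
    HasDerivAt (fun s => AA k h s x) (-(s⁻¹ * AA (fun y => N * k y + fderiv ℝ k y y) h s x)) s := by
  have hk' := hk.continuous_fderiv one_ne_zero
  have hc1 : Continuous (fun y : EE N => fderiv ℝ k y y) := hk'.clm_apply continuous_id
  have hcs1 : HasCompactSupport (fun y : EE N => fderiv ℝ k y y) := by
    refine HasCompactSupport.mono (cs_fderiv hc) ?_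
    intro y hy hy2
    apply hy
    change fderiv ℝ k y y = 0
    rw [hy2]; rfl
  obtain ⟨M, hM0, hM⟩ := bdd_of_cs hc1 hcs1
  have key := (hasDerivAt_integral_of_dominated_loc_of_deriv_le (𝕜 := ℝ) (μ := (volume : Measure (EE N)))
    (F := fun s z => h z • k (s⁻¹ • (x - z))) (x₀ := s) (s := Ioi (s / 2))
    (F' := fun s z => h z • (-(s⁻¹ * fderiv ℝ k (s⁻¹ • (x - z)) (s⁻¹ • (x - z)))))
    (bound := fun z => |h z| * ((s / 2)⁻¹ * M)) (Ioi_mem_nhds (by linarith))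
    (Eventually.of_forall fun t => (AA_integrable hk.continuous hc hh t x).1)
    (AA_integrable hk.continuous hc hh s x)
    (hh.1.smul (Continuous.aestronglyMeasurable
      ((continuous_const.mul (hc1.comp (by fun_prop))).neg))) ?_ (hh.norm.mul_const _) ?_).2
  · have hp : HasDerivAt (fun s : ℝ => (s⁻¹) ^ N) (-(N * s⁻¹ * (s⁻¹) ^ N)) s := by
      have := (hasDerivAt_inv hs.ne').pow N
      have e : -(N * s⁻¹ * (s⁻¹) ^ N) = (N:ℝ) * (s⁻¹) ^ (N - 1) * (-(s ^ 2)⁻¹) := by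
        cases N with
        | zero => simp
        | succ n =>
          simp only [Nat.add_sub_cancel, pow_succ]
          field_simp
      rw [e]
      exact this
    have h3 := hp.mul key
    have e : -(s⁻¹ * AA (fun y => N * k y + fderiv ℝ k y y) h s x) =
        -(N * s⁻¹ * (s⁻¹) ^ N) * (∫ z, h z • k (s⁻¹ • (x - z))) + (s⁻¹) ^ N *
          ∫ z, h z • (-(s⁻¹ * fderiv ℝ k (s⁻¹ • (x - z)) (s⁻¹ • (x - z)))) := by
      have e1 : ∫ z, h z • (-(s⁻¹ * fderiv ℝ k (s⁻¹ • (x - z)) (s⁻¹ • (x - z)))) =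
          -s⁻¹ * ∫ z, h z • (fderiv ℝ k (s⁻¹ • (x - z)) (s⁻¹ • (x - z))) := by
        rw [← integral_const_mul]
        congr 1
        ext z
        simp only [smul_eq_mul]
        ring
      have e2 : ∫ z, h z • (N * k (s⁻¹ • (x - z)) + fderiv ℝ k (s⁻¹ • (x - z)) (s⁻¹ • (x - z))) =
          N * (∫ z, h z • k (s⁻¹ • (x - z))) +
            ∫ z, h z • (fderiv ℝ k (s⁻¹ • (x - z)) (s⁻¹ • (x - z))) := by
        rw [← integral_const_mul, ← integral_add]
        · congr 1
          ext z
          simp only [smul_eq_mul]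
          ring
        · exact (AA_integrable hk.continuous hc hh s x).const_mul _
        · exact AA_integrable hc1 hcs1 hh s x
      rw [e1, AA, e2, smul_eq_mul]
      ring
    rw [e]
    exact h3
  · refine Eventually.of_forall fun z t ht => ?_
    have ht' : s / 2 < t := ht
    have htp : 0 < t := by linarith
    rw [norm_smul, norm_neg, norm_mul, norm_inv, Real.norm_of_nonneg htp.le]
    refine mul_le_mul_of_nonneg_left ?_ (norm_nonneg _)
    refine mul_le_mul ?_ (hM _) (norm_nonneg _) (by positivity)
    exact inv_anti₀ (by positivity) ht'.le
  · refine Eventually.of_forall fun z t ht => ?_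
    have ht' : s / 2 < t := ht
    have htp : 0 < t := by linarith
    have h1 : HasDerivAt (fun t : ℝ => t⁻¹ • (x - z)) ((-(t ^ 2)⁻¹) • (x - z)) t :=
      (hasDerivAt_inv htp.ne').smul_const (x - z)
    have h2 := ((hk.differentiable one_ne_zero (t⁻¹ • (x - z))).hasFDerivAt.comp_hasDerivAt t h1).const_mul (h z)
    have e : h z • (-(t⁻¹ * fderiv ℝ k (t⁻¹ • (x - z)) (t⁻¹ • (x - z)))) =
        h z * (fderiv ℝ k (t⁻¹ • (x - z))) ((-(t ^ 2)⁻¹) • (x - z)) := by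
      simp only [map_smul, smul_eq_mul]
      field_simp
    beta_reduce
    rw [e]
    exact h2

end Kernel

section Potential
open Filter Topology
open scoped ContDiff
variable {N : ℕ}

theorem AA_contDiff (n : ℕ) : ∀ {F : Type} [NormedAddCommGroup F] [NormedSpace ℝ F]
    {k : EE N → F}, ContDiff ℝ ∞ k → HasCompactSupport k → ∀ {h : EE N → ℝ}, Integrable h →
    ∀ s : ℝ, ContDiff ℝ n (fun x => AA k h s x) := by
  induction n with
  | zero =>
    intro F _ _ k hk hc h hh s
    have : ContDiff ℝ 0 (fun x => AA k h s x) := by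
      rw [contDiff_zero, continuous_iff_continuousAt]
      exact fun x => (AA_fderiv (hk.of_le (by exact_mod_cast le_top)) hc hh s x).continuousAt
    exact_mod_cast this
  | succ n ih =>
    intro F _ _ k hk hc h hh s
    have hk1 : ContDiff ℝ 1 k := hk.of_le (by exact_mod_cast le_top)
    have : ContDiff ℝ ((n : WithTop ℕ∞) + 1) (fun x => AA k h s x) := by
      rw [contDiff_succ_iff_fderiv]
      refine ⟨fun x => (AA_fderiv hk1 hc hh s x).differentiableAt, by simp, ?_⟩
      have e : fderiv ℝ (fun x => AA k h s x) = fun x => s⁻¹ • AA (fderiv ℝ k) h s x :=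
        funext fun x => (AA_fderiv hk1 hc hh s x).fderiv
      rw [e]
      exact (ih (hk.fderiv_right (by simp)) (cs_fderiv hc) hh s).const_smul s⁻¹
    exact_mod_cast this

theorem AA_congr {F : Type} [NormedAddCommGroup F] [NormedSpace ℝ F] {k : EE N → F}
    (hk : ∀ y, y ∉ Metric.closedBall (0 : EE N) 1 → k y = 0) {h h' : EE N → ℝ} {s : ℝ} (hs : 0 < s)
    (x : EE N) (hh : ∀ᵐ z, z ∈ Metric.closedBall x s → h z = h' z) :
    AA k h s x = AA k h' s x := by
  rw [AA, AA]
  congr 1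
  refine integral_congr_ae ?_
  filter_upwards [hh] with z hz
  by_cases hzx : z ∈ Metric.closedBall x s
  · rw [hz hzx]
  · rw [hk, smul_zero, smul_zero]
    rw [mem_closedBall_zero_iff, norm_smul, norm_inv, Real.norm_of_nonneg hs.le, not_le]
    rw [Metric.mem_closedBall, dist_comm, dist_eq_norm, not_le] at hzx
    rw [inv_mul_eq_div, one_lt_div hs]
    exact hzx

def WW (h : EE N → ℝ) (r : ℝ) (x : EE N) : ℝ := ∫ s in Ioc 0 r, s * AA sk h s x

theorem sk_one : ContDiff ℝ 1 (sk (N := N)) := sk_contDiff.of_le (by exact_mod_cast le_top)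
theorem sk_two : ContDiff ℝ 2 (sk (N := N)) := (contDiff_infty.mp sk_contDiff) 2
theorem rk_one : ContDiff ℝ 1 (rk (N := N)) := rk_contDiff.of_le (by exact_mod_cast le_top)

theorem AA_s_meas {F : Type} [NormedAddCommGroup F] [NormedSpace ℝ F] {k : EE N → F}
    (hk : Continuous k) (hc : HasCompactSupport k) {h : EE N → ℝ} (hh : Integrable h) (r : ℝ)
    (x : EE N) :
    AEStronglyMeasurable (fun s => AA k h s x) (volume.restrict (Ioc 0 r)) := by
  have h1 : ContinuousOn (fun s : ℝ => AA k h s x) (Ioi 0) :=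
    (AA_cont hk hc hh).comp (f := fun s : ℝ => (s, x)) (by fun_prop) fun s hs => ⟨hs, mem_univ _⟩
  exact (h1.mono fun s hs => hs.1).aestronglyMeasurable measurableSet_Ioc

theorem WW_fderiv {h : EE N → ℝ} (hh : Integrable h) {B : ℝ} (hB : ∀ z, |h z| ≤ B) (r : ℝ)
    (x : EE N) : HasFDerivAt (WW h r) (∫ s in Ioc 0 r, AA (fderiv ℝ sk) h s x) x := by
  have hk' := (sk_one (N := N)).continuous_fderiv one_ne_zero
  refine hasFDerivAt_integral_of_dominated_of_fderiv_le (𝕜 := ℝ) (s := univ) (H := EE N) (E := ℝ)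
      (F := fun x s => s * AA sk h s x)
      (F' := fun x s => AA (fderiv ℝ sk) h s x)
      (bound := fun _ => B * ∫ y : EE N, ‖fderiv ℝ sk y‖) univ_mem ?_ ?_ ?_ ?_ ?_ ?_
  · exact Eventually.of_forall fun y => (continuous_id.aestronglyMeasurable).mul
      (AA_s_meas sk_one.continuous sk_cs hh r y)
  · refine Integrable.of_bound
      ((continuous_id.aestronglyMeasurable).mul (AA_s_meas sk_one.continuous sk_cs hh r x))
      (|r| * (B * ∫ y : EE N, ‖sk y‖)) ?_
    refine (ae_restrict_mem measurableSet_Ioc).mono fun s hs => ?_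
    rw [norm_mul]
    refine mul_le_mul ?_ (AA_bound sk_one.continuous sk_cs hB hs.1 x) (norm_nonneg _) (abs_nonneg _)
    rw [Real.norm_of_nonneg hs.1.le]
    exact hs.2.trans (le_abs_self _)
  · exact AA_s_meas hk' (cs_fderiv sk_cs) hh r x
  · refine (ae_restrict_mem measurableSet_Ioc).mono fun s hs y _ => ?_
    exact AA_bound hk' (cs_fderiv sk_cs) hB hs.1 y
  · exact integrable_const _
  · refine (ae_restrict_mem measurableSet_Ioc).mono fun s hs y _ => ?_
    have := (AA_fderiv sk_one sk_cs hh s y).const_smul s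
    rw [smul_smul, mul_inv_cancel₀ hs.1.ne', one_smul] at this
    exact this

theorem WW_C1 {h : EE N → ℝ} (hh : Integrable h) {B : ℝ} (hB : ∀ z, |h z| ≤ B) (r : ℝ) :
    ContDiff ℝ 1 (WW h r) := by
  have hk' := (sk_one (N := N)).continuous_fderiv one_ne_zero
  rw [contDiff_one_iff_fderiv]
  refine ⟨fun x => (WW_fderiv hh hB r x).differentiableAt, ?_⟩
  have e : fderiv ℝ (WW h r) = fun x => ∫ s in Ioc 0 r, AA (fderiv ℝ sk) h s x :=
    funext fun x => (WW_fderiv hh hB r x).fderiv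
  rw [e]
  refine continuous_of_dominated (bound := fun _ => B * ∫ y : EE N, ‖fderiv ℝ sk y‖) ?_ ?_ ?_ ?_
  · exact fun x => AA_s_meas hk' (cs_fderiv sk_cs) hh r x
  · refine fun x => (ae_restrict_mem measurableSet_Ioc).mono fun s hs => ?_
    exact AA_bound hk' (cs_fderiv sk_cs) hB hs.1 x
  · exact integrable_const _
  · refine (ae_restrict_mem measurableSet_Ioc).mono fun s hs => ?_
    have h2 : ContDiff ℝ ∞ (fderiv ℝ (sk (N := N))) := sk_contDiff.fderiv_right (by simp)
    exact (AA_contDiff 0 h2 (cs_fderiv sk_cs) hh s).continuous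

theorem sk_shift (s : ℝ) (x z : EE N) : HasFDerivAt (fun z : EE N => sk (s⁻¹ • (x - z)))
      (-(s⁻¹ • fderiv ℝ sk (s⁻¹ • (x - z)))) z := by
  have h1 : HasFDerivAt (fun y : EE N => s⁻¹ • (x - y)) (s⁻¹ • -ContinuousLinearMap.id ℝ (EE N)) z :=
    ((hasFDerivAt_id z).const_sub x).const_smul s⁻¹
  refine ((sk_one.differentiable one_ne_zero (s⁻¹ • (x - z))).hasFDerivAt.comp z h1).congr_fderiv ?_
  ext v
  simp

theorem AA_apply {h : EE N → ℝ} (hhi : Integrable h) (s : ℝ) (x e : EE N) :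
    AA (fderiv ℝ sk) h s x e
      = (s⁻¹) ^ N * ∫ z, h z * fderiv ℝ sk (s⁻¹ • (x - z)) e := by
  have hk' := (sk_one (N := N)).continuous_fderiv one_ne_zero
  have e1 := ContinuousLinearMap.integral_apply (AA_integrable hk' (cs_fderiv sk_cs) hhi s x) e
  have e2 : AA (fderiv ℝ sk) h s x e
    = (s⁻¹) ^ N * ((∫ z, h z • fderiv ℝ sk (s⁻¹ • (x - z))) e) := rfl
  rw [e2, e1]
  rfl

theorem sk_ibp {h : EE N → ℝ} (hh : ContDiff ℝ 1 h) (hc : HasCompactSupport h) (s : ℝ)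
    (x e : EE N) : ∫ z, fderiv ℝ h z e * sk (s⁻¹ • (x - z)) =
      s⁻¹ * ∫ z, h z * fderiv ℝ sk (s⁻¹ • (x - z)) e := by
  have h0 : ContDiff ℝ 1 (fun z : EE N => s⁻¹ • (x - z)) := by fun_prop
  have h1 : ContDiff ℝ 1 (fun z : EE N => sk (s⁻¹ • (x - z))) := sk_one.comp h0
  have ht : IsTst (univ : Set (EE N)) h := ⟨hh, hc, subset_univ _⟩
  have h2 := ibp_one isOpen_univ h1.contDiffOn ht e
  rw [h2, ← integral_const_mul, ← integral_neg]
  refine integral_congr_ae (Eventually.of_forall fun z => ?_)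
  have h3 : fderiv ℝ (fun z : EE N => sk (s⁻¹ • (x - z))) z e
      = -(s⁻¹ * fderiv ℝ sk (s⁻¹ • (x - z)) e) := by
    rw [(sk_shift s x z).fderiv]
    rfl
  change -(h z * fderiv ℝ (fun z : EE N => sk (s⁻¹ • (x - z))) z e) = _
  rw [h3]
  ring

theorem AA_fderiv_eq {h : EE N → ℝ} (hh : ContDiff ℝ 1 h) (hc : HasCompactSupport h) {s : ℝ}
    (hs : 0 < s) (x e : EE N) :
    AA (fderiv ℝ sk) h s x e = s * AA sk (fun z => fderiv ℝ h z e) s x := by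
  rw [AA_apply (hh.continuous.integrable_of_hasCompactSupport hc) s x e]
  have h4 : AA sk (fun z => fderiv ℝ h z e) s x =
      (s⁻¹) ^ N * ∫ z, fderiv ℝ h z e * sk (s⁻¹ • (x - z)) := rfl
  rw [h4, sk_ibp hh hc]
  rw [mul_left_comm s, ← mul_assoc s, mul_inv_cancel₀ hs.ne', one_mul]

theorem WW_C2 {h : EE N → ℝ} (hh : ContDiff ℝ 1 h) (hc : HasCompactSupport h) (r : ℝ) :
    ContDiff ℝ 2 (WW h r) := by
  have hhi : Integrable h := hh.continuous.integrable_of_hasCompactSupport hc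
  obtain ⟨B, -, hB⟩ := bdd_of_cs hh.continuous hc
  have hk' := (sk_one (N := N)).continuous_fderiv one_ne_zero
  have : ContDiff ℝ (1 + 1) (WW h r) := by
    rw [contDiff_succ_iff_fderiv_apply]
    refine ⟨fun x => (WW_fderiv hhi hB r x).differentiableAt, by simp, fun e => ?_⟩
    have he : (fun x => fderiv ℝ (WW h r) x e) = WW (fun z => fderiv ℝ h z e) r := by
      funext x
      rw [(WW_fderiv hhi hB r x).fderiv, ContinuousLinearMap.integral_apply, WW]
      · exact setIntegral_congr_fun measurableSet_Ioc fun s hs => AA_fderiv_eq hh hc hs.1 x e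
      · refine Integrable.of_bound (AA_s_meas hk' (cs_fderiv sk_cs) hhi r x)
          (B * ∫ y : EE N, ‖fderiv ℝ sk y‖) ?_
        refine (ae_restrict_mem measurableSet_Ioc).mono fun s hs => ?_
        exact AA_bound hk' (cs_fderiv sk_cs) hB hs.1 x
    rw [he]
    have hce : Continuous (fun z => fderiv ℝ h z e) :=
      (hh.continuous_fderiv one_ne_zero).clm_apply continuous_const
    have hcse : HasCompactSupport (fun z => fderiv ℝ h z e) := hc.fderiv_apply ℝ e
    obtain ⟨B', -, hB'⟩ := bdd_of_cs hce hcse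
    exact WW_C1 (hce.integrable_of_hasCompactSupport hcse) hB' r
  exact this

theorem WW_congr {h h' : EE N → ℝ} {r : ℝ} (x : EE N)
    (hh : ∀ᵐ z, z ∈ Metric.closedBall x r → h z = h' z) : WW h r x = WW h' r x := by
  refine setIntegral_congr_fun measurableSet_Ioc fun s hs => ?_
  rw [AA_congr (fun y hy => sk_zero hy) hs.1 x]
  filter_upwards [hh] with z hz hz2
  exact hz (Metric.closedBall_subset_closedBall hs.2 hz2)

end Potential

section MeanValue
open Filter Topology
open scoped ContDiff
variable {N : ℕ}

theorem clm_sum (L : EE N →L[ℝ] ℝ) (a : EE N) :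
    ∑ i : Fin N, inner ℝ a (EuclideanSpace.single i (1:ℝ)) * L (EuclideanSpace.single i 1) = L a := by
  conv_rhs => rw [← (EuclideanSpace.basisFun (Fin N) ℝ).sum_repr' a]
  rw [map_sum]
  refine Finset.sum_congr rfl fun i _ => ?_
  rw [map_smul, smul_eq_mul, EuclideanSpace.basisFun_apply, real_inner_comm]

theorem inner_grad_sum (a : EE N) (χ : EE N → ℝ) (y : EE N) : inner ℝ a (gradient χ y) =
    ∑ i : Fin N, inner ℝ a (EuclideanSpace.single i (1:ℝ)) * fderiv ℝ χ y (EuclideanSpace.single i 1) := by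
  rw [clm_sum, real_inner_comm]
  simp [gradient]

theorem distr {Ω : Set (EE N)} {v : XX N} (hv : v ∈ VV Ω) {h : L2R N}
    (heq : ∀ w ∈ VV Ω, inner ℝ (sndL N v) (sndL N w) = inner ℝ h (fstL N w))
    {χ : EE N → ℝ} (hχ : ContDiff ℝ 2 χ) (hcs : HasCompactSupport χ) (hts : tsupport χ ⊆ Ω) :
    ∫ y, fstL N v y * lapl χ y = - ∫ y, h y * χ y := by
  have ht : IsTst Ω χ := ⟨hχ.of_le (by norm_num), hcs, hts⟩
  have h1 := heq _ (tstEl_mem ht)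
  have hd : ∀ e : EE N, ContDiff ℝ 1 (fun y => fderiv ℝ χ y e) := fun e =>
    (hχ.fderiv_right (m := 1) (by norm_num)).clm_apply contDiff_const
  have hdc : ∀ e : EE N, HasCompactSupport (fun y => fderiv ℝ χ y e) := fun e => hcs.fderiv_apply ℝ e
  have l1 : inner ℝ (sndL N v) (sndL N (tstEl ht)) = ∑ i : Fin N,
      ∫ y, inner ℝ (sndL N v y) (EuclideanSpace.single i (1:ℝ)) * fderiv ℝ χ y (EuclideanSpace.single i 1) := by
    rw [sndL_tstEl, L2.inner_def, ← integral_finsetSum]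
    · refine integral_congr_ae ?_
      filter_upwards [ht.memLp_grad.coeFn_toLp] with y hy
      rw [hy, inner_grad_sum]
    · intro i _
      exact MemLp.integrable_mul ((Lp.memLp (sndL N v)).inner_const _)
        ((hd _).continuous.memLp_of_hasCompactSupport (p := 2) (hdc _))
  have l2 : inner ℝ h (fstL N (tstEl ht)) = ∫ y, h y * χ y := by
    rw [fstL_tstEl, L2_inner]
    refine integral_congr_ae ?_
    filter_upwards [ht.memLp.coeFn_toLp] with y hy
    rw [hy]
  have l3 : ∫ y, fstL N v y * lapl χ y = ∑ i : Fin N,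
      ∫ y, fstL N v y * fderiv ℝ (fun y => fderiv ℝ χ y (EuclideanSpace.single i 1)) y
        (EuclideanSpace.single i 1) := by
    rw [← integral_finsetSum]
    · refine integral_congr_ae (Eventually.of_forall fun y => ?_)
      simp only [lapl, Finset.mul_sum]
    · intro i _
      refine MemLp.integrable_mul (Lp.memLp (fstL N v))
        (Continuous.memLp_of_hasCompactSupport (p := 2)
          (((hd (EuclideanSpace.single i 1)).continuous_fderiv one_ne_zero).clm_apply continuous_const)
          ((hdc (EuclideanSpace.single i 1)).fderiv_apply ℝ _))
  rw [← l2, ← h1, l1, l3, ← Finset.sum_neg_distrib]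
  refine Finset.sum_congr rfl fun i _ => ?_
  rw [weak_ibp (hd _) (hdc _) _ v hv, neg_neg]

theorem lapl_sk_shift (s : ℝ) (x z : EE N) :
    lapl (fun z : EE N => sk (s⁻¹ • (x - z))) z =
      -((s⁻¹) ^ 2 * (N * rk (s⁻¹ • (x - z)) + fderiv ℝ rk (s⁻¹ • (x - z)) (s⁻¹ • (x - z)))) := by
  have h1 : ∀ (e z : EE N), fderiv ℝ (fun z : EE N => sk (s⁻¹ • (x - z))) z e
      = s⁻¹ * (rk (s⁻¹ • (x - z)) * inner ℝ (s⁻¹ • (x - z)) e) := by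
    intro e z
    rw [(sk_shift s x z).fderiv, (sk_hasFDerivAt _).fderiv]
    change -(s⁻¹ * (-(rk (s⁻¹ • (x - z))) * inner ℝ (s⁻¹ • (x - z)) e)) = _
    ring
  have h2 : ∀ e : EE N, fderiv ℝ (fun z => fderiv ℝ (fun z : EE N => sk (s⁻¹ • (x - z))) z e) z e =
      -((s⁻¹) ^ 2 * (rk (s⁻¹ • (x - z)) * inner ℝ e e +
        inner ℝ (s⁻¹ • (x - z)) e * fderiv ℝ rk (s⁻¹ • (x - z)) e)) := by
    intro e
    have e0 : (fun z => fderiv ℝ (fun z : EE N => sk (s⁻¹ • (x - z))) z e) =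
      fun z => s⁻¹ * (rk (s⁻¹ • (x - z)) * inner ℝ e (s⁻¹ • (x - z))) :=
      funext fun z => by rw [h1 e z, real_inner_comm]
    rw [e0]
    have g1 : HasFDerivAt (fun y : EE N => s⁻¹ • (x - y)) (s⁻¹ • -ContinuousLinearMap.id ℝ (EE N)) z :=
      ((hasFDerivAt_id z).const_sub x).const_smul s⁻¹
    have g2 := (rk_one.differentiable one_ne_zero (s⁻¹ • (x - z))).hasFDerivAt.comp z g1
    have g3 := (innerSL ℝ e).hasFDerivAt.comp z g1
    have g4 := (g2.mul g3).const_mul s⁻¹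
    have g5 : fderiv ℝ (fun z => s⁻¹ * (rk (s⁻¹ • (x - z)) * inner ℝ e (s⁻¹ • (x - z)))) z = _ := g4.fderiv
    rw [g5, real_inner_comm e (s⁻¹ • (x - z))]
    simp
    ring
  unfold lapl
  rw [Finset.sum_congr rfl fun i _ => h2 (EuclideanSpace.single i 1)]
  rw [Finset.sum_neg_distrib, ← Finset.mul_sum, Finset.sum_add_distrib]
  congr 2
  congr 1
  · simp
  · exact clm_sum (fderiv ℝ rk (s⁻¹ • (x - z))) (s⁻¹ • (x - z))

theorem shift_zero {F : Type} [Zero F] {k : EE N → F}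
    (hk : ∀ y, y ∉ Metric.closedBall (0 : EE N) 1 → k y = 0) {s : ℝ} (hs : 0 < s)
    {x z : EE N} (hz : z ∉ Metric.closedBall x s) (c : EE N → EE N)
    (hc : c z = s⁻¹ • (x - z)) : k (c z) = 0 := by
  rw [hc]
  apply hk
  rw [mem_closedBall_zero_iff, norm_smul, norm_inv, Real.norm_of_nonneg hs.le, not_le]
  rw [Metric.mem_closedBall, dist_comm, dist_eq_norm, not_le] at hz
  rw [inv_mul_eq_div, one_lt_div hs]
  exact hz

theorem AA_rel {Ω : Set (EE N)} {v : XX N} (hv : v ∈ VV Ω) {H : L2R N}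
    (heq : ∀ w ∈ VV Ω, inner ℝ (sndL N v) (sndL N w) = inner ℝ H (fstL N w))
    {h : EE N → ℝ} (hH : H =ᵐ[volume] h) {s : ℝ} (hs : 0 < s) {x : EE N}
    (hx : Metric.closedBall x s ⊆ Ω) :
    AA (fun y => N * rk y + fderiv ℝ rk y y) (fstL N v) s x = s ^ 2 * AA sk h s x := by
  have h0 : ContDiff ℝ 2 (fun z : EE N => s⁻¹ • (x - z)) := by fun_prop
  have hχ : ContDiff ℝ 2 (fun z : EE N => sk (s⁻¹ • (x - z))) := sk_two.comp h0
  have hz : ∀ z, z ∉ Metric.closedBall x s → sk (s⁻¹ • (x - z)) = 0 := fun z hz =>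
    shift_zero (fun y hy => sk_zero hy) hs hz (fun z => s⁻¹ • (x - z)) rfl
  have hts : tsupport (fun z : EE N => sk (s⁻¹ • (x - z))) ⊆ Metric.closedBall x s := by
    refine closure_minimal ?_ Metric.isClosed_closedBall
    intro z hz1
    by_contra hc
    exact hz1 (hz z hc)
  have h1 := distr hv heq hχ (HasCompactSupport.intro (isCompact_closedBall x s) hz) (hts.trans hx)
  have h2 : ∫ y, H y * sk (s⁻¹ • (x - y)) = ∫ y, h y * sk (s⁻¹ • (x - y)) := by
    refine integral_congr_ae ?_
    filter_upwards [hH] with y hy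
    rw [hy]
  rw [h2] at h1
  have h3 : ∫ y, fstL N v y * lapl (fun z : EE N => sk (s⁻¹ • (x - z))) y =
      -(s⁻¹) ^ 2 * ∫ y, fstL N v y * (N * rk (s⁻¹ • (x - y)) +
        fderiv ℝ rk (s⁻¹ • (x - y)) (s⁻¹ • (x - y))) := by
    rw [← integral_const_mul]
    refine integral_congr_ae (Eventually.of_forall fun y => ?_)
    beta_reduce
    rw [lapl_sk_shift]
    ring
  rw [h3] at h1
  simp only [AA, smul_eq_mul]
  generalize (∫ y, fstL N v y * (N * rk (s⁻¹ • (x - y)) +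
        fderiv ℝ rk (s⁻¹ • (x - y)) (s⁻¹ • (x - y)))) = I at h1 ⊢
  generalize (∫ y, h y * sk (s⁻¹ • (x - y))) = J at h1 ⊢
  have h4 : I = s ^ 2 * J := by
    have : (s⁻¹) ^ 2 * I = J := by linarith
    rw [← this]
    field_simp
  rw [h4]
  ring

theorem AA_ds' {Ω : Set (EE N)} {v : XX N} (hv : v ∈ VV Ω) (hVi : Integrable (fstL N v)) {H : L2R N}
    (heq : ∀ w ∈ VV Ω, inner ℝ (sndL N v) (sndL N w) = inner ℝ H (fstL N w))
    {h : EE N → ℝ} (hH : H =ᵐ[volume] h) {s : ℝ} (hs : 0 < s) {x : EE N}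
    (hx : Metric.closedBall x s ⊆ Ω) :
    HasDerivAt (fun s => AA rk (fstL N v) s x) (-(s * AA sk h s x)) s := by
  have := AA_ds rk_one rk_cs hVi hs x
  rw [AA_rel hv heq hH hs hx] at this
  have e : -(s * AA sk h s x) = -(s⁻¹ * (s ^ 2 * AA sk h s x)) := by field_simp
  rw [e]
  exact this

theorem WW_intv {h : EE N → ℝ} (hh : Integrable h) {B : ℝ} (hB : ∀ z, |h z| ≤ B) (r : ℝ) (x : EE N) :
    IntegrableOn (fun s => s * AA sk h s x) (Ioc 0 r) := by
  refine Integrable.of_bound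
      ((continuous_id.aestronglyMeasurable).mul (AA_s_meas sk_one.continuous sk_cs hh r x))
      (|r| * (B * ∫ y : EE N, ‖sk y‖)) ?_
  refine (ae_restrict_mem measurableSet_Ioc).mono fun s hs => ?_
  rw [norm_mul]
  refine mul_le_mul ?_ (AA_bound sk_one.continuous sk_cs hB hs.1 x) (norm_nonneg _) (abs_nonneg _)
  rw [Real.norm_of_nonneg hs.1.le]
  exact hs.2.trans (le_abs_self _)

theorem AA_diff {Ω : Set (EE N)} {v : XX N} (hv : v ∈ VV Ω) (hVi : Integrable (fstL N v)) {H : L2R N}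
    (heq : ∀ w ∈ VV Ω, inner ℝ (sndL N v) (sndL N w) = inner ℝ H (fstL N w))
    {h : EE N → ℝ} (hH : H =ᵐ[volume] h) (hh : Integrable h) {B : ℝ} (hB : ∀ z, |h z| ≤ B)
    {ε r : ℝ} (hε : 0 < ε) (hr : ε ≤ r) {x : EE N} (hx : Metric.closedBall x r ⊆ Ω) :
    AA rk (fstL N v) ε x + WW h ε x = AA rk (fstL N v) r x + WW h r x := by
  have hint : IntervalIntegrable (fun s => s * AA sk h s x) volume ε r := by
    rw [intervalIntegrable_iff_integrableOn_Ioc_of_le hr]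
    exact (WW_intv hh hB r x).mono_set (Ioc_subset_Ioc_left hε.le)
  have h1 := intervalIntegral.integral_eq_sub_of_hasDerivAt (a := ε) (b := r)
    (f := fun s => AA rk (fstL N v) s x) (f' := fun s => -(s * AA sk h s x)) (by
      intro s hs
      rw [uIcc_of_le hr] at hs
      exact AA_ds' hv hVi heq hH (hε.trans_le hs.1)
        ((Metric.closedBall_subset_closedBall hs.2).trans hx)) hint.neg
  have h2 : WW h r x = WW h ε x + ∫ s in ε..r, s * AA sk h s x := by
    rw [WW, WW, ← intervalIntegral.integral_of_le hε.le, ← intervalIntegral.integral_of_le (hε.le.trans hr),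
      intervalIntegral.integral_add_adjacent_intervals _ hint]
    rw [intervalIntegrable_iff_integrableOn_Ioc_of_le hε.le]
    exact WW_intv hh hB ε x
  rw [intervalIntegral.integral_neg] at h1
  beta_reduce at h1
  linarith

theorem WW_tendsto {h : EE N → ℝ} {B : ℝ} (hB : ∀ z, |h z| ≤ B) (x : EE N) :
    Tendsto (fun ε => WW h ε x) (𝓝[>] 0) (𝓝 0) := by
  have hB0 : 0 ≤ B := (abs_nonneg _).trans (hB 0)
  have h1 : Tendsto (fun ε : ℝ => ε * (B * ∫ y : EE N, ‖sk y‖) * ε) (𝓝[>] 0) (𝓝 0) := by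
    have : Tendsto (fun ε : ℝ => ε * (B * ∫ y : EE N, ‖sk y‖) * ε) (𝓝 0) (𝓝 (0 * (B * ∫ y : EE N, ‖sk y‖) * 0)) :=
      Continuous.tendsto (by fun_prop) 0
    rw [mul_zero] at this
    exact this.mono_left nhdsWithin_le_nhds
  refine squeeze_zero_norm' ?_ h1
  filter_upwards [self_mem_nhdsWithin] with ε hε
  have hε' : 0 < ε := hε
  have := norm_setIntegral_le_of_norm_le_const (μ := volume) (s := Ioc 0 ε)
    (f := fun s => s * AA sk h s x) (C := ε * (B * ∫ y : EE N, ‖sk y‖)) (by simp) (by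
      intro s hs
      rw [norm_mul]
      refine mul_le_mul ?_ (AA_bound sk_one.continuous sk_cs hB hs.1 x) (norm_nonneg _) hε'.le
      rw [Real.norm_of_nonneg hs.1.le]
      exact hs.2)
  refine this.trans (le_of_eq ?_)
  simp [hε'.le]

def c0 (N : ℕ) : ℝ := ∫ y : EE N, rk y

theorem c0_pos : 0 < c0 N := by
  have hi : Integrable (rk (N := N)) := rk_one.continuous.integrable_of_hasCompactSupport rk_cs
  refine (integral_pos_iff_support_of_nonneg rk_nonneg hi).mpr ?_
  refine lt_of_lt_of_le (Metric.measure_ball_pos volume (0 : EE N) one_pos) (measure_mono ?_)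
  intro y hy
  exact (rk_pos (mem_ball_zero_iff.mp hy)).ne'

theorem AA_lebesgue {V : EE N → ℝ} (hV : Integrable V) :
    ∀ᵐ x, Tendsto (fun ε => AA rk V ε x) (𝓝[>] 0) (𝓝 (c0 N * V x)) := by
  filter_upwards [IsUnifLocDoublingMeasure.ae_tendsto_average_norm_sub volume hV.locallyIntegrable 1]
    with x hx
  have h1 := hx (l := 𝓝[>] (0:ℝ)) (fun _ => x) (fun ε => ε) tendsto_id (by
    filter_upwards [self_mem_nhdsWithin] with ε hε
    have hε' : 0 < ε := hε
    rw [one_mul]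
    exact Metric.mem_closedBall_self hε'.le)
  obtain ⟨M, hM0, hM⟩ := bdd_of_cs (rk_one (N := N)).continuous rk_cs
  have h2 := h1.const_mul (M * (volume : Measure (EE N)).real (Metric.ball 0 1))
  rw [mul_zero] at h2
  rw [tendsto_iff_norm_sub_tendsto_zero]
  refine squeeze_zero' (Eventually.of_forall fun _ => norm_nonneg _) ?_ h2
  filter_upwards [self_mem_nhdsWithin] with ε hε
  have hε' : 0 < ε := hε
  have hci : Integrable (fun z => rk (ε⁻¹ • (x - z))) := by
    have hi : Integrable (rk (N := N)) := rk_one.continuous.integrable_of_hasCompactSupport rk_cs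
    exact (hi.comp_smul (R := ε⁻¹) (by positivity)).comp_sub_left x
  have e1 : AA rk V ε x - c0 N * V x = (ε⁻¹) ^ N * ∫ z, (V z - V x) * rk (ε⁻¹ • (x - z)) := by
    have e2 : c0 N = (ε⁻¹) ^ N * ∫ z, rk (ε⁻¹ • (x - z)) := by
      rw [integral_scale hε', c0, smul_eq_mul, ← mul_assoc, inv_pow, inv_mul_cancel₀ (by positivity), one_mul]
    have e3 : ∫ z, (V z - V x) * rk (ε⁻¹ • (x - z)) =
        (∫ z, V z * rk (ε⁻¹ • (x - z))) - V x * ∫ z, rk (ε⁻¹ • (x - z)) := by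
      rw [← integral_const_mul, ← integral_sub]
      · refine integral_congr_ae (Eventually.of_forall fun z => ?_)
        beta_reduce
        ring
      · exact AA_integrable rk_one.continuous rk_cs hV ε x
      · exact hci.const_mul _
    rw [e3, e2, AA]
    simp only [smul_eq_mul]
    ring
  have e4 : ∫ z, (V z - V x) * rk (ε⁻¹ • (x - z)) =
      ∫ z in Metric.closedBall x ε, (V z - V x) * rk (ε⁻¹ • (x - z)) := by
    symm
    refine setIntegral_eq_integral_of_forall_compl_eq_zero fun z hz => ?_
    rw [shift_zero (fun y hy => rk_zero hy) hε' hz (fun z => ε⁻¹ • (x - z)) rfl, mul_zero]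
  have hVi : IntegrableOn (fun z => ‖V z - V x‖) (Metric.closedBall x ε) :=
    (hV.integrableOn.sub (integrableOn_const (measure_closedBall_lt_top.ne))).norm
  have e5 : ‖∫ z, (V z - V x) * rk (ε⁻¹ • (x - z))‖ ≤ M * ∫ z in Metric.closedBall x ε, ‖V z - V x‖ := by
    rw [e4, ← integral_const_mul]
    refine norm_integral_le_of_norm_le (hVi.const_mul M) (Eventually.of_forall fun z => ?_)
    rw [norm_mul, mul_comm]
    exact mul_le_mul_of_nonneg_right (hM _) (norm_nonneg _)
  rw [e1, norm_mul, Real.norm_of_nonneg (by positivity), setAverage_eq, smul_eq_mul,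
    Measure.addHaar_real_closedBall _ _ hε'.le, finrank_euclideanSpace_fin]
  have hb : 0 < (volume : Measure (EE N)).real (Metric.ball 0 1) :=
    ENNReal.toReal_pos (Metric.measure_ball_pos volume (0 : EE N) one_pos).ne' measure_ball_lt_top.ne
  calc _ ≤ (ε⁻¹) ^ N * (M * ∫ z in Metric.closedBall x ε, ‖V z - V x‖) := by gcongr
    _ = _ := by rw [inv_pow]; field_simp

end MeanValue

section Regularity
open Filter Topology
open scoped ContDiff
variable {N : ℕ}

theorem regularity {Ω : Set (EE N)} (hΩ : IsOpen Ω) {v : XX N} (hv : v ∈ VV Ω)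
    (hVi : Integrable (fstL N v)) {H : L2R N}
    (heq : ∀ w ∈ VV Ω, inner ℝ (sndL N v) (sndL N w) = inner ℝ H (fstL N w))
    {h : EE N → ℝ} (hH : H =ᵐ[volume] h) (hh : Integrable h) {B : ℝ} (hB : ∀ z, |h z| ≤ B) :
    ∃ vb : EE N → ℝ, ContDiffOn ℝ 1 vb Ω ∧ (∀ᵐ x, x ∈ Ω → fstL N v x = vb x) ∧
      (∀ x r, 0 < r → Metric.closedBall x r ⊆ Ω →
        c0 N * vb x = AA rk (fstL N v) r x + WW h r x) ∧
      (∀ hb : EE N → ℝ, ContDiffOn ℝ 1 hb Ω → (∀ᵐ x, x ∈ Ω → h x = hb x) →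
        ContDiffOn ℝ 2 vb Ω) := by
  classical
  have hc : c0 N ≠ 0 := c0_pos.ne'
  have indep : ∀ x r r', 0 < r → 0 < r' → Metric.closedBall x r ⊆ Ω → Metric.closedBall x r' ⊆ Ω →
      AA rk (fstL N v) r x + WW h r x = AA rk (fstL N v) r' x + WW h r' x := by
    intro x r r' hr hr' h1 h2
    rcases le_total r r' with hle | hle
    · exact AA_diff hv hVi heq hH hh hB hr hle h2
    · exact (AA_diff hv hVi heq hH hh hB hr' hle h1).symm
  have hex : ∀ x ∈ Ω, ∃ r, 0 < r ∧ Metric.closedBall x r ⊆ Ω := fun x hx =>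
    Metric.nhds_basis_closedBall.mem_iff.mp (hΩ.mem_nhds hx)
  let vb : EE N → ℝ := fun x => if hx : x ∈ Ω then
    (c0 N)⁻¹ * (AA rk (fstL N v) (hex x hx).choose x + WW h (hex x hx).choose x) else 0
  have hvb : ∀ x r, 0 < r → Metric.closedBall x r ⊆ Ω →
        c0 N * vb x = AA rk (fstL N v) r x + WW h r x := by
    intro x r hr hx
    have hxΩ : x ∈ Ω := hx (Metric.mem_closedBall_self hr.le)
    simp only [vb, dif_pos hxΩ]
    rw [← mul_assoc, mul_inv_cancel₀ hc, one_mul]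
    exact indep x _ r (hex x hxΩ).choose_spec.1 hr (hex x hxΩ).choose_spec.2 hx
  have hsub : ∀ (x0 x : EE N) r, x ∈ Metric.ball x0 r → Metric.closedBall x r ⊆ Metric.closedBall x0 (2 * r) := by
    intro x0 x r hx z hz
    rw [Metric.mem_closedBall] at hz ⊢
    have h1 := dist_triangle z x x0
    have h2 := Metric.mem_ball.mp hx
    linarith
  have hloc : ∀ x0 r, 0 < r → Metric.closedBall x0 (2 * r) ⊆ Ω → ∀ x ∈ Metric.ball x0 r,
      vb x = (c0 N)⁻¹ * (AA rk (fstL N v) r x + WW h r x) := by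
    intro x0 r hr hx0 x hx
    rw [← hvb x r hr ((hsub x0 x r hx).trans hx0), ← mul_assoc, inv_mul_cancel₀ hc, one_mul]
  refine ⟨vb, ?_, ?_, hvb, ?_⟩
  · intro x0 hx0
    obtain ⟨r, hr, hr2⟩ := hex x0 hx0
    have h1 : ContDiff ℝ 1 (fun x => (c0 N)⁻¹ * (AA rk (fstL N v) (r / 2) x + WW h (r / 2) x)) := by
      have a1 : ContDiff ℝ ((1 : ℕ) : WithTop ℕ∞) (fun x => AA rk (fstL N v) (r / 2) x) :=
        AA_contDiff 1 rk_contDiff rk_cs hVi (r / 2)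
      exact contDiff_const.mul (ContDiff.add (by exact_mod_cast a1) (WW_C1 hh hB (r / 2)))
    refine ContDiffAt.contDiffWithinAt (h1.contDiffAt.congr_of_eventuallyEq ?_)
    filter_upwards [Metric.ball_mem_nhds x0 (half_pos hr)] with x hx
    exact hloc x0 (r / 2) (half_pos hr) (by rw [mul_div_cancel₀ _ two_ne_zero]; exact hr2) x hx
  · filter_upwards [AA_lebesgue hVi] with x hx hxΩ
    obtain ⟨r, hr, hr2⟩ := hex x hxΩ
    have h1 : Tendsto (fun ε => AA rk (fstL N v) ε x) (𝓝[>] 0)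
        (𝓝 (AA rk (fstL N v) r x + WW h r x - 0)) := by
      refine (tendsto_const_nhds.sub (WW_tendsto hB x)).congr' ?_
      filter_upwards [Ioc_mem_nhdsGT hr] with ε hε
      rw [← AA_diff hv hVi heq hH hh hB hε.1 hε.2 hr2]
      ring
    rw [sub_zero, ← hvb x r hr hr2] at h1
    exact mul_left_cancel₀ hc (tendsto_nhds_unique hx h1)
  · intro hb hb1 hbe x0 hx0
    obtain ⟨r', hr', hr2⟩ := hex x0 hx0
    obtain ⟨r, hr, rfl⟩ : ∃ r, 0 < r ∧ r' = 3 * r := ⟨r' / 3, by positivity, by ring⟩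
    let η : ContDiffBump x0 := ⟨2 * r, 3 * r, by positivity, by linarith⟩
    have hηt : tsupport (fun x => η x * hb x) ⊆ Metric.closedBall x0 (3 * r) := by
      refine (tsupport_mul_subset_left).trans ?_
      rw [η.tsupport_eq]
    have hη1 : ContDiff ℝ 1 (fun x => η x * hb x) := by
      refine contDiff_iff_contDiffAt.mpr fun x => ?_
      by_cases hx : x ∈ tsupport (fun x => η x * hb x)
      swap
      · exact (contDiffAt_const (c := (0:ℝ))).congr_of_eventuallyEq (notMem_tsupport_iff_eventuallyEq.mp hx)
      have := (hb1 x (hr2 (hηt hx))).contDiffAt (hΩ.mem_nhds (hr2 (hηt hx)))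
      exact η.contDiff.contDiffAt.mul this
    have hηc : HasCompactSupport (fun x => η x * hb x) :=
      HasCompactSupport.of_support_subset_isCompact (isCompact_closedBall x0 (3 * r))
        ((subset_tsupport _).trans hηt)
    have h2r : Metric.closedBall x0 (2 * r) ⊆ Ω :=
      (Metric.closedBall_subset_closedBall (by linarith)).trans hr2
    have h1 : ContDiff ℝ 2 (fun x => (c0 N)⁻¹ * (AA rk (fstL N v) r x + WW (fun x => η x * hb x) r x)) := by
      have a1 : ContDiff ℝ ((2 : ℕ) : WithTop ℕ∞) (fun x => AA rk (fstL N v) r x) :=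
        AA_contDiff 2 rk_contDiff rk_cs hVi r
      exact contDiff_const.mul (ContDiff.add (by exact_mod_cast a1) (WW_C2 hη1 hηc r))
    refine ContDiffAt.contDiffWithinAt (h1.contDiffAt.congr_of_eventuallyEq ?_)
    filter_upwards [Metric.ball_mem_nhds x0 hr] with x hx
    rw [hloc x0 r hr h2r x hx, WW_congr (h' := fun x => η x * hb x)]
    filter_upwards [hbe] with z hz hzx
    have hz2 := hsub x0 x r hx hzx
    rw [hz (h2r hz2), η.one_of_mem_closedBall hz2, one_mul]

theorem ident_grad {Ω : Set (EE N)} (hΩ : IsOpen Ω) {v : XX N} (hv : v ∈ VV Ω)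
    {vb : EE N → ℝ} (hvb : ContDiffOn ℝ 1 vb Ω) (hae : ∀ᵐ x, x ∈ Ω → fstL N v x = vb x) :
    ∀ᵐ x, x ∈ Ω → sndL N v x = gradient vb x := by
  have hc : ∀ e, ContinuousOn (fun y => fderiv ℝ vb y e) Ω := fun e =>
    (contDiffOn_fderiv_app (n := 0) hΩ (by simpa using hvb) e).continuousOn
  have h1 : ∀ e : EE N, ∀ᵐ x, x ∈ Ω → inner ℝ (sndL N v x) e - fderiv ℝ vb x e = 0 := by
    intro e
    have hm : MemLp (fun y => inner ℝ (sndL N v y) e) 2 volume := (Lp.memLp (sndL N v)).inner_const e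
    refine IsOpen.ae_eq_zero_of_integral_contDiff_smul_eq_zero hΩ ?_ ?_
    · exact ((hm.locallyIntegrable (by norm_num)).locallyIntegrableOn _).sub
        ((hc e).locallyIntegrableOn hΩ.measurableSet)
    · intro g hg hgc hgt
      have hg1 : ContDiff ℝ 1 g := hg.of_le (by exact_mod_cast le_top)
      have ht : IsTst Ω g := ⟨hg1, hgc, hgt⟩
      have a1 := weak_ibp hg1 hgc e v hv
      have a2 := ibp_one hΩ hvb ht e
      have a3 : ∫ y, fstL N v y * fderiv ℝ g y e = ∫ y, fderiv ℝ g y e * vb y := by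
        refine integral_congr_ae ?_
        filter_upwards [hae] with y hy
        by_cases hyΩ : y ∈ Ω
        · rw [hy hyΩ, mul_comm]
        · have : fderiv ℝ g y e = 0 := by
            have := image_eq_zero_of_notMem_tsupport (f := fun x => fderiv ℝ g x e)
              (fun hh => hyΩ (hgt (tst_fderiv_ts ht e hh)))
            exact this
          rw [this, mul_zero, zero_mul]
      have a4 : ∫ x, g x • (inner ℝ (sndL N v x) e - fderiv ℝ vb x e) =
          (∫ y, inner ℝ (sndL N v y) e * g y) - ∫ y, g y * fderiv ℝ vb y e := by
        rw [← integral_sub]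
        · refine integral_congr_ae (Eventually.of_forall fun y => ?_)
          simp only [smul_eq_mul]
          ring
        · exact MemLp.integrable_mul hm (hg1.continuous.memLp_of_hasCompactSupport (p := 2) hgc)
        · exact integrable_cs_mul hΩ hg1.continuous hgc hgt (hc e)
      rw [a4, a1, a3, a2]
      ring
  have h2 : ∀ᵐ x, ∀ i : Fin N, x ∈ Ω → inner ℝ (sndL N v x) (EuclideanSpace.single i (1:ℝ)) -
      fderiv ℝ vb x (EuclideanSpace.single i 1) = 0 := ae_all_iff.mpr fun i => h1 _
  filter_upwards [h2] with x hx hxΩ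
  have h3 : ∀ a : EE N, inner ℝ a (sndL N v x) = inner ℝ a (gradient vb x) := by
    intro a
    rw [inner_grad_sum, real_inner_comm]
    have := clm_sum (innerSL ℝ (sndL N v x)) a
    rw [innerSL_apply_apply] at this
    rw [← this]
    refine Finset.sum_congr rfl fun i _ => ?_
    rw [innerSL_apply_apply, ← sub_eq_zero.mp (hx i hxΩ)]
  exact ext_inner_left ℝ h3

theorem lapl_contOn {Ω : Set (EE N)} (hΩ : IsOpen Ω) {w : EE N → ℝ} (hw : ContDiffOn ℝ 2 w Ω) :
    ContinuousOn (lapl w) Ω := by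
  have hw1 : ∀ v, ContDiffOn ℝ 1 (fun y => fderiv ℝ w y v) Ω := fun v =>
    contDiffOn_fderiv_app (n := 1) hΩ (by simpa [one_add_one_eq_two] using hw) v
  have hw2 : ∀ v u, ContinuousOn (fun x => fderiv ℝ (fun y => fderiv ℝ w y v) x u) Ω := fun v u =>
    (contDiffOn_fderiv_app (n := 0) hΩ (by simpa using hw1 v) u).continuousOn
  exact continuousOn_finsetSum _ fun i _ => hw2 _ _

theorem ident_lapl {Ω : Set (EE N)} (hΩ : IsOpen Ω) {v : XX N} (hv : v ∈ VV Ω)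
    {H : L2R N} (heq : ∀ w ∈ VV Ω, inner ℝ (sndL N v) (sndL N w) = inner ℝ H (fstL N w))
    {vb hb : EE N → ℝ} (hvb : ContDiffOn ℝ 2 vb Ω) (hae : ∀ᵐ x, x ∈ Ω → fstL N v x = vb x)
    (hbc : ContinuousOn hb Ω) (hHb : ∀ᵐ x, x ∈ Ω → H x = hb x) :
    ∀ x ∈ Ω, -lapl vb x = hb x := by
  have hg := ident_grad hΩ hv (hvb.of_le (by norm_num)) hae
  have hl := lapl_contOn hΩ hvb
  have h1 : ∀ᵐ x, x ∈ Ω → -lapl vb x - hb x = 0 := by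
    refine IsOpen.ae_eq_zero_of_integral_contDiff_smul_eq_zero hΩ ?_ ?_
    · exact (hl.neg.sub hbc).locallyIntegrableOn hΩ.measurableSet
    · intro g hgs hgc hgt
      have hg1 : ContDiff ℝ 1 g := hgs.of_le (by exact_mod_cast le_top)
      have ht : IsTst Ω g := ⟨hg1, hgc, hgt⟩
      have a1 := heq _ (tstEl_mem ht)
      have a2 := ibp_tst hΩ hvb ht
      have g0 : ∀ y, y ∉ Ω → g y = 0 := fun y hy =>
        image_eq_zero_of_notMem_tsupport fun hh => hy (hgt hh)
      have a3 : inner ℝ (sndL N v) (sndL N (tstEl ht)) = ∫ x, inner ℝ (gradient vb x) (gradient g x) := by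
        rw [sndL_tstEl, L2.inner_def]
        refine integral_congr_ae ?_
        filter_upwards [ht.memLp_grad.coeFn_toLp, hg] with y hy hy2
        rw [hy]
        by_cases hyΩ : y ∈ Ω
        · rw [hy2 hyΩ]
        · have : gradient g y = 0 := by
            rw [← norm_eq_zero, norm_gradient_eq, norm_eq_zero]
            have h0 : g =ᶠ[𝓝 y] 0 := notMem_tsupport_iff_eventuallyEq.mp fun hh => hyΩ (hgt hh)
            rw [h0.fderiv_eq]
            simp
          rw [this, inner_zero_right, inner_zero_right]
      have a4 : inner ℝ H (fstL N (tstEl ht)) = ∫ x, g x * hb x := by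
        rw [fstL_tstEl, L2_inner]
        refine integral_congr_ae ?_
        filter_upwards [ht.memLp.coeFn_toLp, hHb] with y hy hy2
        rw [hy]
        by_cases hyΩ : y ∈ Ω
        · rw [hy2 hyΩ, mul_comm]
        · rw [g0 y hyΩ, mul_zero, zero_mul]
      have a5 : ∫ x, g x • (-lapl vb x - hb x) = (∫ x, (-lapl vb x) * g x) - ∫ x, g x * hb x := by
        rw [← integral_sub]
        · refine integral_congr_ae (Eventually.of_forall fun y => ?_)
          simp only [smul_eq_mul]
          ring
        · have := integrable_cs_mul hΩ hg1.continuous hgc hgt hl.neg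
          refine this.congr (Eventually.of_forall fun y => mul_comm _ _)
        · exact integrable_cs_mul hΩ hg1.continuous hgc hgt hbc
      rw [a5, ← a2, ← a3, a1, a4, sub_self]
  refine Measure.eqOn_open_of_ae_eq (μ := volume) ?_ hΩ hl.neg hbc
  rw [EventuallyEq, ae_restrict_iff' hΩ.measurableSet]
  filter_upwards [h1] with x hx hxΩ
  exact sub_eq_zero.mp (hx hxΩ)

theorem strong_max {Ω : Set (EE N)} (hΩ : IsOpen Ω) (hconn : IsConnected Ω) {V vb h : EE N → ℝ}
    (hVi : Integrable V) (hvbc : ContinuousOn vb Ω) (hae : ∀ᵐ x, x ∈ Ω → V x = vb x)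
    (hV0 : ∀ᵐ x, 0 ≤ V x) (hvb0 : ∀ x ∈ Ω, 0 ≤ vb x) (hh0 : ∀ x, 0 ≤ h x)
    (hrep : ∀ x r, 0 < r → Metric.closedBall x r ⊆ Ω → c0 N * vb x = AA rk V r x + WW h r x) :
    (∀ x ∈ Ω, 0 < vb x) ∨ ∀ x ∈ Ω, vb x = 0 := by
  have key : ∀ x ∈ Ω, vb x = 0 → ∃ r, 0 < r ∧ Metric.ball x r ⊆ Ω ∧ ∀ y ∈ Metric.ball x r, vb y = 0 := by
    intro x hx h0
    obtain ⟨r, hr, hr2⟩ := Metric.nhds_basis_closedBall.mem_iff.mp (hΩ.mem_nhds hx)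
    have hsub := Metric.ball_subset_closedBall.trans hr2
    refine ⟨r, hr, hsub, ?_⟩
    have e := hrep x r hr hr2
    rw [h0, mul_zero] at e
    have hW : 0 ≤ WW h r x := by
      refine setIntegral_nonneg measurableSet_Ioc fun s hs => ?_
      have hs0 : 0 < s := hs.1
      refine mul_nonneg hs0.le (mul_nonneg (by positivity) ?_)
      exact integral_nonneg fun z => mul_nonneg (hh0 z) (sk_nonneg _)
    have hnn : 0 ≤ᵐ[volume] fun z => V z * rk (r⁻¹ • (x - z)) := by
      filter_upwards [hV0] with z hz
      exact mul_nonneg hz (rk_nonneg _)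
    have hI : 0 ≤ ∫ z, V z * rk (r⁻¹ • (x - z)) := integral_nonneg_of_ae hnn
    have hA : AA rk V r x = (r⁻¹) ^ N * ∫ z, V z * rk (r⁻¹ • (x - z)) := rfl
    have hrN : 0 < (r⁻¹) ^ N := by positivity
    have hI0 : ∫ z, V z * rk (r⁻¹ • (x - z)) = 0 := by
      have : (r⁻¹) ^ N * ∫ z, V z * rk (r⁻¹ • (x - z)) = 0 := by
        have := mul_nonneg hrN.le hI
        linarith
      exact (mul_eq_zero.mp this).resolve_left hrN.ne'
    have h2 := (integral_eq_zero_iff_of_nonneg_ae hnn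
      (AA_integrable rk_one.continuous rk_cs hVi r x)).mp hI0
    refine Measure.eqOn_open_of_ae_eq (μ := volume) (g := fun _ => (0:ℝ)) ?_ Metric.isOpen_ball
      (hvbc.mono hsub) continuousOn_const
    rw [EventuallyEq, ae_restrict_iff' Metric.isOpen_ball.measurableSet]
    filter_upwards [h2, hae] with z hz hz2 hzb
    rw [← hz2 (hsub hzb)]
    refine (mul_eq_zero.mp hz).resolve_right (rk_pos ?_).ne'
    rw [norm_smul, norm_inv, Real.norm_of_nonneg hr.le, inv_mul_eq_div, div_lt_one hr,
      ← dist_eq_norm, dist_comm]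
    exact hzb
  by_contra hcon
  rw [not_or] at hcon
  obtain ⟨hc1, hc2⟩ := hcon
  push Not at hc1 hc2
  obtain ⟨a, ha, ha2⟩ := hc1
  obtain ⟨b, hb, hb2⟩ := hc2
  have ha0 : vb a = 0 := le_antisymm ha2 (hvb0 a ha)
  have hb0 : 0 < vb b := lt_of_le_of_ne (hvb0 b hb) (Ne.symm hb2)
  have o1 : IsOpen {x | x ∈ Ω ∧ vb x = 0} := by
    rw [Metric.isOpen_iff]
    rintro x ⟨hx, hx0⟩
    obtain ⟨r, hr, h1, h2⟩ := key x hx hx0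
    exact ⟨r, hr, fun y hy => ⟨h1 hy, h2 y hy⟩⟩
  have o2 : IsOpen (Ω ∩ vb ⁻¹' Ioi 0) := hvbc.isOpen_inter_preimage hΩ isOpen_Ioi
  obtain ⟨x, -, hx1, hx2⟩ := hconn.isPreconnected _ _ o1 o2 (by
    intro x hx
    rcases (hvb0 x hx).eq_or_lt with h | h
    · exact Or.inl ⟨hx, h.symm⟩
    · exact Or.inr ⟨hx, h⟩) ⟨a, ha, ha, ha0⟩ ⟨b, hb, hb, hb0⟩
  have : 0 < vb x := hx2.2
  rw [hx1.2] at this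
  exact lt_irrefl _ this

end Regularity

section Final
open Filter Topology
open scoped ContDiff
variable {N : ℕ}

theorem int_of_supp {Ω : Set (EE N)} (hΩ : IsOpen Ω) (hb : Bornology.IsBounded Ω) (g : L2R N)
    (hg : ∀ᵐ y, y ∉ Ω → g y = 0) : Integrable g := by
  have : IsFiniteMeasure (volume.restrict Ω) :=
    ⟨by rw [Measure.restrict_apply_univ]; exact hb.measure_lt_top⟩
  have h1 : IntegrableOn g Ω := ((Lp.memLp g).restrict Ω).integrable (by norm_num)
  have h2 := h1.integrable_indicator hΩ.measurableSet
  refine h2.congr ?_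
  filter_upwards [hg] with y hy
  by_cases hyΩ : y ∈ Ω
  · rw [indicator_of_mem hyΩ]
  · rw [indicator_of_notMem hyΩ, hy hyΩ]

theorem ae_nonneg_pt {Ω : Set (EE N)} (hΩ : IsOpen Ω) {g : EE N → ℝ} (hg : ContinuousOn g Ω)
    (h : ∀ᵐ x, x ∈ Ω → 0 ≤ g x) : ∀ x ∈ Ω, 0 ≤ g x := by
  have h1 : EqOn g (fun x => max (g x) 0) Ω := by
    refine Measure.eqOn_open_of_ae_eq (μ := volume) ?_ hΩ hg (hg.sup continuousOn_const)
    rw [EventuallyEq, ae_restrict_iff' hΩ.measurableSet]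
    filter_upwards [h] with x hx hxΩ
    exact (max_eq_left (hx hxΩ)).symm
  intro x hx
  rw [h1 hx]
  exact le_max_right _ _

theorem frontier_nonempty (hN : 1 ≤ N) {Ω : Set (EE N)} (hne : Ω.Nonempty)
    (hb : Bornology.IsBounded Ω) : (frontier Ω).Nonempty := by
  rw [nonempty_iff_ne_empty]
  intro he
  have : Nonempty (Fin N) := ⟨⟨0, hN⟩⟩
  have hcl := isClopen_iff_frontier_eq_empty.mpr he
  rcases isClopen_iff.mp hcl with h | h
  · exact hne.ne_empty h
  · rw [h] at hb
    exact NormedSpace.unbounded_univ ℝ (EE N) hb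

theorem sin_zero_const {Ω : Set (EE N)} (hconn : IsConnected Ω) {u : EE N → ℝ}
    (hu : ContinuousOn u (closure Ω)) (hs : ∀ x ∈ Ω, Real.sin (u x) = 0) (hu0 : ∀ x ∈ Ω, 0 ≤ u x)
    (hfr : (frontier Ω).Nonempty) (hf0 : ∀ x ∈ frontier Ω, u x = 0) : ∀ x ∈ Ω, u x = 0 := by
  intro x hx
  by_contra hne
  have hpos : 0 < u x := lt_of_le_of_ne (hu0 x hx) (Ne.symm hne)
  have hpc : IsPreconnected (u '' closure Ω) := hconn.isPreconnected.closure.image u hu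
  obtain ⟨y, hy⟩ := hfr
  have h1 : (0:ℝ) ∈ u '' closure Ω := ⟨y, frontier_subset_closure hy, hf0 y hy⟩
  have h2 : u x ∈ u '' closure Ω := ⟨x, subset_closure hx, rfl⟩
  obtain ⟨z, hz, hz2⟩ := hpc.Icc_subset h1 h2 (show min (u x) 1 ∈ Icc 0 (u x) from
    ⟨le_min hpos.le zero_le_one, min_le_left _ _⟩)
  have h3 : 0 < min (u x) 1 := lt_min hpos one_pos
  have h4 : 0 < Real.sin (min (u x) 1) :=
    Real.sin_pos_of_pos_of_lt_pi h3 ((min_le_right _ _).trans_lt (by linarith [Real.pi_gt_three]))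
  rw [← hz2] at h4 h3
  by_cases hzΩ : z ∈ Ω
  · rw [hs z hzΩ] at h4
    exact lt_irrefl _ h4
  · have : z ∈ frontier Ω := ⟨hz, fun hi => hzΩ (interior_subset hi)⟩
    rw [hf0 z this] at h3
    exact lt_irrefl _ h3

theorem gradNorm_eq {Ω : Set (EE N)} (hΩ : IsOpen Ω) {u0 : XX N} (hu0 : u0 ∈ VV Ω) {u : EE N → ℝ}
    (hg : ∀ᵐ x, x ∈ Ω → sndL N u0 x = gradient u x) : gradNorm2 Ω u = ‖sndL N u0‖ := by
  rw [gradNorm2, Lp.norm_def]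
  congr 1
  have h1 : eLpNorm (fun x => gradient u x) 2 (volume.restrict Ω) =
      eLpNorm (sndL N u0) 2 (volume.restrict Ω) := by
    refine eLpNorm_congr_ae ?_
    rw [EventuallyEq, ae_restrict_iff' hΩ.measurableSet]
    filter_upwards [hg] with x hx hxΩ
    exact (hx hxΩ).symm
  rw [h1, ← eLpNorm_indicator_eq_eLpNorm_restrict hΩ.measurableSet]
  refine eLpNorm_congr_ae ?_
  filter_upwards [supp_snd hΩ u0 hu0] with x hx
  by_cases hxΩ : x ∈ Ω
  · rw [indicator_of_mem hxΩ]
  · rw [indicator_of_notMem hxΩ, hx hxΩ]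

theorem cont_closure {Ω : Set (EE N)} (hΩ : IsOpen Ω) {u b : EE N → ℝ} (hu : ContinuousOn u Ω)
    (hb : ContinuousOn b (closure Ω)) (hb0 : ∀ x ∈ frontier Ω, b x = 0)
    (hu0 : ∀ x, x ∉ Ω → u x = 0) (hnn : ∀ x ∈ Ω, 0 ≤ u x) (hle : ∀ x ∈ Ω, u x ≤ b x) :
    ContinuousOn u (closure Ω) := by
  intro x hx
  by_cases hxΩ : x ∈ Ω
  · exact (hu.continuousAt (hΩ.mem_nhds hxΩ)).continuousWithinAt
  · have hfr : ∀ z ∈ closure Ω, z ∉ Ω → z ∈ frontier Ω := fun z hz hz2 =>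
      ⟨hz, fun hi => hz2 (interior_subset hi)⟩
    have h1 := hb x hx
    rw [ContinuousWithinAt, hb0 x (hfr x hx hxΩ)] at h1
    rw [ContinuousWithinAt, hu0 x hxΩ]
    refine squeeze_zero' ?_ ?_ h1
    · refine Eventually.of_forall fun z => ?_
      by_cases hz : z ∈ Ω
      · exact hnn z hz
      · rw [hu0 z hz]
    · filter_upwards [self_mem_nhdsWithin] with z hz
      by_cases hzΩ : z ∈ Ω
      · exact hle z hzΩ
      · rw [hu0 z hzΩ, hb0 z (hfr z hz hzΩ)]

theorem lapl_zero (x : EE N) : lapl (fun _ : EE N => (0:ℝ)) x = 0 := by simp [lapl]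

end Final

set_option maxHeartbeats 2000000 in
theorem stmt_aux {N : ℕ} (hN : 1 ≤ N) (Ω : Set (EE N)) (hΩo : IsOpen Ω) (hΩconn : IsConnected Ω)
    (hΩbd : Bornology.IsBounded Ω) (d : ℝ) (hd : 0 < d) (f : EE N → ℝ) (hf1 : ContDiffOn ℝ 1 f Ω)
    (hfc : ContinuousOn f (closure Ω)) (hfne : ¬ ∀ x ∈ Ω, f x = 0) (φ : EE N → ℝ)
    (hφc : ContinuousOn φ (closure Ω)) (hφ2 : ContDiffOn ℝ 2 φ Ω) (hφeq : ∀ x ∈ Ω, -lapl φ x = f x)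
    (hφnn : ∀ x ∈ Ω, 0 ≤ φ x) (hφbd : ∀ x ∈ frontier Ω, φ x = 0) (ξ : EE N → ℝ)
    (hξ : IsTorsionFn Ω ξ) :
    ∃ u : EE N → ℝ, ContinuousOn u (closure Ω) ∧ ContDiffOn ℝ 2 u Ω ∧
      (∀ x ∈ Ω, (-(1 + d * Real.sin (gradNorm2 Ω u) ^ 2)) * lapl u x = Real.sin (u x) ^ 2 + f x) ∧
      (∀ x ∈ Ω, 0 < u x) ∧ (∀ x ∈ frontier Ω, u x = 0) := by
  obtain ⟨hξc, hξ2, hξnn, hξeq, hξbd⟩ := hξ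
  obtain ⟨Φ, hΦ, Hf, hΦf, -, hHf, hΦeq⟩ := classical_mem hΩo hΩbd hφc hφ2 hφnn hφbd hfc hφeq
  obtain ⟨Ξ, hΞ, H1, hΞf, -, hH1, hΞeq⟩ := classical_mem (h := fun _ => (1:ℝ)) hΩo hΩbd hξc hξ2 hξnn hξbd
    continuousOn_const hξeq
  obtain ⟨u0, hu0, hu0eq⟩ := exists_weak hN hΩo hΩbd hd Hf
  set m : ℝ := 1 + d * Real.sin ‖sndL N u0‖ ^ 2 with hm
  have hm1 : 1 ≤ m := by
    have : 0 ≤ d * Real.sin ‖sndL N u0‖ ^ 2 := by positivity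
    linarith
  have hm0 : 0 < m := by linarith
  set S : L2R N := sinSq (fstL N u0) with hS
  set v : XX N := m • u0 - Φ with hvdef
  have hv : v ∈ VV Ω := Submodule.sub_mem _ (Submodule.smul_mem _ _ hu0) hΦ
  have hveq : ∀ w ∈ VV Ω, inner ℝ (sndL N v) (sndL N w) = inner ℝ S (fstL N w) := by
    intro w hw
    rw [hvdef, map_sub, map_smul, inner_sub_left, real_inner_smul_left, hu0eq w hw, hΦeq w hw,
      inner_add_left]
    ring
  have hSae : ∀ᵐ x, S x = Real.sin (fstL N u0 x) ^ 2 := coe_sinSq _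
  have hVnn : ∀ᵐ x, 0 ≤ fstL N v x := by
    refine weak_pos hN hΩo hΩbd v hv S ?_ hveq
    filter_upwards [hSae] with x hx _
    rw [hx]
    positivity
  have hVle : ∀ᵐ x, 0 ≤ fstL N (Ξ - v) x := by
    refine weak_pos hN hΩo hΩbd (Ξ - v) (Submodule.sub_mem _ hΞ hv) (H1 - S) ?_ ?_
    · filter_upwards [hSae, hH1, Lp.coeFn_sub H1 S] with x h1 h2 h3 hxΩ
      rw [h3, Pi.sub_apply, h2, h1, indicator_of_mem hxΩ, sub_nonneg]
      exact Real.sin_sq_le_one _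
    · intro z hz
      rw [map_sub, inner_sub_left, inner_sub_left, hΞeq z hz, hveq z hz]
  have hvae : ∀ᵐ x, fstL N v x = m * fstL N u0 x - fstL N Φ x := by
    have e : fstL N v = m • fstL N u0 - fstL N Φ := by rw [hvdef, map_sub, map_smul]
    rw [e]
    filter_upwards [Lp.coeFn_sub (m • fstL N u0) (fstL N Φ), Lp.coeFn_smul m (fstL N u0)] with x h1 h2
    rw [h1, Pi.sub_apply, h2]
    rfl
  have hΞv : ∀ᵐ x, fstL N (Ξ - v) x = fstL N Ξ x - fstL N v x := by
    rw [map_sub]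
    exact Lp.coeFn_sub _ _
  have hVi : Integrable (fstL N v) := int_of_supp hΩo hΩbd _ (supp_fst hΩo v hv)
  have hSi : Integrable S := by
    refine int_of_supp hΩo hΩbd _ ?_
    filter_upwards [hSae, supp_fst hΩo u0 hu0] with x h1 h2 hx
    rw [h1, h2 hx, Real.sin_zero]
    norm_num
  set h : EE N → ℝ := fun x => Real.sin (fstL N u0 x) ^ 2 with hh
  have hhi : Integrable h := hSi.congr hSae
  have hB : ∀ z, |h z| ≤ 1 := fun z => by
    rw [abs_of_nonneg (sq_nonneg _)]
    exact Real.sin_sq_le_one _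
  obtain ⟨vb, hvb1, hvbae, hrep, hvbC2⟩ := regularity hΩo hv hVi hveq (H := S) hSae hhi hB
  set u1 : EE N → ℝ := fun x => (φ x + vb x) / m with hu1
  have hu1ae : ∀ᵐ x, x ∈ Ω → fstL N u0 x = u1 x := by
    filter_upwards [hvae, hvbae, hΦf] with x h1 h2 h3 hxΩ
    rw [h2 hxΩ, h3, indicator_of_mem hxΩ] at h1
    rw [hu1, eq_div_iff hm0.ne', h1]
    ring
  have hφ1 : ContDiffOn ℝ 1 φ Ω := hφ2.of_le (by norm_num)
  have hhb1 : ContDiffOn ℝ 1 (fun x => Real.sin (u1 x) ^ 2) Ω :=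
    ((Real.contDiff_sin.comp_contDiffOn ((hφ1.add hvb1).div_const m))).pow 2
  have hhbae : ∀ᵐ x, x ∈ Ω → h x = Real.sin (u1 x) ^ 2 := by
    filter_upwards [hu1ae] with x hx hxΩ
    rw [hh, ← hx hxΩ]
  have hvb2 : ContDiffOn ℝ 2 vb Ω := hvbC2 _ hhb1 hhbae
  have hu12 : ContDiffOn ℝ 2 u1 Ω := (hφ2.add hvb2).div_const m
  have hvb0 : ∀ x ∈ Ω, 0 ≤ vb x := by
    refine ae_nonneg_pt hΩo hvb1.continuousOn ?_
    filter_upwards [hVnn, hvbae] with x h1 h2 hx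
    rwa [← h2 hx]
  have hvbξ : ∀ x ∈ Ω, 0 ≤ ξ x - vb x := by
    refine ae_nonneg_pt hΩo ((hξc.mono subset_closure).sub hvb1.continuousOn) ?_
    filter_upwards [hVle, hvbae, hΞv, hΞf] with x h1 h2 h3 h4 hx
    rwa [h3, h4, indicator_of_mem hx, h2 hx] at h1
  set u : EE N → ℝ := Ω.indicator u1 with hu
  have huΩ : ∀ x ∈ Ω, u x = u1 x := fun x hx => indicator_of_mem hx _
  have huo : ∀ x, x ∉ Ω → u x = 0 := fun x hx => indicator_of_notMem hx _
  have hu2 : ContDiffOn ℝ 2 u Ω := hu12.congr huΩ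
  have hunn : ∀ x ∈ Ω, 0 ≤ u x := fun x hx => by
    rw [huΩ x hx]
    exact div_nonneg (add_nonneg (hφnn x hx) (hvb0 x hx)) hm0.le
  have hfro : ∀ x ∈ frontier Ω, x ∉ Ω := fun x hx hxΩ => by
    rw [hΩo.frontier_eq] at hx
    exact hx.2 hxΩ
  have hufr : ∀ x ∈ frontier Ω, u x = 0 := fun x hx => huo x (hfro x hx)
  have huc : ContinuousOn u (closure Ω) := by
    refine cont_closure hΩo hu2.continuousOn (b := fun x => (φ x + ξ x) / m)
      ((hφc.add hξc).div_const m) (fun x hx => ?_) huo hunn (fun x hx => ?_)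
    · rw [hφbd x hx, hξbd x hx]
      simp
    · rw [huΩ x hx, hu1]
      have := hvbξ x hx
      beta_reduce
      gcongr
      linarith
  have huae : ∀ᵐ x, x ∈ Ω → fstL N u0 x = u x := by
    filter_upwards [hu1ae] with x h1 hx
    rw [h1 hx, huΩ x hx]
  have hgn : gradNorm2 Ω u = ‖sndL N u0‖ :=
    gradNorm_eq hΩo hu0 (ident_grad hΩo hu0 (hu2.of_le (by norm_num)) huae)
  have hfcΩ : ContinuousOn f Ω := hfc.mono subset_closure
  have hsc : ContinuousOn (fun x => Real.sin (u x) ^ 2) Ω :=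
    (Real.continuous_sin.comp_continuousOn hu2.continuousOn).pow 2
  have hHfΩ : ∀ᵐ x, x ∈ Ω → Hf x = f x := by
    filter_upwards [hHf] with x h1 hx
    rw [h1, indicator_of_mem hx]
  refine ⟨u, huc, hu2, ?_, ?_, hufr⟩
  · have key := ident_lapl hΩo hu0 (H := m⁻¹ • (S + Hf)) (vb := u)
      (hb := fun x => m⁻¹ * (Real.sin (u x) ^ 2 + f x)) (by
        intro w hw
        rw [real_inner_smul_left, ← hu0eq w hw, ← mul_assoc, inv_mul_cancel₀ hm0.ne', one_mul]) hu2 huae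
      (continuousOn_const.mul (hsc.add hfcΩ)) (by
        filter_upwards [Lp.coeFn_smul m⁻¹ (S + Hf), Lp.coeFn_add S Hf, hSae, hHfΩ, huae] with x h1 h2 h3 h4 h5 hx
        rw [h1, Pi.smul_apply, h2, Pi.add_apply, h3, h4 hx, h5 hx, smul_eq_mul])
    intro x hx
    have := key x hx
    rw [hgn, ← hm, neg_mul, ← mul_neg, this, ← mul_assoc, mul_inv_cancel₀ hm0.ne', one_mul]
  · rcases strong_max hΩo hΩconn hVi hvb1.continuousOn hvbae hVnn hvb0 (fun x => sq_nonneg _) hrep with hp | hz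
    · intro x hx
      rw [huΩ x hx]
      exact div_pos (add_pos_of_nonneg_of_pos (hφnn x hx) (hp x hx)) hm0
    · exfalso
      have k1 := ident_lapl hΩo hv hveq (vb := fun _ => (0:ℝ)) (hb := fun x => Real.sin (u x) ^ 2)
        contDiffOn_const (by
          filter_upwards [hvbae] with x h1 hx
          rw [h1 hx, hz x hx]) hsc (by
          filter_upwards [hSae, huae] with x h1 h2 hx
          rw [h1, h2 hx])
      have k2 : ∀ x ∈ Ω, Real.sin (u x) = 0 := by
        intro x hx
        have := k1 x hx
        rw [lapl_zero, neg_zero] at this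
        exact pow_eq_zero_iff two_ne_zero |>.mp this.symm
      have k3 := sin_zero_const hΩconn huc k2 hunn (frontier_nonempty hN hΩconn.nonempty hΩbd) hufr
      have k4 : ∀ x ∈ Ω, φ x = 0 := by
        intro x hx
        have := k3 x hx
        rw [huΩ x hx, hu1, div_eq_zero_iff, hz x hx, add_zero] at this
        exact this.resolve_right hm0.ne'
      have k5 := ident_lapl hΩo hΦ hΦeq (vb := fun _ => (0:ℝ)) (hb := f) contDiffOn_const (by
          filter_upwards [hΦf] with x h1 hx
          rw [h1, indicator_of_mem hx, k4 x hx]) hfcΩ hHfΩ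
      refine hfne fun x hx => ?_
      rw [← k5 x hx, lapl_zero, neg_zero]

/-- Theorem 2.3: the non-monotone problem
`-(1 + d sin²(‖∇u‖₂)) Δu = sin²(u) + f`, `u > 0` in `Ω`, `u = 0` on `∂Ω`,
has a classical solution. -/
theorem stmt_9 {N : ℕ} (hN : 1 ≤ N) (Ω : Set (EuclideanSpace ℝ (Fin N)))
    (hΩo : IsOpen Ω) (hΩconn : IsConnected Ω) (hΩbd : Bornology.IsBounded Ω)
    (d : ℝ) (hd : 0 < d)
    (f : EuclideanSpace ℝ (Fin N) → ℝ)
    (hf1 : ContDiffOn ℝ 1 f Ω) (hfc : ContinuousOn f (closure Ω))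
    (hfne : ¬ (∀ x ∈ Ω, f x = 0))
    -- the problem -Δφ = f, φ ≥ 0 in Ω, φ = 0 on ∂Ω has a classical solution
    (φ : EuclideanSpace ℝ (Fin N) → ℝ)
    (hφc : ContinuousOn φ (closure Ω)) (hφ2 : ContDiffOn ℝ 2 φ Ω)
    (hφeq : ∀ x ∈ Ω, -lapl φ x = f x) (hφnn : ∀ x ∈ Ω, 0 ≤ φ x)
    (hφbd : ∀ x ∈ frontier Ω, φ x = 0)
    -- Ω admits a torsion function
    (ξ : EuclideanSpace ℝ (Fin N) → ℝ) (hξ : IsTorsionFn Ω ξ) :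
    ∃ u : EuclideanSpace ℝ (Fin N) → ℝ,
      ContinuousOn u (closure Ω) ∧ ContDiffOn ℝ 2 u Ω ∧
      (∀ x ∈ Ω, (-(1 + d * Real.sin (gradNorm2 Ω u) ^ 2)) * lapl u x
        = Real.sin (u x) ^ 2 + f x) ∧
      (∀ x ∈ Ω, 0 < u x) ∧
      (∀ x ∈ frontier Ω, u x = 0) := by
  exact stmt_aux hN Ω hΩo hΩconn hΩbd d hd f hf1 hfc hfne φ hφc hφ2 hφeq hφnn hφbd ξ hξ
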